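/- Let d ≥ 2, let Ω ⊂ ℝ^d be a bounded Lipschitz domain, let 1 < p < ∞ and 1/p + 1/q = 1. Suppose that for each x ∈ Ω there exists a function W^x, biharmonic in Ω, with (∇²W^x)* ∈ L^p(∂Ω, σ) and with D^α W^x = D^α Γ^x nontangentially σ-a.e. on ∂Ω for every |α| ≤ 1 (i.e., a solution of the L^p regularity problem with boundary data D^α Γ^x). Then any solution of the L^q Dirichlet problem is unique: if u is biharmonic in Ω, (∇u)* ∈ L^q(∂Ω, σ), and u and ∇u have nontangential limit 0 σ-a.e. on ∂Ω, then u ≡ 0 in Ω. -/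

import Mathlib

open MeasureTheory Metric Filter Set
open scoped ENNReal NNReal Topology RealInnerProductSpace

noncomputable section

/-- Euclidean space `ℝ^d`. -/
abbrev Euc (d : ℕ) := EuclideanSpace ℝ (Fin d)

variable {d : ℕ}

/-- The partial derivative `D_i u` in the `i`-th coordinate direction. -/
def pder (i : Fin d) (u : Euc d → ℝ) : Euc d → ℝ :=
  fun x => fderiv ℝ u x (EuclideanSpace.single i 1)

/-- The Laplacian `Δu = ∑ i, D_i D_i u`. -/
def lap (u : Euc d → ℝ) : Euc d → ℝ := fun x => ∑ i, pder i (pder i u) x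

/-- The bilaplacian `Δ²u`. -/
def bilap (u : Euc d → ℝ) : Euc d → ℝ := lap (lap u)

/-- `u` is biharmonic in the open set `Ω` : it is smooth there and `Δ²u = 0`. -/
def Biharmonic (Ω : Set (Euc d)) (u : Euc d → ℝ) : Prop :=
  ContDiffOn ℝ (⊤ : ℕ∞) u Ω ∧ ∀ x ∈ Ω, bilap u x = 0

/-- `|∇u|`. -/
def gnorm1 (u : Euc d → ℝ) : Euc d → ℝ :=
  fun x => Real.sqrt (∑ i, (pder i u x) ^ 2)

/-- `|∇²u|`. -/
def gnorm2 (u : Euc d → ℝ) : Euc d → ℝ :=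
  fun x => Real.sqrt (∑ i, ∑ j, (pder i (pder j u) x) ^ 2)

/-- `|∇³u|`. -/
def gnorm3 (u : Euc d → ℝ) : Euc d → ℝ :=
  fun x => Real.sqrt (∑ i, ∑ j, ∑ k, (pder i (pder j (pder k u)) x) ^ 2)

/-- The last ("vertical") coordinate `x_d` of a point of `ℝ^d`. -/
def vertCoord (d : ℕ) (x : Euc d) : ℝ :=
  if h : 0 < d then x ⟨d - 1, Nat.sub_lt h one_pos⟩ else 0

/-- The vertical unit vector `e_d`. -/
def vertDir (d : ℕ) : Euc d :=
  if h : 0 < d then EuclideanSpace.single ⟨d - 1, Nat.sub_lt h one_pos⟩ 1 else 0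

/-- The horizontal coordinates `x′` of a point of `ℝ^d`. -/
def graphCoord (d : ℕ) (x : Euc d) : Euc (d - 1) :=
  WithLp.toLp 2 fun i => x (Fin.castLE (Nat.sub_le d 1) i)

/-- The partial derivative `D_d u` in the vertical direction. -/
def pdLast (u : Euc d → ℝ) : Euc d → ℝ := fun x => fderiv ℝ u x (vertDir d)

/-- A bounded Lipschitz domain: a bounded connected open set whose boundary is covered by
finitely many open sets, in each of which, after a rigid motion, the boundary is the graph of
a Lipschitz function and the domain lies above the graph. -/
def IsLipschitzDomain (Ω : Set (Euc d)) : Prop :=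
  IsOpen Ω ∧ Bornology.IsBounded Ω ∧ IsConnected Ω ∧
  ∃ (N : ℕ) (U : Fin N → Set (Euc d)),
    (∀ i, IsOpen (U i)) ∧ (frontier Ω ⊆ ⋃ i, U i) ∧
    ∀ i, ∃ (R : Euc d ≃ᵢ Euc d) (M : ℝ≥0) (η : Euc (d - 1) → ℝ),
      LipschitzWith M η ∧
      U i ∩ Ω = U i ∩ (R ⁻¹' {x | η (graphCoord d x) < vertCoord d x}) ∧
      U i ∩ frontier Ω = U i ∩ (R ⁻¹' {x | vertCoord d x = η (graphCoord d x)})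

/-- The nontangential approach cone (aperture 1) with vertex `Q ∈ ∂Ω`. -/
def ntCone (Ω : Set (Euc d)) (Q : Euc d) : Set (Euc d) :=
  {x | x ∈ Ω ∧ dist x Q < 2 * Metric.infDist x (frontier Ω)}

/-- The nontangential maximal function `(w)*`. -/
def ntMax (Ω : Set (Euc d)) (w : Euc d → ℝ) (Q : Euc d) : ℝ≥0∞ :=
  ⨆ x ∈ ntCone Ω Q, (‖w x‖₊ : ℝ≥0∞)

/-- `w` has nontangential limit `L` at the boundary point `Q`. -/
def NTLim (Ω : Set (Euc d)) (w : Euc d → ℝ) (Q : Euc d) (L : ℝ) : Prop :=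
  Filter.Tendsto w (nhdsWithin Q (ntCone Ω Q)) (nhds L)

/-- The surface measure on `∂Ω`: the `(d-1)`-dimensional Hausdorff measure restricted
to the boundary. -/
def sMeasure (Ω : Set (Euc d)) : Measure (Euc d) :=
  (μH[(d : ℝ) - 1]).restrict (frontier Ω)

/-- The `L^p(∂Ω)` norm of the nontangential maximal function of `w`. -/
def ntMaxLp (Ω : Set (Euc d)) (w : Euc d → ℝ) (p : ℝ) : ℝ≥0∞ :=
  (∫⁻ Q, (ntMax Ω w Q) ^ p ∂(sMeasure Ω)) ^ (1 / p)

/-- The `L^p(∂Ω, σ)` norm of a function. -/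
def bLp (Ω : Set (Euc d)) (f : Euc d → ℝ) (p : ℝ) : ℝ≥0∞ :=
  eLpNorm f (ENNReal.ofReal p) (sMeasure Ω)

/-- A test function: smooth with compact support in `ℝ^d`. -/
def TestFun (f : Euc d → ℝ) : Prop := ContDiff ℝ (⊤ : ℕ∞) f ∧ HasCompactSupport f

/-- `u` has boundary data `(D^α f)_{|α| ≤ 1}` in the sense of nontangential convergence
`σ`-a.e. on `∂Ω`. -/
def HasBVals1 (Ω : Set (Euc d)) (u f : Euc d → ℝ) : Prop :=
  ∀ᵐ Q ∂(sMeasure Ω), NTLim Ω u Q (f Q) ∧ ∀ i, NTLim Ω (pder i u) Q (pder i f Q)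

/-- `n` is the (σ-a.e. defined) outward unit normal of `Ω`, characterized by the
Gauss–Green formula. -/
def IsOutwardNormal (Ω : Set (Euc d)) (n : Euc d → Euc d) : Prop :=
  (∀ᵐ Q ∂(sMeasure Ω), ‖n Q‖ = 1) ∧
  ∀ φ : Euc d → Euc d, ContDiff ℝ (⊤ : ℕ∞) φ → HasCompactSupport φ →
    ∫ x in Ω, (∑ i, pder i (fun y => φ y i) x) = ∫ Q, (inner ℝ (φ Q) (n Q) : ℝ) ∂(sMeasure Ω)

/-- `|∇_t h|`, the norm of the tangential gradient `∇h − (∇h·n)n` of `h` on `∂Ω`. -/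
def tgradNorm (n : Euc d → Euc d) (h : Euc d → ℝ) (Q : Euc d) : ℝ :=
  Real.sqrt (∑ i, (pder i h Q - (∑ j, n Q j * pder j h Q) * n Q i) ^ 2)

/-- `|∇_t ∇f|`, the norm of the tangential gradient of the full gradient of `f`. -/
def tgrad2Norm (n : Euc d → Euc d) (f : Euc d → ℝ) (Q : Euc d) : ℝ :=
  Real.sqrt (∑ k, (tgradNorm n (pder k f) Q) ^ 2)

/-- Unique solvability of the `L^q` Dirichlet problem `(D)_q` for `Δ²u = 0` in `Ω`:
existence, with uniform estimate, of solutions with Whitney-array boundary data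
`(D^α f)_{|α|≤1}`, together with uniqueness. -/
def DirichletSolvable (Ω : Set (Euc d)) (q : ℝ) : Prop :=
  (∃ C : ℝ≥0, ∀ f : Euc d → ℝ, TestFun f →
    ∃ u : Euc d → ℝ, Biharmonic Ω u ∧ ntMaxLp Ω (gnorm1 u) q < ⊤ ∧ HasBVals1 Ω u f ∧
      ntMaxLp Ω (gnorm1 u) q + ntMaxLp Ω u q ≤
        C * (bLp Ω f q + ∑ i : Fin d, bLp Ω (pder i f) q)) ∧
  (∀ u : Euc d → ℝ, Biharmonic Ω u → ntMaxLp Ω (gnorm1 u) q < ⊤ →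
    HasBVals1 Ω u (fun _ => 0) → ∀ x ∈ Ω, u x = 0)

/-- Unique solvability of the `L^p` regularity problem `(R)_p` for `Δ²u = 0` in `Ω`:
existence, with uniform estimate, of solutions with Whitney-array boundary data
`(D^α g)_{|α|≤2}`, together with uniqueness. -/
def RegularitySolvable (Ω : Set (Euc d)) (p : ℝ) : Prop :=
  (∃ (n : Euc d → Euc d) (C : ℝ≥0), IsOutwardNormal Ω n ∧
    ∀ g : Euc d → ℝ, TestFun g →
    ∃ u : Euc d → ℝ, Biharmonic Ω u ∧ ntMaxLp Ω (gnorm2 u) p < ⊤ ∧ HasBVals1 Ω u g ∧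
      ntMaxLp Ω (gnorm2 u) p ≤
        C * ((∑ i : Fin d, bLp Ω (tgradNorm n (pder i g)) p) + bLp Ω g p +
          ∑ i : Fin d, bLp Ω (pder i g) p)) ∧
  (∀ u : Euc d → ℝ, Biharmonic Ω u → ntMaxLp Ω (gnorm2 u) p < ⊤ →
    HasBVals1 Ω u (fun _ => 0) → ∀ x ∈ Ω, u x = 0)

/-- `u` is the solution of the `L²` regularity problem in `Ω` with boundary data
`(D^α f)_{|α|≤1}`. -/
def IsL2Sol (Ω : Set (Euc d)) (f u : Euc d → ℝ) : Prop :=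
  Biharmonic Ω u ∧ ntMaxLp Ω (gnorm2 u) 2 < ⊤ ∧ HasBVals1 Ω u f

open Classical in
/-- The solution of the `L²` regularity problem with data `f` (junk value if none exists). -/
def L2Sol (Ω : Set (Euc d)) (f : Euc d → ℝ) : Euc d → ℝ :=
  if h : ∃ u, IsL2Sol Ω f u then h.choose else 0

/-- The bilinear form `Λ[f,g] = −∫_Ω Δu·Δv`, where `u, v` solve the `L²` regularity
problem with data `f, g`. -/
def biForm (Ω : Set (Euc d)) (f g : Euc d → ℝ) : ℝ :=
  - ∫ x in Ω, lap (L2Sol Ω f) x * lap (L2Sol Ω g) x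

/-- The bilinear estimate `|Λ[f,g]| ≤ C (‖∇_t∇f‖_p + ‖∇f‖_p + ‖f‖_p)(‖∇g‖_q + ‖g‖_q)`
for all test functions `f, g`. -/
def BilinearEstimate (Ω : Set (Euc d)) (p q : ℝ) : Prop :=
  ∃ (n : Euc d → Euc d) (C : ℝ≥0), IsOutwardNormal Ω n ∧
    ∀ f g : Euc d → ℝ, TestFun f → TestFun g →
      (‖biForm Ω f g‖₊ : ℝ≥0∞) ≤
        C * (bLp Ω (tgrad2Norm n f) p + bLp Ω (gnorm1 f) p + bLp Ω f p) *
          (bLp Ω (gnorm1 g) q + bLp Ω g q)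

/-- The fundamental solution of `Δ²` in `ℝ^d` with pole at the origin (with a dimensional
normalizing constant `c ≠ 0`). -/
def fundSol (d : ℕ) (c : ℝ) (x : Euc d) : ℝ :=
  if d = 2 ∨ d = 4 then c * ‖x‖ ^ ((4 : ℝ) - d) * Real.log ‖x‖
  else c * ‖x‖ ^ ((4 : ℝ) - d)

/-!
Apply Green's formula in `Ω` to `u` and `G = Γ^x - W^x`, which has vanishing boundary data and is
biharmonic away from `x`. Multiplying `u` by a cutoff `φ` which equals one at distance `2ε` from
`∂Ω` turns the representation `u(x) = ∫ Γ^x Δ²(uφ) = ∫ G Δ²(uφ)` into an integral, over the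
boundary layer of width `2ε`, of products of derivatives of `G`, `u` and `φ`. Every derivative of
`φ` costs a factor `ε⁻¹`, and this is compensated by the vanishing boundary values: integrating
along the vertical lines of the graph charts, each derivative that is removed from `G` or `u` gains
a factor `ε`, so that Hölder's inequality bounds the integral by `O(1) · o(1)`, where the `o(1)`
comes from dominated convergence and `∇u → 0` at almost every boundary point.
-/

/-! ### Partial derivatives, Green's identities and the cutoff commutator -/

section Calculus

variable {f g : Euc d → ℝ} {x : Euc d}

theorem contDiff_pder (hf : ContDiff ℝ (⊤ : ℕ∞) f) (i : Fin d) :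
    ContDiff ℝ (⊤ : ℕ∞) (pder i f) :=
  (hf.fderiv_right (m := (⊤ : ℕ∞)) (by simp)).clm_apply contDiff_const

theorem contDiffAt_pder (hf : ContDiffAt ℝ (⊤ : ℕ∞) f x) (i : Fin d) :
    ContDiffAt ℝ (⊤ : ℕ∞) (pder i f) x :=
  (hf.fderiv_right (m := (⊤ : ℕ∞)) (by simp)).clm_apply contDiffAt_const

theorem contDiffOn_pder {Ω : Set (Euc d)} (hΩ : IsOpen Ω) (hf : ContDiffOn ℝ (⊤ : ℕ∞) f Ω)
    (i : Fin d) : ContDiffOn ℝ (⊤ : ℕ∞) (pder i f) Ω := fun _ hx =>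
  (contDiffAt_pder (hf.contDiffAt (hΩ.mem_nhds hx)) i).contDiffWithinAt

theorem differentiable_of_smooth (hf : ContDiff ℝ (⊤ : ℕ∞) f) : Differentiable ℝ f :=
  hf.differentiable (by simp)

theorem differentiableAt_of_smoothAt (hf : ContDiffAt ℝ (⊤ : ℕ∞) f x) : DifferentiableAt ℝ f x :=
  hf.differentiableAt (by simp)

theorem contDiff_lap (hf : ContDiff ℝ (⊤ : ℕ∞) f) : ContDiff ℝ (⊤ : ℕ∞) (lap f) :=
  ContDiff.sum fun i _ => contDiff_pder (contDiff_pder hf i) i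

theorem eventually_differentiableAt_of_smoothAt (hf : ContDiffAt ℝ (⊤ : ℕ∞) f x) :
    ∀ᶠ y in 𝓝 x, DifferentiableAt ℝ f y :=
  ((hf.of_le (by simp : (1 : WithTop ℕ∞) ≤ _)).eventually (by simp)).mono
    fun _ hy => hy.differentiableAt one_ne_zero

theorem contDiffAt_lap (hf : ContDiffAt ℝ (⊤ : ℕ∞) f x) : ContDiffAt ℝ (⊤ : ℕ∞) (lap f) x :=
  ContDiffAt.sum fun i _ => contDiffAt_pder (contDiffAt_pder hf i) i

theorem pder_eventuallyEq (h : f =ᶠ[𝓝 x] g) (i : Fin d) : pder i f =ᶠ[𝓝 x] pder i g := by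
  filter_upwards [h.fderiv (𝕜 := ℝ)] with y hy
  simp only [pder, hy]

theorem lap_eventuallyEq (h : f =ᶠ[𝓝 x] g) : lap f =ᶠ[𝓝 x] lap g := by
  have : ∀ᶠ y in 𝓝 x, ∀ i, pder i (pder i f) y = pder i (pder i g) y :=
    eventually_all.2 fun i => pder_eventuallyEq (pder_eventuallyEq h i) i
  filter_upwards [this] with y hy
  simp only [lap, hy]

theorem bilap_eventuallyEq (h : f =ᶠ[𝓝 x] g) : bilap f =ᶠ[𝓝 x] bilap g :=
  lap_eventuallyEq (lap_eventuallyEq h)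

theorem pder_const (i : Fin d) (a : ℝ) : pder i (fun _ => a) = fun _ => 0 := by
  funext x
  simp [pder]

theorem lap_const (a : ℝ) : lap (fun _ : Euc d => a) = fun _ => 0 := by
  funext x
  simp [lap, pder_const]

theorem bilap_eq_zero_of_notMem_tsupport (hx : x ∉ tsupport f) : bilap f x = 0 := by
  rw [(bilap_eventuallyEq (notMem_tsupport_iff_eventuallyEq.1 hx)).eq_of_nhds]
  change lap (lap fun _ : Euc d => (0 : ℝ)) x = 0
  rw [lap_const, lap_const]

theorem tsupport_bilap_subset (f : Euc d → ℝ) : tsupport (bilap f) ⊆ tsupport f :=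
  closure_minimal (fun _ => not_imp_comm.1 bilap_eq_zero_of_notMem_tsupport)
    (isClosed_tsupport f)

theorem pder_mul (hf : DifferentiableAt ℝ f x) (hg : DifferentiableAt ℝ g x) (i : Fin d) :
    pder i (fun y => f y * g y) x = pder i f x * g x + f x * pder i g x := by
  simp only [pder]
  rw [fderiv_fun_mul hf hg]
  simp only [add_apply, smul_apply, smul_eq_mul]
  ring

theorem pder_add (hf : DifferentiableAt ℝ f x) (hg : DifferentiableAt ℝ g x) (i : Fin d) :
    pder i (fun y => f y + g y) x = pder i f x + pder i g x := by
  simp only [pder]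
  rw [fderiv_fun_add hf hg, add_apply]

theorem pder_sub (hf : DifferentiableAt ℝ f x) (hg : DifferentiableAt ℝ g x) (i : Fin d) :
    pder i (fun y => f y - g y) x = pder i f x - pder i g x := by
  simp only [pder]
  rw [fderiv_fun_sub hf hg, sub_apply]

theorem pder_const_mul (hf : DifferentiableAt ℝ f x) (a : ℝ) (i : Fin d) :
    pder i (fun y => a * f y) x = a * pder i f x := by
  rw [pder_mul (differentiableAt_const a) hf, pder_const, zero_mul, zero_add]

theorem pder_sum {ι : Type*} (s : Finset ι) {f : ι → Euc d → ℝ}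
    (hf : ∀ j ∈ s, DifferentiableAt ℝ (f j) x) (i : Fin d) :
    pder i (fun y => ∑ j ∈ s, f j y) x = ∑ j ∈ s, pder i (f j) x := by
  simp only [pder]
  rw [fderiv_fun_sum hf, sum_apply]

theorem lap_add (hf : ContDiffAt ℝ (⊤ : ℕ∞) f x) (hg : ContDiffAt ℝ (⊤ : ℕ∞) g x) :
    lap (fun y => f y + g y) x = lap f x + lap g x := by
  have hfirst : ∀ i, pder i (fun y => f y + g y) =ᶠ[𝓝 x] fun y => pder i f y + pder i g y :=
    fun i => by
      filter_upwards [eventually_differentiableAt_of_smoothAt hf,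
        eventually_differentiableAt_of_smoothAt hg] with y hfy hgy using pder_add hfy hgy i
  simp only [lap, ← Finset.sum_add_distrib]
  refine Finset.sum_congr rfl fun i _ => ?_
  rw [(pder_eventuallyEq (hfirst i) i).eq_of_nhds]
  exact pder_add (differentiableAt_of_smoothAt (contDiffAt_pder hf i))
    (differentiableAt_of_smoothAt (contDiffAt_pder hg i)) i

/-- The commutator `[Δ, φ]f = Δ(φf) − φΔf = 2∇f·∇φ + fΔφ` of the Laplacian with
multiplication by `φ`. -/
def lapComm (φ f : Euc d → ℝ) (x : Euc d) : ℝ :=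
  2 * ∑ i, pder i f x * pder i φ x + f x * lap φ x

theorem lap_mul (hf : ContDiff ℝ (⊤ : ℕ∞) f) (hg : ContDiff ℝ (⊤ : ℕ∞) g) (x : Euc d) :
    lap (fun y => f y * g y) x = lap f x * g x + lapComm g f x := by
  have hfirst : ∀ i, pder i (fun y => f y * g y) = fun y => pder i f y * g y + f y * pder i g y :=
    fun i => funext fun y => pder_mul (differentiable_of_smooth hf y)
      (differentiable_of_smooth hg y) i
  have hsecond : ∀ i, pder i (pder i (fun y => f y * g y)) x =
      pder i (pder i f) x * g x + 2 * (pder i f x * pder i g x) + f x * pder i (pder i g) x := by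
    intro i
    have hf' := differentiable_of_smooth (contDiff_pder hf i) x
    have hg' := differentiable_of_smooth (contDiff_pder hg i) x
    have hfx := differentiable_of_smooth hf x
    have hgx := differentiable_of_smooth hg x
    rw [hfirst, pder_add (hf'.fun_mul hgx) (hfx.fun_mul hg'), pder_mul hf' hgx, pder_mul hfx hg']
    ring
  simp only [lap, lapComm, hsecond, Finset.sum_add_distrib, Finset.mul_sum, Finset.sum_mul,
    add_assoc]

theorem contDiff_lapComm (hf : ContDiff ℝ (⊤ : ℕ∞) f) (hg : ContDiff ℝ (⊤ : ℕ∞) g) :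
    ContDiff ℝ (⊤ : ℕ∞) (lapComm g f) :=
  (contDiff_const.mul (ContDiff.sum fun i _ => (contDiff_pder hf i).mul
    (contDiff_pder hg i))).add (hf.mul (contDiff_lap hg))

theorem lapComm_eventuallyEq_zero {a : ℝ} (h : g =ᶠ[𝓝 x] fun _ => a) (f : Euc d → ℝ) :
    lapComm g f =ᶠ[𝓝 x] fun _ => 0 := by
  filter_upwards [h.eventuallyEq_nhds] with y hy
  have hpder : ∀ i, pder i g y = 0 := fun i => by
    rw [(pder_eventuallyEq hy i).eq_of_nhds, pder_const]
  simp [lapComm, hpder, (lap_eventuallyEq hy).eq_of_nhds, lap_const]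

theorem hasCompactSupport_pder (hf : HasCompactSupport f) (i : Fin d) :
    HasCompactSupport (pder i f) :=
  hf.fderiv_apply ℝ _

theorem hasCompactSupport_lap (hf : HasCompactSupport f) : HasCompactSupport (lap f) :=
  hf.mono' fun x hx => by
    by_contra hxf
    exact hx (by rw [(lap_eventuallyEq (notMem_tsupport_iff_eventuallyEq.1 hxf)).eq_of_nhds]
                 exact congrFun (lap_const 0) x)

theorem hasCompactSupport_lapComm (hg : HasCompactSupport g) (f : Euc d → ℝ) :
    HasCompactSupport (lapComm g f) :=
  hg.mono' fun x hx => by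
    by_contra hxg
    exact hx (lapComm_eventuallyEq_zero (a := 0)
      (notMem_tsupport_iff_eventuallyEq.1 hxg) f).eq_of_nhds

theorem integrable_of_smooth (hf : ContDiff ℝ (⊤ : ℕ∞) f) (h : HasCompactSupport f) :
    Integrable f :=
  hf.continuous.integrable_of_hasCompactSupport h

theorem integral_mul_pder (hf : ContDiff ℝ (⊤ : ℕ∞) f) (hg : ContDiff ℝ (⊤ : ℕ∞) g)
    (hcg : HasCompactSupport g) (i : Fin d) :
    ∫ x, f x * pder i g x = - ∫ x, pder i f x * g x :=
  integral_mul_fderiv_eq_neg_fderiv_mul_of_integrable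
    (integrable_of_smooth ((contDiff_pder hf i).mul hg) hcg.mul_left)
    (integrable_of_smooth (hf.mul (contDiff_pder hg i)) (hasCompactSupport_pder hcg i).mul_left)
    (integrable_of_smooth (hf.mul hg) hcg.mul_left)
    (fun x _ => differentiable_of_smooth hf x) fun x _ => differentiable_of_smooth hg x

theorem integral_mul_lap_eq_neg (hf : ContDiff ℝ (⊤ : ℕ∞) f) (hg : ContDiff ℝ (⊤ : ℕ∞) g)
    (hcg : HasCompactSupport g) :
    ∫ x, f x * lap g x = - ∫ x, ∑ i, pder i f x * pder i g x := by
  simp only [lap, Finset.mul_sum]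
  rw [integral_finsetSum, integral_finsetSum, ← Finset.sum_neg_distrib]
  · exact Finset.sum_congr rfl fun i _ =>
      integral_mul_pder hf (contDiff_pder hg i) (hasCompactSupport_pder hcg i) i
  · exact fun i _ => integrable_of_smooth ((contDiff_pder hf i).mul (contDiff_pder hg i))
      (hasCompactSupport_pder hcg i).mul_left
  · exact fun i _ => integrable_of_smooth (hf.mul (contDiff_pder (contDiff_pder hg i) i))
      (hasCompactSupport_pder (hasCompactSupport_pder hcg i) i).mul_left

theorem integral_mul_lap (hf : ContDiff ℝ (⊤ : ℕ∞) f) (hg : ContDiff ℝ (⊤ : ℕ∞) g)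
    (hcg : HasCompactSupport g) : ∫ x, f x * lap g x = ∫ x, lap f x * g x := by
  rw [integral_mul_lap_eq_neg hf hg hcg]
  simp only [lap, Finset.sum_mul]
  rw [integral_finsetSum, integral_finsetSum, ← Finset.sum_neg_distrib]
  · exact Finset.sum_congr rfl fun i _ => by
      rw [integral_mul_pder (contDiff_pder hf i) hg hcg i, neg_neg]
  · exact fun i _ => integrable_of_smooth
      ((contDiff_pder (contDiff_pder hf i) i).mul hg) hcg.mul_left
  · exact fun i _ => integrable_of_smooth ((contDiff_pder hf i).mul (contDiff_pder hg i))
      (hasCompactSupport_pder hcg i).mul_left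

theorem integral_mul_bilap (hf : ContDiff ℝ (⊤ : ℕ∞) f) (hg : ContDiff ℝ (⊤ : ℕ∞) g)
    (hcg : HasCompactSupport g) : ∫ x, f x * bilap g x = ∫ x, bilap f x * g x := by
  rw [bilap, integral_mul_lap hf (contDiff_lap hg) (hasCompactSupport_lap hcg),
    integral_mul_lap (contDiff_lap hf) hg hcg, bilap]

end Calculus

section Commutator

variable {G G' u u' φ : Euc d → ℝ} {x : Euc d}

/-- The integrand `ΔG·[Δ, φ]u + ∇([Δ, φ]G)·∇u` left over when `Δ²` is moved from `φu` onto `G`: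
it involves no more than two derivatives of `G` and one of `u`. -/
def commInt (G u φ : Euc d → ℝ) (x : Euc d) : ℝ :=
  lap G x * lapComm φ u x + ∑ i, pder i (lapComm φ G) x * pder i u x

theorem lapComm_eventuallyEq (φ : Euc d → ℝ) (hu : u =ᶠ[𝓝 x] u') :
    lapComm φ u =ᶠ[𝓝 x] lapComm φ u' := by
  have : ∀ᶠ y in 𝓝 x, ∀ i, pder i u y = pder i u' y := eventually_all.2 (pder_eventuallyEq hu)
  filter_upwards [hu, this] with y hy hy'
  simp only [lapComm, hy, hy']

theorem commInt_congr (φ : Euc d → ℝ) (hG : G =ᶠ[𝓝 x] G') (hu : u =ᶠ[𝓝 x] u') :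
    commInt G u φ x = commInt G' u' φ x := by
  simp only [commInt, (lap_eventuallyEq hG).eq_of_nhds, (lapComm_eventuallyEq φ hu).eq_of_nhds,
    (pder_eventuallyEq hu _).eq_of_nhds,
    (pder_eventuallyEq (lapComm_eventuallyEq φ hG) _).eq_of_nhds]

theorem commInt_eq_zero_of_eventuallyEq_const (G u : Euc d → ℝ) {a : ℝ}
    (h : φ =ᶠ[𝓝 x] fun _ => a) : commInt G u φ x = 0 := by
  simp only [commInt, (lapComm_eventuallyEq_zero h u).eq_of_nhds,
    (pder_eventuallyEq (lapComm_eventuallyEq_zero h G) _).eq_of_nhds, pder_const, mul_zero,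
    zero_mul, Finset.sum_const_zero, add_zero]

/-- Only the term `ΔG·φΔu` has too many derivatives on `u`; it equals `Δ(φG)·Δu − [Δ, φ]G·Δu`,
where the first part integrates to zero and the second is integrated by parts once. -/
theorem integral_mul_bilap_mul (hG : ContDiff ℝ (⊤ : ℕ∞) G) (hu : ContDiff ℝ (⊤ : ℕ∞) u)
    (hcu : HasCompactSupport u) (hφ : ContDiff ℝ (⊤ : ℕ∞) φ) (hcφ : HasCompactSupport φ)
    (h0 : ∀ x, φ x * bilap u x = 0) :
    ∫ x, G x * bilap (fun y => u y * φ y) x = ∫ x, commInt G u φ x := by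
  have hlapG := contDiff_lap hG
  have hlapu := contDiff_lap hu
  have hclapu := hasCompactSupport_lap hcu
  have iB : Integrable fun x => lap G x * φ x * lap u x :=
    integrable_of_smooth ((hlapG.mul hφ).mul hlapu) hclapu.mul_left
  have iA : Integrable fun x => lap G x * lapComm φ u x :=
    integrable_of_smooth (hlapG.mul (contDiff_lapComm hu hφ))
      (hasCompactSupport_lapComm hcφ u).mul_left
  have iC : Integrable fun x => lapComm φ G x * lap u x :=
    integrable_of_smooth ((contDiff_lapComm hG hφ).mul hlapu) hclapu.mul_left
  have iD : Integrable fun x => ∑ i, pder i (lapComm φ G) x * pder i u x :=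
    integrable_finsetSum _ fun i _ => integrable_of_smooth
      ((contDiff_pder (contDiff_lapComm hG hφ) i).mul (contDiff_pder hu i))
      (hasCompactSupport_pder hcu i).mul_left
  have hleft : ∫ x, G x * bilap (fun y => u y * φ y) x =
      (∫ x, lap G x * φ x * lap u x) + ∫ x, lap G x * lapComm φ u x := by
    rw [bilap, integral_mul_lap hG (contDiff_lap (hu.mul hφ)) (hasCompactSupport_lap hcφ.mul_left),
      ← integral_add iB iA]
    congr 1 with x
    rw [lap_mul hu hφ]
    ring
  have hzero : (∫ x, lap G x * φ x * lap u x) + ∫ x, lapComm φ G x * lap u x = 0 := by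
    rw [← integral_add iB iC]
    simp only [← add_mul, ← lap_mul hG hφ]
    rw [← integral_mul_lap (hG.mul hφ) hlapu hclapu]
    exact integral_eq_zero_of_ae (Eventually.of_forall fun x => by
      change G x * φ x * bilap u x = 0
      rw [mul_assoc, h0, mul_zero])
  have hparts : ∫ x, lapComm φ G x * lap u x = - ∫ x, ∑ i, pder i (lapComm φ G) x * pder i u x :=
    integral_mul_lap_eq_neg (contDiff_lapComm hG hφ) hu hcu
  simp only [commInt]
  rw [integral_add iA iD]
  linarith

theorem exists_contDiff_eventuallyEq {E : Type*} [NormedAddCommGroup E] [NormedSpace ℝ E]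
    [FiniteDimensional ℝ E] {Ω K : Set E} (hΩ : IsOpen Ω) (hK : IsCompact K) (hKΩ : K ⊆ Ω)
    {f : E → ℝ} (hf : ContDiffOn ℝ (⊤ : ℕ∞) f Ω) :
    ∃ g : E → ℝ, ContDiff ℝ (⊤ : ℕ∞) g ∧ HasCompactSupport g ∧ ∀ y ∈ K, g =ᶠ[𝓝 y] f := by
  obtain ⟨L, hL, hKL, hLΩ⟩ := exists_compact_between hK hΩ hKΩ
  obtain ⟨χ, hχ1, hχ0, -⟩ := exists_contMDiffMap_one_nhds_of_subset_interior
    (n := (⊤ : ℕ∞)) (modelWithCornersSelf ℝ E) hK.isClosed hKL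
  have hχL : tsupport χ ⊆ L := closure_minimal
    (fun y hy => by_contra fun hyL => hy (hχ0 y hyL)) hL.isClosed
  have hcχ : HasCompactSupport χ := hL.of_isClosed_subset (isClosed_tsupport _) hχL
  refine ⟨fun y => χ y * f y, contDiff_iff_contDiffAt.2 fun y => ?_, hcχ.mul_right,
    fun y hy => ?_⟩
  · by_cases hy : y ∈ tsupport χ
    · exact (contMDiff_iff_contDiff.1 χ.contMDiff).contDiffAt.mul
        (hf.contDiffAt (hΩ.mem_nhds (hLΩ (hχL hy))))
    · refine (contDiffAt_const (c := (0 : ℝ))).congr_of_eventuallyEq ?_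
      filter_upwards [notMem_tsupport_iff_eventuallyEq.1 hy] with z hz
      rw [hz, Pi.zero_apply, zero_mul]
  · filter_upwards [hχ1.filter_mono (nhds_le_nhdsSet hy)] with z hz
    rw [hz, one_mul]

theorem mul_eq_mul_of_eventuallyEq_on_tsupport
    (h : ∀ y ∈ tsupport φ, u' =ᶠ[𝓝 y] u) : (fun y => u y * φ y) = fun y => u' y * φ y :=
  funext fun y => by
    by_cases hy : y ∈ tsupport φ
    · rw [(h y hy).eq_of_nhds]
    · simp [image_eq_zero_of_notMem_tsupport hy]

section OpenSet

variable {Ω : Set (Euc d)}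

theorem contDiff_mul_of_tsupport_subset (hΩ : IsOpen Ω) (hu : ContDiffOn ℝ (⊤ : ℕ∞) u Ω)
    (hφ : ContDiff ℝ (⊤ : ℕ∞) φ) (hcφ : HasCompactSupport φ) (hφΩ : tsupport φ ⊆ Ω) :
    ContDiff ℝ (⊤ : ℕ∞) fun y => u y * φ y := by
  obtain ⟨v, hv, -, hvu⟩ := exists_contDiff_eventuallyEq hΩ hcφ hφΩ hu
  rw [mul_eq_mul_of_eventuallyEq_on_tsupport hvu]
  exact hv.mul hφ

theorem integral_mul_bilap_eq_zero (hΩ : IsOpen Ω) (hG : ContDiffOn ℝ (⊤ : ℕ∞) G Ω)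
    (hφ : ContDiff ℝ (⊤ : ℕ∞) φ) (hcφ : HasCompactSupport φ) (hφΩ : tsupport φ ⊆ Ω)
    (h0 : ∀ x ∈ Ω, bilap G x = 0) : ∫ x, G x * bilap φ x = 0 := by
  obtain ⟨F, hF, -, hFG⟩ := exists_contDiff_eventuallyEq hΩ hcφ hφΩ hG
  calc ∫ x, G x * bilap φ x = ∫ x, F x * bilap φ x := by
        congr 1 with x
        by_cases hx : x ∈ tsupport φ
        · rw [(hFG x hx).eq_of_nhds]
        · simp [bilap_eq_zero_of_notMem_tsupport hx]
    _ = ∫ x, bilap F x * φ x := integral_mul_bilap hF hφ hcφ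
    _ = 0 := integral_eq_zero_of_ae (Eventually.of_forall fun x => by
        by_cases hx : x ∈ tsupport φ
        · simp [(bilap_eventuallyEq (hFG x hx)).eq_of_nhds, h0 x (hφΩ hx)]
        · simp [image_eq_zero_of_notMem_tsupport hx])

theorem integral_mul_bilap_mul_of_contDiffOn (hΩ : IsOpen Ω)
    (hG : ContDiffOn ℝ (⊤ : ℕ∞) G Ω) (hu : ContDiffOn ℝ (⊤ : ℕ∞) u Ω)
    (hφ : ContDiff ℝ (⊤ : ℕ∞) φ) (hcφ : HasCompactSupport φ) (hφΩ : tsupport φ ⊆ Ω)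
    (h0 : ∀ x ∈ Ω, bilap u x = 0) :
    ∫ x, G x * bilap (fun y => u y * φ y) x = ∫ x, commInt G u φ x := by
  obtain ⟨F, hF, -, hFG⟩ := exists_contDiff_eventuallyEq hΩ hcφ hφΩ hG
  obtain ⟨v, hv, hcv, hvu⟩ := exists_contDiff_eventuallyEq hΩ hcφ hφΩ hu
  calc ∫ x, G x * bilap (fun y => u y * φ y) x
      = ∫ x, F x * bilap (fun y => v y * φ y) x := by
        congr 1 with x
        rw [mul_eq_mul_of_eventuallyEq_on_tsupport hvu]
        by_cases hx : x ∈ tsupport φ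
        · rw [(hFG x hx).eq_of_nhds]
        · simp [bilap_eq_zero_of_notMem_tsupport fun h => hx (tsupport_mul_subset_right h)]
    _ = ∫ x, commInt F v φ x := integral_mul_bilap_mul hF hv hcv hφ hcφ fun x => by
        by_cases hx : x ∈ tsupport φ
        · rw [(bilap_eventuallyEq (hvu x hx)).eq_of_nhds, h0 x (hφΩ hx), mul_zero]
        · rw [image_eq_zero_of_notMem_tsupport hx, zero_mul]
    _ = ∫ x, commInt G u φ x := by
        congr 1 with x
        by_cases hx : x ∈ tsupport φ
        · exact commInt_congr φ (hFG x hx) (hvu x hx)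
        · have hx0 : φ =ᶠ[𝓝 x] fun _ => 0 := notMem_tsupport_iff_eventuallyEq.1 hx
          rw [commInt_eq_zero_of_eventuallyEq_const F v hx0,
            commInt_eq_zero_of_eventuallyEq_const G u hx0]

end OpenSet

end Commutator

/-! ### Cutoff functions -/

section IteratedPartialDerivatives

variable {f g : Euc d → ℝ}

/-- The iterated partial derivative `D_{i₁} ⋯ D_{iₙ} f`, for the list `[i₁, …, iₙ]`. -/
def pders (l : List (Fin d)) (f : Euc d → ℝ) : Euc d → ℝ := l.foldr pder f

theorem pders_cons (i : Fin d) (l : List (Fin d)) (f : Euc d → ℝ) :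
    pders (i :: l) f = pder i (pders l f) := rfl

theorem contDiff_pders (hf : ContDiff ℝ (⊤ : ℕ∞) f) (l : List (Fin d)) :
    ContDiff ℝ (⊤ : ℕ∞) (pders l f) := by
  induction l with
  | nil => exact hf
  | cons i l ih => exact contDiff_pder ih i

theorem hasCompactSupport_pders (hf : HasCompactSupport f) (l : List (Fin d)) :
    HasCompactSupport (pders l f) := by
  induction l with
  | nil => exact hf
  | cons i l ih => exact hasCompactSupport_pder ih i

theorem pder_comp_smul (hf : ContDiff ℝ (⊤ : ℕ∞) f) (a : ℝ) (i : Fin d) :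
    pder i (fun y => f (a • y)) = fun y => a * pder i f (a • y) := by
  funext y
  have h := (differentiable_of_smooth hf (a • y)).hasFDerivAt.comp y
    ((hasFDerivAt_id y).const_smul a)
  have h' : fderiv ℝ (fun y => f (a • y)) y = _ := h.fderiv
  simp [pder, h']

theorem pders_comp_smul (hf : ContDiff ℝ (⊤ : ℕ∞) f) (a : ℝ) (l : List (Fin d)) :
    pders l (fun y => f (a • y)) = fun y => a ^ l.length * pders l f (a • y) := by
  induction l with
  | nil => simp [pders]
  | cons i l ih =>
    have hl := contDiff_pders hf l
    have hla : ContDiff ℝ (⊤ : ℕ∞) fun y => pders l f (a • y) := hl.comp (contDiff_const_smul a)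
    funext y
    rw [pders_cons, ih, pder_const_mul (differentiable_of_smooth hla y), pder_comp_smul hl,
      List.length_cons, pders_cons]
    ring

open scoped Convolution

theorem pder_convolution (hf : LocallyIntegrable f) (hg : ContDiff ℝ (⊤ : ℕ∞) g)
    (hcg : HasCompactSupport g) (i : Fin d) :
    pder i (f ⋆[ContinuousLinearMap.mul ℝ ℝ, volume] g) =
      f ⋆[ContinuousLinearMap.mul ℝ ℝ, volume] (pder i g) := by
  funext x
  have hg1 : ContDiff ℝ 1 g := hg.of_le (by simp)
  rw [pder, (hcg.hasFDerivAt_convolution_right (ContinuousLinearMap.mul ℝ ℝ) hf hg1 x).fderiv,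
    convolution_precompR_apply _ hf (hcg.fderiv ℝ) (hg1.continuous_fderiv one_ne_zero)]
  rfl

theorem pders_convolution (hf : LocallyIntegrable f) (hg : ContDiff ℝ (⊤ : ℕ∞) g)
    (hcg : HasCompactSupport g) (l : List (Fin d)) :
    pders l (f ⋆[ContinuousLinearMap.mul ℝ ℝ, volume] g) =
      f ⋆[ContinuousLinearMap.mul ℝ ℝ, volume] (pders l g) := by
  induction l with
  | nil => rfl
  | cons i l ih =>
    rw [pders_cons, ih, pder_convolution hf (contDiff_pders hg l) (hasCompactSupport_pders hcg l),
      pders_cons]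

theorem abs_indicator_convolution_le (S : Set (Euc d)) (hg : Integrable g) (x : Euc d) :
    |((S.indicator fun _ => (1 : ℝ)) ⋆[ContinuousLinearMap.mul ℝ ℝ, volume] g) x| ≤
      ∫ t, |g t| := by
  rw [convolution_mul, ← Real.norm_eq_abs]
  calc ‖∫ t, S.indicator (fun _ => (1 : ℝ)) t * g (x - t)‖
      ≤ ∫ t, |g (x - t)| := by
        refine norm_integral_le_of_norm_le (hg.comp_sub_left x).abs
          (Eventually.of_forall fun t => ?_)
        by_cases ht : t ∈ S <;> simp [ht]
    _ = ∫ t, |g t| := integral_sub_left_eq_self (fun t => |g t|) _ x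

theorem exists_smooth_indicator_one (d : ℕ) : ∃ C : List (Fin d) → ℝ, ∀ S : Set (Euc d),
    MeasurableSet S → ∃ φ : Euc d → ℝ, ContDiff ℝ (⊤ : ℕ∞) φ ∧
      (∀ y, φ y ≠ 0 → ∃ t ∈ S, dist y t < 1) ∧ (∀ y, ball y 1 ⊆ S → φ y = 1) ∧
      ∀ l y, |pders l φ y| ≤ C l := by
  let b : ContDiffBump (0 : Euc d) := ⟨1 / 2, 1, by norm_num, by norm_num⟩
  let g : Euc d → ℝ := b.normed volume
  have hg : ContDiff ℝ (⊤ : ℕ∞) g := b.contDiff_normed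
  have hcg : HasCompactSupport g := b.hasCompactSupport_normed
  have hg_ball : ∀ {y t : Euc d}, g (y - t) ≠ 0 → dist y t < 1 := fun {y t} h => by
    have : y - t ∈ Function.support g := h
    rw [b.support_normed_eq, mem_ball_zero_iff] at this
    rwa [dist_eq_norm]
  refine ⟨fun l => ∫ t, |pders l g t|, fun S hS => ?_⟩
  have hf : LocallyIntegrable (S.indicator fun _ => (1 : ℝ)) (volume : Measure (Euc d)) :=
    (locallyIntegrable_const (1 : ℝ)).indicator hS
  refine ⟨(S.indicator fun _ => 1) ⋆[ContinuousLinearMap.mul ℝ ℝ, volume] g,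
    hcg.contDiff_convolution_right _ hf hg, fun y hy => ?_, fun y hy => ?_, fun l y => ?_⟩
  · by_contra! hfar
    refine hy ?_
    rw [convolution_mul]
    refine integral_eq_zero_of_ae (Eventually.of_forall fun t => ?_)
    by_cases ht : t ∈ S
    · have hgt : g (y - t) = 0 := by_contra fun h => (hg_ball h).not_ge (hfar t ht)
      simp [hgt]
    · simp [ht]
  · have hone : ∀ t, S.indicator (fun _ => (1 : ℝ)) t * g (y - t) = g (y - t) := fun t => by
      by_cases ht : g (y - t) = 0
      · rw [ht, mul_zero]
      · rw [indicator_of_mem (hy (mem_ball'.2 (hg_ball ht))), one_mul]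
    simp only [convolution_mul, hone]
    rw [integral_sub_left_eq_self g _ y]
    exact b.integral_normed
  · rw [pders_convolution hf hg hcg]
    exact abs_indicator_convolution_le S (integrable_of_smooth (contDiff_pders hg l)
      (hasCompactSupport_pders hcg l)) y

theorem exists_smooth_indicator (d : ℕ) : ∃ C : List (Fin d) → ℝ, ∀ S : Set (Euc d),
    MeasurableSet S → ∀ ε : ℝ, 0 < ε → ∃ φ : Euc d → ℝ, ContDiff ℝ (⊤ : ℕ∞) φ ∧
      (∀ y, φ y ≠ 0 → ∃ t ∈ S, dist y t < ε) ∧ (∀ y, ball y ε ⊆ S → φ y = 1) ∧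
      ∀ l y, |pders l φ y| ≤ C l * ε⁻¹ ^ l.length := by
  obtain ⟨C, hC⟩ := exists_smooth_indicator_one d
  refine ⟨C, fun S hS ε hε => ?_⟩
  have hdist : ∀ y t : Euc d, dist y (ε • t) = ε * dist (ε⁻¹ • y) t := fun y t => by
    rw [← abs_of_pos hε, ← Real.norm_eq_abs, ← dist_smul₀, Real.norm_eq_abs, abs_of_pos hε,
      smul_inv_smul₀ hε.ne']
  obtain ⟨φ, hφ, hφ0, hφ1, hφC⟩ := hC ((ε • ·) ⁻¹' S) (measurable_const_smul ε hS)
  refine ⟨fun y => φ (ε⁻¹ • y), hφ.comp (contDiff_const_smul ε⁻¹), fun y hy => ?_, fun y hy => ?_,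
    fun l y => ?_⟩
  · obtain ⟨t, ht, hlt⟩ := hφ0 _ hy
    refine ⟨ε • t, ht, ?_⟩
    rw [hdist]
    exact mul_lt_of_lt_one_right hε hlt
  · refine hφ1 _ fun t ht => hy ?_
    rw [mem_ball', hdist]
    exact mul_lt_of_lt_one_right hε (mem_ball'.1 ht)
  · rw [pders_comp_smul hφ, abs_mul, abs_of_pos (by positivity), mul_comm]
    gcongr
    exact hφC l _

end IteratedPartialDerivatives

theorem mem_of_dist_lt_infDist_frontier {E : Type*} [NormedAddCommGroup E] [NormedSpace ℝ E]
    {Ω : Set E} (hΩ : IsOpen Ω) {a y : E} (ha : a ∈ Ω) (h : dist y a < infDist a (frontier Ω)) :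
    y ∈ Ω := by
  have hdisj : Disjoint (ball a (infDist a (frontier Ω))) (frontier Ω) := disjoint_ball_infDist
  refine (convex_ball a _).isPreconnected.subset_left_of_subset_union hΩ
    isClosed_closure.isOpen_compl (disjoint_compl_right.mono_left subset_closure) (fun z hz => ?_)
    ⟨a, mem_ball_self (dist_nonneg.trans_lt h), ha⟩ (mem_ball.2 h)
  by_cases hzΩ : z ∈ Ω
  · exact Or.inl hzΩ
  · exact Or.inr fun hzc => hdisj.le_bot ⟨hz, hΩ.frontier_eq ▸ ⟨hzc, hzΩ⟩⟩

theorem isClosed_le_infDist_frontier {E : Type*} [PseudoMetricSpace E] {Ω : Set E}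
    (hΩ : IsOpen Ω) {ε : ℝ} (hε : 0 < ε) :
    IsClosed {y | y ∈ Ω ∧ ε ≤ infDist y (frontier Ω)} := by
  have : {y | y ∈ Ω ∧ ε ≤ infDist y (frontier Ω)} =
      closure Ω ∩ {y | ε ≤ infDist y (frontier Ω)} := by
    ext y
    refine ⟨fun h => ⟨subset_closure h.1, h.2⟩, fun h => ⟨by_contra fun hy => ?_, h.2⟩⟩
    have hε' : ε ≤ infDist y (frontier Ω) := h.2
    rw [infDist_zero_of_mem (hΩ.frontier_eq ▸ ⟨h.1, hy⟩)] at hε'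
    exact hε.not_ge hε'
  rw [this]
  exact isClosed_closure.inter (isClosed_le continuous_const (continuous_infDist_pt _))

theorem infDist_frontier_pos {E : Type*} [NormedAddCommGroup E] [NormedSpace ℝ E] [Nontrivial E]
    {Ω : Set E} (hΩ : IsOpen Ω) (hbd : Bornology.IsBounded Ω) {x : E} (hx : x ∈ Ω) :
    0 < infDist x (frontier Ω) := by
  have hne : (frontier Ω).Nonempty := nonempty_frontier_iff.2 ⟨⟨x, hx⟩, fun h =>
    NormedSpace.unbounded_univ ℝ E (h ▸ hbd)⟩
  refine (isClosed_frontier.notMem_iff_infDist_pos hne).1 fun h => ?_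
  rw [hΩ.frontier_eq] at h
  exact h.2 hx

theorem infDist_le_infDist_add_of_dist_le {E : Type*} [PseudoMetricSpace E] (s : Set E) {x y : E}
    {r : ℝ} (h : dist x y ≤ r) : infDist x s ≤ infDist y s + r :=
  infDist_le_infDist_add_dist.trans (by gcongr)

/-- `φ` is a cutoff function supported in `Ω` which equals one at distance at least `2ε` from
`∂Ω`, and whose derivatives of order `k ≤ 3` are at most `C ε⁻ᵏ`. -/
structure BoundaryCutoff (Ω : Set (Euc d)) (ε C : ℝ) (φ : Euc d → ℝ) : Prop where
  contDiff : ContDiff ℝ (⊤ : ℕ∞) φ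
  hasCompactSupport : HasCompactSupport φ
  tsupport_subset : tsupport φ ⊆ Ω
  eventuallyEq_one : ∀ y ∈ Ω, 2 * ε ≤ infDist y (frontier Ω) → φ =ᶠ[𝓝 y] fun _ => 1
  abs_pders_le : ∀ l : List (Fin d), l.length ≤ 3 → ∀ y, |pders l φ y| ≤ C * ε⁻¹ ^ l.length

theorem exists_boundaryCutoff (d : ℕ) : ∃ C : ℝ, 0 ≤ C ∧ ∀ Ω : Set (Euc d), IsOpen Ω →
    Bornology.IsBounded Ω → ∀ ε : ℝ, 0 < ε → ∃ φ, BoundaryCutoff Ω ε C φ := by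
  obtain ⟨C, hC⟩ := exists_smooth_indicator d
  have hfin : {l : List (Fin d) | l.length ≤ 3}.Finite := List.finite_length_le _ _
  refine ⟨∑ l ∈ hfin.toFinset, |C l * 4 ^ l.length|, by positivity, fun Ω hΩ hbd ε hε => ?_⟩
  set S : Set (Euc d) := {y | y ∈ Ω ∧ 3 / 2 * ε ≤ infDist y (frontier Ω)}
  obtain ⟨φ, hφ, hφ0, hφ1, hφC⟩ :=
    hC S (isClosed_le_infDist_frontier hΩ (by positivity)).measurableSet (ε / 4) (by positivity)
  have hsupp : tsupport φ ⊆ {y | y ∈ Ω ∧ ε ≤ infDist y (frontier Ω)} := by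
    refine closure_minimal (fun y hy => ?_) (isClosed_le_infDist_frontier hΩ hε)
    obtain ⟨t, ⟨htΩ, ht⟩, hyt⟩ := hφ0 y hy
    have := infDist_le_infDist_add_of_dist_le (frontier Ω) (dist_comm y t ▸ hyt.le)
    exact ⟨mem_of_dist_lt_infDist_frontier hΩ htΩ (by linarith), by linarith⟩
  refine ⟨φ, hφ, ?_, fun y hy => (hsupp hy).1, fun y hy hyε => ?_, fun l hl y => ?_⟩
  · exact isCompact_of_isClosed_isBounded (isClosed_tsupport φ)
      (hbd.subset fun y hy => (hsupp hy).1)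
  · filter_upwards [ball_mem_nhds y (show 0 < ε / 4 by positivity)] with z hz
    refine hφ1 z fun t ht => ?_
    have hty : dist y t ≤ ε / 2 := by
      linarith [dist_triangle y z t, mem_ball'.1 hz, mem_ball'.1 ht]
    have := infDist_le_infDist_add_of_dist_le (frontier Ω) hty
    exact ⟨mem_of_dist_lt_infDist_frontier hΩ hy (by rw [dist_comm]; linarith), by linarith⟩
  · calc |pders l φ y| ≤ C l * (ε / 4)⁻¹ ^ l.length := hφC l y
      _ = C l * 4 ^ l.length * ε⁻¹ ^ l.length := by rw [inv_div, div_eq_mul_inv, mul_pow, mul_assoc]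
      _ ≤ _ := by
        gcongr
        exact (le_abs_self _).trans (Finset.single_le_sum
          (f := fun l : List (Fin d) => |C l * 4 ^ l.length|) (fun _ _ => abs_nonneg _)
          (hfin.mem_toFinset.2 hl))

/-! ### The fundamental solution -/

section Radial

theorem hasFDerivAt_normSq_sub_add {E : Type*} [NormedAddCommGroup E] [InnerProductSpace ℝ E]
    (x y : E) (a : ℝ) :
    HasFDerivAt (fun z : E => ‖z - x‖ ^ 2 + a) ((2 : ℝ) • innerSL ℝ (y - x)) y := by
  refine (((hasFDerivAt_id y).sub_const x).norm_sq.add_const a).congr_fderiv ?_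
  ext v
  simp

variable {F F₁ F₂ : ℝ → ℝ} {a : ℝ} (x y : Euc d)

theorem pder_radial {F' : ℝ} (h : HasDerivAt F F' (‖y - x‖ ^ 2 + a)) (i : Fin d) :
    pder i (fun z => F (‖z - x‖ ^ 2 + a)) y = F' * (2 * (y i - x i)) := by
  have hF := h.comp_hasFDerivAt y (hasFDerivAt_normSq_sub_add x y a)
  rw [pder, show fderiv ℝ (fun z => F (‖z - x‖ ^ 2 + a)) y = _ from hF.fderiv]
  simp [EuclideanSpace.inner_single_right]

theorem lap_radial (h₁ : ∀ ρ, 0 < ρ → HasDerivAt F (F₁ ρ) ρ)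
    (h₂ : ∀ ρ, 0 < ρ → HasDerivAt F₁ (F₂ ρ) ρ) (ha : 0 < a) :
    lap (fun z => F (‖z - x‖ ^ 2 + a)) y =
      4 * ‖y - x‖ ^ 2 * F₂ (‖y - x‖ ^ 2 + a) + 2 * d * F₁ (‖y - x‖ ^ 2 + a) := by
  have hpos : ∀ z : Euc d, 0 < ‖z - x‖ ^ 2 + a := fun z => by positivity
  have hfirst : ∀ i, pder i (fun z => F (‖z - x‖ ^ 2 + a)) =
      fun z => F₁ (‖z - x‖ ^ 2 + a) * (2 * (z i - x i)) :=
    fun i => funext fun z => pder_radial x z (h₁ _ (hpos z)) i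
  have hcoord : ∀ i, HasFDerivAt (fun z : Euc d => 2 * (z i - x i))
      ((2 : ℝ) • (EuclideanSpace.proj i : Euc d →L[ℝ] ℝ)) y := fun i =>
    (((EuclideanSpace.proj i : Euc d →L[ℝ] ℝ).hasFDerivAt).sub_const (x i)).const_mul 2
  have hpder_coord : ∀ i, pder i (fun z : Euc d => 2 * (z i - x i)) y = 2 := fun i => by
    simp [pder, (hcoord i).fderiv]
  have hsecond : ∀ i, pder i (pder i (fun z => F (‖z - x‖ ^ 2 + a))) y =
      4 * (y i - x i) ^ 2 * F₂ (‖y - x‖ ^ 2 + a) + 2 * F₁ (‖y - x‖ ^ 2 + a) := fun i => by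
    have hF₁ := (h₂ _ (hpos y)).comp_hasFDerivAt y (hasFDerivAt_normSq_sub_add x y a)
    rw [hfirst, pder_mul (f := fun z => F₁ (‖z - x‖ ^ 2 + a)) hF₁.differentiableAt
      (hcoord i).differentiableAt, pder_radial x y (h₂ _ (hpos y)), hpder_coord]
    ring
  have hnorm : ∑ i, (y i - x i) ^ 2 = ‖y - x‖ ^ 2 := by simp [EuclideanSpace.norm_sq_eq]
  simp only [lap, hsecond, Finset.sum_add_distrib, ← Finset.sum_mul, ← Finset.mul_sum, hnorm,
    Finset.sum_const, Finset.card_univ, Fintype.card_fin, nsmul_eq_mul]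
  ring

end Radial

/-- The functions `ρ ^ r (A + B log ρ)`, a class closed under differentiation which contains the
profile of the fundamental solution as a function of `ρ = |x|²`. -/
def powLog (r A B ρ : ℝ) : ℝ := ρ ^ r * (A + B * Real.log ρ)

section PowLog

theorem hasDerivAt_powLog (r A B : ℝ) {ρ : ℝ} (hρ : 0 < ρ) :
    HasDerivAt (powLog r A B) (powLog (r - 1) (r * A + B) (r * B) ρ) ρ := by
  have hpow := Real.hasDerivAt_rpow_const (x := ρ) (p := r) (Or.inl hρ.ne')
  have hlog := ((Real.hasDerivAt_log hρ.ne').const_mul B).const_add A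
  refine (hpow.mul hlog).congr_deriv ?_
  have hr : ρ ^ r = ρ ^ (r - 1) * ρ := by
    rw [Real.rpow_sub_one hρ.ne']
    field_simp
  simp only [powLog, hr]
  field_simp
  ring

theorem contDiffOn_powLog (r A B : ℝ) : ContDiffOn ℝ (⊤ : ℕ∞) (powLog r A B) (Ioi 0) := by
  have hne : ∀ ρ ∈ Ioi (0 : ℝ), ρ ≠ 0 := fun ρ hρ => ne_of_gt hρ
  exact (contDiffOn_id.rpow_const_of_ne hne).mul
    (contDiffOn_const.add (contDiffOn_const.mul (contDiffOn_id.log hne)))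

theorem contDiff_comp_normSq_sub_add {E : Type*} [NormedAddCommGroup E] [InnerProductSpace ℝ E]
    {F : ℝ → ℝ} (hF : ContDiffOn ℝ (⊤ : ℕ∞) F (Ioi 0)) {a : ℝ} (ha : 0 < a) (x : E) :
    ContDiff ℝ (⊤ : ℕ∞) fun z : E => F (‖z - x‖ ^ 2 + a) :=
  hF.comp_contDiff (((contDiff_id.sub contDiff_const).norm_sq ℝ).add contDiff_const)
    fun z => show 0 < ‖z - x‖ ^ 2 + a by positivity

theorem lap_powLog (r A B : ℝ) {a : ℝ} (ha : 0 < a) (x y : Euc d) :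
    lap (fun z => powLog r A B (‖z - x‖ ^ 2 + a)) y =
      powLog (r - 1) (4 * ((r - 1) * (r * A + B) + r * B) + 2 * d * (r * A + B))
          (4 * ((r - 1) * (r * B)) + 2 * d * (r * B)) (‖y - x‖ ^ 2 + a) +
        powLog (r - 2) (-4 * a * ((r - 1) * (r * A + B) + r * B))
          (-4 * a * ((r - 1) * (r * B))) (‖y - x‖ ^ 2 + a) := by
  rw [lap_radial x y (fun ρ hρ => hasDerivAt_powLog r A B hρ)
    (fun ρ hρ => hasDerivAt_powLog _ _ _ hρ) ha]
  have hρ : 0 < ‖y - x‖ ^ 2 + a := by positivity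
  have hnorm : ‖y - x‖ ^ 2 = (‖y - x‖ ^ 2 + a) - a := by ring
  rw [hnorm, sub_add_cancel]
  generalize ‖y - x‖ ^ 2 + a = ρ at hρ
  have hr : r - 2 = r - 1 - 1 := by ring
  simp only [powLog, hr, Real.rpow_sub_one hρ.ne' (r - 1)]
  field_simp
  ring

theorem bilap_powLog {s A B : ℝ} (hs : (d : ℝ) = 4 - 2 * s) (hB : s * (s - 1) * B = 0)
    {a : ℝ} (ha : 0 < a) (x y : Euc d) :
    bilap (fun z => powLog s A B (‖z - x‖ ^ 2 + a)) y =
      16 * (s * (s - 1) * (s - 2) * (s - 3) * A + (4 * s ^ 3 - 18 * s ^ 2 + 22 * s - 6) * B) *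
        (a ^ 2 * (‖y - x‖ ^ 2 + a) ^ (s - 4)) := by
  have hsmooth : ∀ r A B : ℝ, ContDiffAt ℝ (⊤ : ℕ∞)
      (fun z => powLog r A B (‖z - x‖ ^ 2 + a)) y := fun r A B =>
    (contDiff_comp_normSq_sub_add (contDiffOn_powLog r A B) ha x).contDiffAt
  rw [bilap, funext (lap_powLog s A B ha x), lap_add (hsmooth _ _ _) (hsmooth _ _ _),
    lap_powLog _ _ _ ha, lap_powLog _ _ _ ha]
  have hρ : 0 < ‖y - x‖ ^ 2 + a := by positivity
  generalize ‖y - x‖ ^ 2 + a = ρ at hρ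
  have hpow4 : s - 2 - 2 = s - 4 := by ring
  have hpow3 : ρ ^ (s - 1 - 2) = ρ ^ (s - 4) * ρ := by
    rw [← Real.rpow_add_one hρ.ne']
    congr 1
    ring
  have hpow3' : ρ ^ (s - 2 - 1) = ρ ^ (s - 4) * ρ := by
    rw [← hpow3]
    congr 1
    ring
  have hpow2 : ρ ^ (s - 1 - 1) = ρ ^ (s - 4) * ρ * ρ := by
    rw [← hpow3, ← Real.rpow_add_one hρ.ne']
    congr 1
    ring
  simp only [powLog, hpow4, hpow3, hpow3', hpow2, hs]
  linear_combination (16 * ρ ^ (s - 4) * ρ ^ 2 - 32 * ρ * a * ρ ^ (s - 4) * (s - 2) +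
    16 * a ^ 2 * ρ ^ (s - 4) * (s - 2) * (s - 3) * Real.log ρ) * hB

end PowLog

/-- Adding `a > 0` to `|y - x|²` regularizes the fundamental solution, and its bilaplacian is then
an explicit approximate identity. -/
theorem exists_fundSol_regularization (hd : 2 ≤ d) {c : ℝ} (hc : c ≠ 0) :
    ∃ (F : ℝ → ℝ) (κ : ℝ), κ ≠ 0 ∧ ContDiffOn ℝ (⊤ : ℕ∞) F (Ioi 0) ∧
      (∀ y : Euc d, y ≠ 0 → fundSol d c y = F (‖y‖ ^ 2)) ∧
      ∀ a, 0 < a → ∀ x y : Euc d, bilap (fun z => F (‖z - x‖ ^ 2 + a)) y =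
        κ * (a ^ 2 * (‖y - x‖ ^ 2 + a) ^ (-((d : ℝ) + 4) / 2)) := by
  have hpow : ∀ y : Euc d, (‖y‖ ^ 2) ^ ((4 - (d : ℝ)) / 2) = ‖y‖ ^ (4 - (d : ℝ)) := fun y => by
    rw [← Real.rpow_natCast, ← Real.rpow_mul (norm_nonneg y)]
    congr 1
    push_cast
    ring
  have hs : (d : ℝ) = 4 - 2 * ((4 - (d : ℝ)) / 2) := by ring
  have hexp : -((d : ℝ) + 4) / 2 = (4 - (d : ℝ)) / 2 - 4 := by ring
  simp only [hexp]
  by_cases h : d = 2 ∨ d = 4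
  · refine ⟨powLog ((4 - (d : ℝ)) / 2) 0 (c / 2), _, ?_, contDiffOn_powLog _ _ _, fun y _ => ?_,
      fun a ha => bilap_powLog hs ?_ ha⟩
    · rcases h with rfl | rfl <;> norm_num <;> exact hc
    · rw [fundSol, if_pos h, powLog, hpow, Real.log_pow]
      push_cast
      ring
    · rcases h with rfl | rfl <;> norm_num
  · refine ⟨powLog ((4 - (d : ℝ)) / 2) c 0, _, ?_, contDiffOn_powLog _ _ _, fun y _ => ?_,
      fun a ha => bilap_powLog hs (mul_zero _) ha⟩
    · have hd2 : (d : ℝ) ≠ 2 := by exact_mod_cast fun hd' => h (Or.inl hd')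
      have hd4 : (d : ℝ) ≠ 4 := by exact_mod_cast fun hd' => h (Or.inr hd')
      have hd' : (2 : ℝ) ≤ d := by exact_mod_cast hd
      have hs0 : (4 - (d : ℝ)) / 2 ≠ 0 := fun h => hd4 (by linarith)
      have hs1 : (4 - (d : ℝ)) / 2 - 1 ≠ 0 := fun h => hd2 (by linarith)
      have hs2 : (4 - (d : ℝ)) / 2 - 2 ≠ 0 := by linarith
      have hs3 : (4 - (d : ℝ)) / 2 - 3 ≠ 0 := by linarith
      rw [mul_zero, add_zero]
      exact mul_ne_zero (by norm_num) (by simp [hs0, hs1, hs2, hs3, hc])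
    · rw [fundSol, if_neg h, powLog, hpow]
      ring

theorem tendsto_integral_comp_normSq_sub_add_mul {E : Type*} [NormedAddCommGroup E]
    [MeasurableSpace E] [BorelSpace E] {μ : Measure E} [IsFiniteMeasureOnCompacts μ]
    {F : ℝ → ℝ} (hF : ContinuousOn F (Ioi 0)) {f : E → ℝ} (hf : Continuous f)
    (hcf : HasCompactSupport f) {x : E} (hx : f =ᶠ[𝓝 x] fun _ => 0) :
    Tendsto (fun a : ℝ => ∫ y, F (‖y - x‖ ^ 2 + a) * f y ∂μ) (𝓝[>] 0)
      (𝓝 (∫ y, F (‖y - x‖ ^ 2) * f y ∂μ)) := by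
  obtain ⟨r, hr, hball⟩ := Metric.eventually_nhds_iff.1 hx
  obtain ⟨R, hR⟩ := hcf.isCompact.isBounded.subset_closedBall x
  have hle : ∀ y, f y ≠ 0 → r ≤ ‖y - x‖ ∧ ‖y - x‖ ≤ R := fun y hy => by
    rw [← dist_eq_norm]
    exact ⟨not_lt.1 fun hlt => hy (hball hlt), hR (subset_tsupport _ hy)⟩
  obtain ⟨M, hM⟩ := (isCompact_Icc (a := r ^ 2) (b := R ^ 2 + 1)).exists_bound_of_continuousOn
    (hF.mono fun _ hρ => (by positivity : 0 < r ^ 2).trans_le hρ.1)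
  refine tendsto_integral_filter_of_dominated_convergence (fun y => M * ‖f y‖) ?_ ?_
    ((hf.integrable_of_hasCompactSupport hcf).norm.const_mul M) (Eventually.of_forall fun y => ?_)
  · filter_upwards [self_mem_nhdsWithin] with a (ha : 0 < a)
    have hcont : Continuous fun y => F (‖y - x‖ ^ 2 + a) :=
      hF.comp_continuous (by fun_prop) fun y => show 0 < ‖y - x‖ ^ 2 + a by positivity
    exact (hcont.mul hf).aestronglyMeasurable
  · filter_upwards [Ioo_mem_nhdsGT (zero_lt_one' ℝ)] with a ha
    refine Eventually.of_forall fun y => ?_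
    rw [norm_mul]
    by_cases hy : f y = 0
    · simp [hy]
    obtain ⟨hry, hyR⟩ := hle y hy
    have hr2 : r ^ 2 ≤ ‖y - x‖ ^ 2 := by gcongr
    have hR2 : ‖y - x‖ ^ 2 ≤ R ^ 2 := by gcongr
    gcongr
    exact hM _ ⟨by linarith [ha.1], by linarith [ha.2]⟩
  · by_cases hy : f y = 0
    · simp [hy]
    have hpos : 0 < ‖y - x‖ ^ 2 := pow_pos (hr.trans_le (hle y hy).1) 2
    have hadd : Tendsto (fun a : ℝ => ‖y - x‖ ^ 2 + a) (𝓝[>] 0) (𝓝 (‖y - x‖ ^ 2)) :=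
      ((continuous_const_add _).tendsto' 0 _ (add_zero _)).mono_left nhdsWithin_le_nhds
    exact ((hF.continuousAt (Ioi_mem_nhds hpos)).tendsto.comp hadd).mul_const _

theorem tendsto_integral_mul_comp_add_smul {E : Type*} [NormedAddCommGroup E] [NormedSpace ℝ E]
    [MeasurableSpace E] [BorelSpace E] {μ : Measure E} {k v : E → ℝ} (hk : Integrable k μ)
    (hv : Continuous v) {M : ℝ} (hM : ∀ y, ‖v y‖ ≤ M) (x : E) :
    Tendsto (fun ε : ℝ => ∫ z, k z * v (x + ε • z) ∂μ) (𝓝 0) (𝓝 ((∫ z, k z ∂μ) * v x)) := by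
  rw [← integral_mul_const]
  refine tendsto_integral_filter_of_dominated_convergence (fun z => ‖k z‖ * M)
    (Eventually.of_forall fun ε => hk.aestronglyMeasurable.mul
      (hv.comp (by fun_prop)).aestronglyMeasurable)
    (Eventually.of_forall fun ε => Eventually.of_forall fun z => ?_) (hk.norm.mul_const M)
    (Eventually.of_forall fun z => ?_)
  · rw [norm_mul]
    gcongr
    exact hM _
  · exact ((hv.comp (by fun_prop : Continuous fun ε : ℝ => x + ε • z)).tendsto' 0 _
      (by simp)).const_mul _

theorem integral_normSq_sub_add_rpow_mul (v : Euc d → ℝ) (x : Euc d) {ε : ℝ} (hε : 0 < ε) :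
    ∫ y, (ε ^ 2) ^ 2 * (‖y - x‖ ^ 2 + ε ^ 2) ^ (-((d : ℝ) + 4) / 2) * v y =
      ∫ z : Euc d, (1 + ‖z‖ ^ 2) ^ (-((d : ℝ) + 4) / 2) * v (x + ε • z) := by
  set k : Euc d → ℝ := fun w =>
    (ε ^ 2) ^ 2 * (‖w‖ ^ 2 + ε ^ 2) ^ (-((d : ℝ) + 4) / 2) * v (x + w)
  have htrans : ∫ y, (ε ^ 2) ^ 2 * (‖y - x‖ ^ 2 + ε ^ 2) ^ (-((d : ℝ) + 4) / 2) * v y =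
      ∫ w, k w := by
    simp only [k, ← integral_sub_right_eq_self k x, add_sub_cancel]
  have hscale : ∫ w, k w = ε ^ d * ∫ z, k (ε • z) := by
    rw [Measure.integral_comp_smul, finrank_euclideanSpace_fin, abs_of_pos (by positivity),
      smul_eq_mul, ← mul_assoc, mul_inv_cancel₀ (by positivity), one_mul]
  rw [htrans, hscale, ← integral_const_mul]
  congr 1 with z
  have hnorm : ‖ε • z‖ ^ 2 + ε ^ 2 = ε ^ 2 * (1 + ‖z‖ ^ 2) := by
    rw [norm_smul, Real.norm_of_nonneg hε.le]
    ring
  have hpow : (ε ^ 2) ^ (-((d : ℝ) + 4) / 2) = (ε ^ d * ε ^ 4)⁻¹ := by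
    rw [← pow_add, ← Real.rpow_natCast ε 2, ← Real.rpow_natCast ε (d + 4), ← Real.rpow_neg hε.le,
      ← Real.rpow_mul hε.le]
    congr 1
    push_cast
    ring
  simp only [k]
  rw [hnorm, Real.mul_rpow (sq_nonneg ε) (by positivity), hpow]
  field_simp

theorem integrable_one_add_normSq_rpow (d : ℕ) :
    Integrable fun z : Euc d => (1 + ‖z‖ ^ 2) ^ (-((d : ℝ) + 4) / 2) :=
  integrable_rpow_neg_one_add_norm_sq (by simp)

theorem integral_one_add_normSq_rpow_pos (d : ℕ) :
    0 < ∫ z : Euc d, (1 + ‖z‖ ^ 2) ^ (-((d : ℝ) + 4) / 2) :=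
  integral_pos_of_integrable_nonneg_nonzero (x := 0)
    (Continuous.rpow_const (by fun_prop) fun z => Or.inl (by positivity))
    (integrable_one_add_normSq_rpow d) (fun z => by positivity) (by simp)

theorem integral_fundSol_mul_bilap (hd : 2 ≤ d) {c : ℝ} (hc : c ≠ 0) : ∃ c₀ : ℝ, c₀ ≠ 0 ∧
    ∀ (x : Euc d) (v : Euc d → ℝ), ContDiff ℝ (⊤ : ℕ∞) v → HasCompactSupport v →
      (bilap v =ᶠ[𝓝 x] fun _ => 0) →
      ∫ y, fundSol d c (y - x) * bilap v y = c₀ * v x := by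
  obtain ⟨F, κ, hκ, hF, hfund, hbilap⟩ := exists_fundSol_regularization hd hc
  refine ⟨κ * ∫ z : Euc d, (1 + ‖z‖ ^ 2) ^ (-((d : ℝ) + 4) / 2),
    mul_ne_zero hκ (integral_one_add_normSq_rpow_pos d).ne', fun x v hv hcv hx => ?_⟩
  have hsq : Tendsto (fun ε : ℝ => ε ^ 2) (𝓝[>] 0) (𝓝[>] 0) :=
    tendsto_nhdsWithin_iff.2 ⟨((continuous_pow 2).tendsto' 0 0 (by simp)).mono_left
      nhdsWithin_le_nhds, by
        filter_upwards [self_mem_nhdsWithin] with ε (hε : 0 < ε) using pow_pos hε 2⟩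
  have hregular : ∀ ε : ℝ, 0 < ε → ∫ y, F (‖y - x‖ ^ 2 + ε ^ 2) * bilap v y =
      κ * ∫ z : Euc d, (1 + ‖z‖ ^ 2) ^ (-((d : ℝ) + 4) / 2) * v (x + ε • z) := fun ε hε => by
    have hε2 : 0 < ε ^ 2 := by positivity
    rw [integral_mul_bilap (contDiff_comp_normSq_sub_add hF hε2 x) hv hcv,
      ← integral_normSq_sub_add_rpow_mul v x hε, ← integral_const_mul]
    simp only [hbilap _ hε2, mul_assoc]
  have hlim := (tendsto_integral_comp_normSq_sub_add_mul (μ := volume) hF.continuousOn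
    (contDiff_lap (contDiff_lap hv)).continuous
    (hasCompactSupport_lap (hasCompactSupport_lap hcv)) hx).comp hsq
  obtain ⟨M, hM⟩ := hv.continuous.bounded_above_of_compact_support hcv
  have hlim' := ((tendsto_integral_mul_comp_add_smul (integrable_one_add_normSq_rpow d)
    hv.continuous hM x).const_mul κ).mono_left (nhdsWithin_le_nhds (s := Ioi (0 : ℝ)))
  have hsame : ∫ y, fundSol d c (y - x) * bilap v y = ∫ y, F (‖y - x‖ ^ 2) * bilap v y := by
    congr 1 with y
    rcases eq_or_ne y x with rfl | hy
    · simp [hx.eq_of_nhds]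
    · rw [hfund _ (sub_ne_zero.2 hy)]
  rw [hsame, mul_assoc]
  refine tendsto_nhds_unique hlim (hlim'.congr' ?_)
  filter_upwards [self_mem_nhdsWithin] with ε hε using (hregular ε hε).symm
/-! ### Boundary charts -/

/-- The boundary of `Ω` is locally the graph of a Lipschitz function, up to a rigid motion, with
`Ω` on the upper side. Boundedness and connectedness of `Ω` are not part of the notion. -/
def HasLipschitzBoundary (Ω : Set (Euc d)) : Prop :=
  ∀ Q ∈ frontier Ω, ∃ U : Set (Euc d), IsOpen U ∧ Q ∈ U ∧
    ∃ (R : Euc d ≃ᵢ Euc d) (M : ℝ≥0) (η : Euc (d - 1) → ℝ), LipschitzWith M η ∧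
      U ∩ Ω = U ∩ (R ⁻¹' {x | η (graphCoord d x) < vertCoord d x}) ∧
      U ∩ frontier Ω = U ∩ (R ⁻¹' {x | vertCoord d x = η (graphCoord d x)})

theorem IsLipschitzDomain.hasLipschitzBoundary {Ω : Set (Euc d)} (hΩ : IsLipschitzDomain Ω) :
    HasLipschitzBoundary Ω := by
  obtain ⟨-, -, -, N, U, hU, hcov, hloc⟩ := hΩ
  intro Q hQ
  obtain ⟨i, hi⟩ := mem_iUnion.1 (hcov hQ)
  exact ⟨U i, hU i, hi, hloc i⟩

section GraphPoint

variable {n : ℕ}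

/-- The point of `ℝ^(n+1)` with horizontal coordinates `x` and vertical coordinate `s`. -/
def graphPoint (x : Euc n) (s : ℝ) : Euc (n + 1) := WithLp.toLp 2 (Fin.snoc x.ofLp s)

@[simp]
theorem graphPoint_castSucc (x : Euc n) (s : ℝ) (i : Fin n) : graphPoint x s i.castSucc = x i :=
  Fin.snoc_castSucc (α := fun _ => ℝ) s x.ofLp i

@[simp]
theorem graphPoint_last (x : Euc n) (s : ℝ) : graphPoint x s (Fin.last n) = s :=
  Fin.snoc_last (α := fun _ => ℝ) s x.ofLp

theorem vertCoord_succ (y : Euc (n + 1)) : vertCoord (n + 1) y = y (Fin.last n) := by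
  simp only [vertCoord, Nat.succ_pos, dite_true]
  rfl

theorem graphPoint_graphCoord (y : Euc (n + 1)) :
    graphPoint (graphCoord (n + 1) y) (vertCoord (n + 1) y) = y := by
  ext i
  refine Fin.lastCases ?_ (fun j => graphPoint_castSucc _ _ j) i
  rw [graphPoint_last, vertCoord_succ]
  rfl

theorem graphCoord_graphPoint (x : Euc n) (s : ℝ) : graphCoord (n + 1) (graphPoint x s) = x := by
  ext i
  exact graphPoint_castSucc x s i

theorem vertCoord_graphPoint (x : Euc n) (s : ℝ) : vertCoord (n + 1) (graphPoint x s) = s := by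
  rw [vertCoord_succ, graphPoint_last]

theorem norm_sq_graphPoint (x : Euc n) (s : ℝ) : ‖graphPoint x s‖ ^ 2 = ‖x‖ ^ 2 + s ^ 2 := by
  simp [EuclideanSpace.norm_sq_eq, Fin.sum_univ_castSucc]

theorem norm_graphPoint_le (x : Euc n) (s : ℝ) : ‖graphPoint x s‖ ≤ ‖x‖ + |s| := by
  refine le_of_sq_le_sq ?_ (by positivity)
  rw [norm_sq_graphPoint, ← sq_abs s]
  nlinarith [mul_nonneg (norm_nonneg x) (abs_nonneg s)]

theorem graphPoint_sub (x x' : Euc n) (s s' : ℝ) :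
    graphPoint x s - graphPoint x' s' = graphPoint (x - x') (s - s') := by
  ext i
  refine Fin.lastCases ?_ (fun j => ?_) i <;> simp

theorem graphPoint_add_right (x : Euc n) (s t : ℝ) :
    graphPoint x (s + t) = t • graphPoint 0 1 + graphPoint x s := by
  ext i
  refine Fin.lastCases ?_ (fun j => ?_) i <;> simp [add_comm]

theorem lipschitzWith_graphCoord (n : ℕ) : LipschitzWith 1 (graphCoord (n + 1)) := by
  refine LipschitzWith.of_dist_le_mul fun y z => ?_
  rw [NNReal.coe_one, one_mul, dist_eq_norm y z]
  conv_rhs => rw [← graphPoint_graphCoord y, ← graphPoint_graphCoord z, graphPoint_sub]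
  refine le_of_sq_le_sq ?_ (norm_nonneg _)
  rw [norm_sq_graphPoint, ← dist_eq_norm]
  exact le_add_of_nonneg_right (sq_nonneg _)

theorem lipschitzWith_vertCoord (n : ℕ) : LipschitzWith 1 (vertCoord (n + 1)) := by
  refine LipschitzWith.of_dist_le_mul fun y z => ?_
  rw [NNReal.coe_one, one_mul, vertCoord_succ, vertCoord_succ, dist_eq_norm y]
  exact PiLp.norm_apply_le (y - z) (Fin.last n)

theorem differentiable_graphCoord (n : ℕ) : Differentiable ℝ (graphCoord (n + 1)) := by
  intro y
  rw [differentiableAt_euclidean]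
  exact fun i => (EuclideanSpace.proj (𝕜 := ℝ) (i : Fin n).castSucc).differentiableAt

theorem differentiable_vertCoord (n : ℕ) : Differentiable ℝ (vertCoord (n + 1)) := by
  rw [funext vertCoord_succ]
  exact (EuclideanSpace.proj (𝕜 := ℝ) (Fin.last n)).differentiable

theorem measurePreserving_graphPoint (n : ℕ) :
    MeasurePreserving (fun z : Euc n × ℝ => graphPoint z.1 z.2) (volume.prod volume) volume := by
  have hsnoc := (volume_preserving_piFinSuccAbove (fun _ : Fin (n + 1) => ℝ) (Fin.last n)).symm
  have hofLp : MeasurePreserving (Prod.map id (WithLp.ofLp : Euc n → (Fin n → ℝ)))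
      ((volume : Measure ℝ).prod volume) (volume.prod volume) :=
    (MeasurePreserving.id _).prod (PiLp.volume_preserving_ofLp (Fin n))
  have hswap : MeasurePreserving (Prod.swap : Euc n × ℝ → ℝ × Euc n)
    (volume.prod volume) (volume.prod volume) := Measure.measurePreserving_swap
  have hcomp : (fun z : Euc n × ℝ => graphPoint z.1 z.2) = fun z =>
      WithLp.toLp 2 (Fin.insertNth (α := fun _ => ℝ) (Fin.last n) z.2 z.1.ofLp) :=
    funext fun z => congrArg _ (Fin.insertNth_last' z.2 z.1.ofLp).symm
  rw [hcomp]
  exact (PiLp.volume_preserving_toLp (Fin (n + 1))).comp (hsnoc.comp (hofLp.comp hswap))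

theorem measurePreserving_shear {η : Euc n → ℝ} (hη : Continuous η) :
    MeasurePreserving (fun z : Euc n × ℝ => (z.1, η z.1 + z.2)) (volume.prod volume)
      (volume.prod volume) := by
  refine MeasurePreserving.skew_product (MeasurePreserving.id _) (g := fun x t => η x + t) ?_ ?_
  · exact (by fun_prop : Continuous fun z : Euc n × ℝ => η z.1 + z.2).measurable
  · exact Eventually.of_forall fun x => (measurePreserving_add_left volume (η x)).map_eq

end GraphPoint

theorem measurePreserving_affineIsometryEquiv {E : Type*} [NormedAddCommGroup E]
    [InnerProductSpace ℝ E] [FiniteDimensional ℝ E] [MeasurableSpace E] [BorelSpace E]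
    (e : E ≃ᵃⁱ[ℝ] E) : MeasurePreserving e := by
  have h : ⇑e = (· + e 0) ∘ e.linearIsometryEquiv := by
    funext y
    simpa using e.map_vadd 0 y
  rw [h]
  exact (measurePreserving_add_right volume _).comp e.linearIsometryEquiv.measurePreserving

/-- A Lipschitz graph in `ℝ^(n+1)`, placed by a rigid motion. It gives rise to global coordinates
`(x, t)` flattening the graph: `psi` is the parametrization, `proj` and `ht` are the coordinates,
and the graph is `ht = 0`. -/
structure GraphChart (n : ℕ) where
  /-- maps the graph as placed in space onto the graph over the horizontal hyperplane -/
  motion : Euc (n + 1) ≃ᵃⁱ[ℝ] Euc (n + 1)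
  graph : Euc n → ℝ
  slope : ℝ≥0
  lipschitzWith_graph : LipschitzWith slope graph

namespace GraphChart

variable {n : ℕ} (c : GraphChart n)

/-- The horizontal coordinates. -/
def proj (y : Euc (n + 1)) : Euc n := graphCoord (n + 1) (c.motion y)

/-- The height above the graph, measured in the vertical direction of the chart. -/
def ht (y : Euc (n + 1)) : ℝ := vertCoord (n + 1) (c.motion y) - c.graph (c.proj y)

/-- The point at height `t` above the point of the graph over `x`. -/
def psi (x : Euc n) (t : ℝ) : Euc (n + 1) := c.motion.symm (graphPoint x (c.graph x + t))

/-- The vertical unit vector of the chart. -/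
def vert : Euc (n + 1) := c.motion.symm.linearIsometryEquiv (graphPoint 0 1)

/-- A Lipschitz constant for the coordinates and the parametrization of the graph. -/
def K : ℝ≥0 := 1 + c.slope

theorem one_le_K : (1 : ℝ) ≤ c.K := by
  simp [K]

theorem psi_proj_ht (y : Euc (n + 1)) : c.psi (c.proj y) (c.ht y) = y := by
  rw [psi, ht, add_sub_cancel, proj, graphPoint_graphCoord, c.motion.symm_apply_apply]

theorem proj_psi (x : Euc n) (t : ℝ) : c.proj (c.psi x t) = x := by
  rw [proj, psi, c.motion.apply_symm_apply, graphCoord_graphPoint]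

theorem ht_psi (x : Euc n) (t : ℝ) : c.ht (c.psi x t) = t := by
  rw [ht, proj_psi, psi, c.motion.apply_symm_apply, vertCoord_graphPoint, add_sub_cancel_left]

theorem psi_proj_of_ht_eq_zero {y : Euc (n + 1)} (hy : c.ht y = 0) : c.psi (c.proj y) 0 = y := by
  simpa only [hy] using c.psi_proj_ht y

theorem psi_eq (x : Euc n) (t : ℝ) : c.psi x t = c.psi x 0 + t • c.vert := by
  simp only [psi, graphPoint_add_right, add_zero, vert]
  rw [add_comm (c.motion.symm _), ← map_smul]
  exact c.motion.symm.map_vadd _ _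

theorem norm_vert : ‖c.vert‖ = 1 := by
  rw [vert, LinearIsometryEquiv.norm_map, ← pow_eq_one_iff_of_nonneg (norm_nonneg _) two_ne_zero,
    norm_sq_graphPoint]
  norm_num

theorem lipschitzWith_proj : LipschitzWith 1 c.proj := by
  have := (lipschitzWith_graphCoord n).comp c.motion.lipschitz
  rwa [one_mul] at this

theorem lipschitzWith_ht : LipschitzWith c.K c.ht := by
  have := ((lipschitzWith_vertCoord n).comp c.motion.lipschitz).sub
    (c.lipschitzWith_graph.comp c.lipschitzWith_proj)
  rwa [one_mul, mul_one] at this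

theorem lipschitzWith_psi_zero : LipschitzWith c.K fun x => c.psi x 0 := by
  refine LipschitzWith.of_dist_le_mul fun x z => ?_
  simp only [psi, add_zero, c.motion.symm.dist_map]
  rw [dist_eq_norm, graphPoint_sub]
  refine (norm_graphPoint_le _ _).trans ?_
  have := c.lipschitzWith_graph.dist_le_mul x z
  rw [Real.dist_eq] at this
  rw [← dist_eq_norm, K, NNReal.coe_add, NNReal.coe_one, add_mul, one_mul]
  gcongr

theorem measurePreserving_psi :
    MeasurePreserving (fun z : Euc n × ℝ => c.psi z.1 z.2) (volume.prod volume) volume :=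
  (measurePreserving_affineIsometryEquiv c.motion.symm).comp
    ((measurePreserving_graphPoint n).comp
      (measurePreserving_shear c.lipschitzWith_graph.continuous))

theorem ae_differentiableAt_ht : ∀ᵐ x, DifferentiableAt ℝ c.ht (c.psi x 0) := by
  filter_upwards [c.lipschitzWith_graph.ae_differentiableAt (μ := volume)] with x hx
  have hmotion : Differentiable ℝ c.motion :=
    c.motion.toContinuousAffineEquiv.toContinuousAffineMap.contDiff.differentiable one_ne_zero
  refine ((differentiable_vertCoord n).comp hmotion _).fun_sub
    (DifferentiableAt.comp (g := c.graph) _ ?_ ((differentiable_graphCoord n).comp hmotion _))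
  rwa [← c.proj_psi x 0] at hx

theorem dist_proj_le (y z : Euc (n + 1)) : dist (c.proj y) (c.proj z) ≤ dist y z := by
  simpa using c.lipschitzWith_proj.dist_le_mul y z

theorem abs_ht_sub_le (y z : Euc (n + 1)) : |c.ht y - c.ht z| ≤ c.K * dist y z :=
  c.lipschitzWith_ht.dist_le_mul y z

theorem continuous_psi : Continuous fun z : Euc n × ℝ => c.psi z.1 z.2 := by
  rw [funext fun z : Euc n × ℝ => c.psi_eq z.1 z.2]
  exact (c.lipschitzWith_psi_zero.continuous.comp continuous_fst).add
    (continuous_snd.smul continuous_const)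

theorem dist_psi_le (x z : Euc n) (t s : ℝ) :
    dist (c.psi x t) (c.psi z s) ≤ c.K * dist x z + |t - s| := by
  rw [c.psi_eq x t, c.psi_eq z s]
  refine (dist_add_add_le _ _ _ _).trans
    (add_le_add (c.lipschitzWith_psi_zero.dist_le_mul x z) (le_of_eq ?_))
  rw [dist_eq_norm, ← sub_smul, norm_smul, c.norm_vert, mul_one, Real.norm_eq_abs]

/-- The part of the coordinate box of height `τ` lying over the ball `B(x₀, r)`. -/
def box (x₀ : Euc n) (r τ : ℝ) : Set (Euc (n + 1)) :=
  {y | c.proj y ∈ ball x₀ r ∧ c.ht y ∈ Ioo 0 τ}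

theorem isOpen_box (x₀ : Euc n) (r τ : ℝ) : IsOpen (c.box x₀ r τ) :=
  (isOpen_ball.preimage c.lipschitzWith_proj.continuous).inter
    (isOpen_Ioo.preimage c.lipschitzWith_ht.continuous)

theorem psi_mem_box {x₀ x : Euc n} {r τ t : ℝ} :
    c.psi x t ∈ c.box x₀ r τ ↔ x ∈ ball x₀ r ∧ t ∈ Ioo 0 τ := by
  simp only [box, mem_ofPred_eq, c.proj_psi, c.ht_psi]

theorem setLIntegral_box {x₀ : Euc n} {r τ : ℝ} {F : Euc (n + 1) → ℝ≥0∞}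
    (hF : AEMeasurable F (volume.restrict (c.box x₀ r τ))) :
    ∫⁻ y in c.box x₀ r τ, F y = ∫⁻ t in Ioo 0 τ, ∫⁻ x in ball x₀ r, F (c.psi x t) := by
  have hpre : (fun z : Euc n × ℝ => c.psi z.1 z.2) ⁻¹' c.box x₀ r τ = ball x₀ r ×ˢ Ioo 0 τ :=
    Set.ext fun z => c.psi_mem_box
  have hψ := c.measurePreserving_psi.restrict_preimage (c.isOpen_box x₀ r τ).measurableSet
  rw [hpre, ← Measure.prod_restrict] at hψ
  rw [← hψ.map_eq] at hF ⊢
  rw [lintegral_map' hF hψ.measurable.aemeasurable]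
  exact lintegral_prod_symm _ (hF.comp_measurable hψ.measurable)

/-- The chart `c` flattens the boundary of `Ω` in a ball about `Q₀`; `r` is the scale of the
coordinate box in which the chart is used. -/
structure Fits (Ω : Set (Euc (n + 1))) (Q₀ : Euc (n + 1)) (r : ℝ) : Prop where
  r_pos : 0 < r
  mem_frontier : Q₀ ∈ frontier Ω
  mem_iff : ∀ y ∈ ball Q₀ (4 * c.K * (c.K + 1) * r), (y ∈ Ω ↔ 0 < c.ht y)
  mem_frontier_iff : ∀ y ∈ ball Q₀ (4 * c.K * (c.K + 1) * r), (y ∈ frontier Ω ↔ c.ht y = 0)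

end GraphChart

theorem HasLipschitzBoundary.exists_fits {n : ℕ} {Ω : Set (Euc (n + 1))}
    (hΩ : HasLipschitzBoundary Ω) {Q₀ : Euc (n + 1)} (hQ : Q₀ ∈ frontier Ω) :
    ∃ (c : GraphChart n) (r : ℝ), c.Fits Ω Q₀ r := by
  obtain ⟨U, hU, hQU, R, M, η, hη, hin, hbd⟩ := hΩ Q₀ hQ
  let c : GraphChart n := ⟨R.toRealAffineIsometryEquiv, η, M, hη⟩
  obtain ⟨ε, hε, hball⟩ := Metric.isOpen_iff.1 hU Q₀ hQU
  have hK := c.one_le_K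
  have hrad : 4 * (c.K : ℝ) * (c.K + 1) * (ε / (4 * c.K * (c.K + 1))) = ε := by
    field_simp
  refine ⟨c, ε / (4 * c.K * (c.K + 1)), by positivity, hQ, fun y hy => ?_, fun y hy => ?_⟩
  · have h := Set.ext_iff.1 hin y
    simp only [mem_inter_iff, hball (hrad ▸ hy), true_and, mem_preimage, mem_ofPred_eq] at h
    exact h.trans sub_pos.symm
  · have h := Set.ext_iff.1 hbd y
    simp only [mem_inter_iff, hball (hrad ▸ hy), true_and, mem_preimage, mem_ofPred_eq] at h
    exact h.trans sub_eq_zero.symm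

namespace GraphChart.Fits

variable {n : ℕ} {c : GraphChart n} {Ω : Set (Euc (n + 1))} {Q₀ : Euc (n + 1)} {r : ℝ}

theorem mem_ball_of_le (h : c.Fits Ω Q₀ r) {y : Euc (n + 1)} {a : ℝ} (hy : dist y Q₀ < a * r)
    (ha : a ≤ 4 * c.K * (c.K + 1)) : y ∈ ball Q₀ (4 * c.K * (c.K + 1) * r) :=
  mem_ball.2 (hy.trans_le (mul_le_mul_of_nonneg_right ha h.r_pos.le))

theorem psi_center (h : c.Fits Ω Q₀ r) : c.psi (c.proj Q₀) 0 = Q₀ := by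
  have hK := c.one_le_K
  have hr := h.r_pos
  exact c.psi_proj_of_ht_eq_zero
    ((h.mem_frontier_iff Q₀ (mem_ball_self (by positivity))).1 h.mem_frontier)

theorem dist_psi_center_le (h : c.Fits Ω Q₀ r) (x : Euc n) (t : ℝ) :
    dist (c.psi x t) Q₀ ≤ c.K * dist x (c.proj Q₀) + |t| := by
  have := c.dist_psi_le x (c.proj Q₀) t 0
  rwa [h.psi_center, sub_zero] at this

theorem psi_mem_frontier (h : c.Fits Ω Q₀ r) {z : Euc n} (hz : z ∈ ball (c.proj Q₀) (3 * r)) :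
    c.psi z 0 ∈ frontier Ω := by
  have hK := c.one_le_K
  rw [h.mem_frontier_iff _ (h.mem_ball_of_le (a := 4 * c.K) _ (by nlinarith)), c.ht_psi]
  have := h.dist_psi_center_le z 0
  rw [abs_zero, add_zero] at this
  nlinarith [h.r_pos, mem_ball.1 hz]

theorem dist_lt_of_mem_box (h : c.Fits Ω Q₀ r) {y : Euc (n + 1)}
    (hy : y ∈ c.box (c.proj Q₀) r r) : dist y Q₀ < (c.K + 1) * r := by
  have := h.dist_psi_center_le (c.proj y) (c.ht y)
  rw [c.psi_proj_ht, abs_of_pos hy.2.1] at this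
  nlinarith [c.one_le_K, mem_ball.1 hy.1, hy.2.2]

theorem mem_of_mem_box (h : c.Fits Ω Q₀ r) {y : Euc (n + 1)}
    (hy : y ∈ c.box (c.proj Q₀) r r) : y ∈ Ω := by
  rw [h.mem_iff y (h.mem_ball_of_le (h.dist_lt_of_mem_box hy) (by nlinarith [c.one_le_K]))]
  exact hy.2.1

theorem exists_infDist_eq_dist_psi (h : c.Fits Ω Q₀ r) {y : Euc (n + 1)}
    (hy : dist y Q₀ < (c.K + 1) * r) :
    ∃ z, c.psi z 0 ∈ frontier Ω ∧ infDist y (frontier Ω) = dist y (c.psi z 0) := by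
  obtain ⟨P, hP, hd⟩ := isClosed_frontier.exists_infDist_eq_dist ⟨Q₀, h.mem_frontier⟩ y
  have hPQ : dist P Q₀ < 2 * (c.K + 1) * r := by
    linarith [dist_triangle_left P Q₀ y, infDist_le_dist_of_mem (x := y) h.mem_frontier]
  have hP0 : c.ht P = 0 :=
    (h.mem_frontier_iff P (h.mem_ball_of_le hPQ (by nlinarith [c.one_le_K]))).1 hP
  rw [← c.psi_proj_of_ht_eq_zero hP0] at hP hd
  exact ⟨c.proj P, hP, hd⟩

theorem abs_ht_le (h : c.Fits Ω Q₀ r) {y : Euc (n + 1)} (hy : dist y Q₀ < (c.K + 1) * r) :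
    |c.ht y| ≤ c.K * infDist y (frontier Ω) := by
  obtain ⟨z, -, hd⟩ := h.exists_infDist_eq_dist_psi hy
  simpa only [c.ht_psi, sub_zero, ← hd] using c.abs_ht_sub_le y (c.psi z 0)

theorem infDist_le_ht (h : c.Fits Ω Q₀ r) {y : Euc (n + 1)}
    (hy : y ∈ c.box (c.proj Q₀) r r) : infDist y (frontier Ω) ≤ c.ht y := by
  have hfoot : c.psi (c.proj y) 0 ∈ frontier Ω :=
    h.psi_mem_frontier (ball_subset_ball (by linarith [h.r_pos]) hy.1)
  have := c.dist_psi_le (c.proj y) (c.proj y) (c.ht y) 0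
  rw [c.psi_proj_ht, dist_self, mul_zero, zero_add, sub_zero, abs_of_pos hy.2.1] at this
  exact (infDist_le_dist_of_mem hfoot).trans this

/-- The points `c.psi z 0` are vertices of nontangential cones containing `c.psi x t`, so averaging
over `z` bounds values at `c.psi x t` by the nontangential maximal function. -/
theorem exists_shadow (h : c.Fits Ω Q₀ r) {x : Euc n} (hx : x ∈ ball (c.proj Q₀) r) {t : ℝ}
    (ht : t ∈ Ioo 0 r) : ∃ z₀ : Euc n, ball z₀ (t / c.K ^ 2) ⊆ ball x (2 * t) ∧
      ∀ z ∈ ball z₀ (t / c.K ^ 2), c.psi z 0 ∈ frontier Ω ∧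
        dist (c.psi x t) (c.psi z 0) < 2 * infDist (c.psi x t) (frontier Ω) := by
  have hK := c.one_le_K
  have hbox : c.psi x t ∈ c.box (c.proj Q₀) r r := c.psi_mem_box.2 ⟨hx, ht⟩
  have hlow := h.abs_ht_le (h.dist_lt_of_mem_box hbox)
  have hup := h.infDist_le_ht hbox
  obtain ⟨z₀, -, hd⟩ := h.exists_infDist_eq_dist_psi (h.dist_lt_of_mem_box hbox)
  rw [c.ht_psi, abs_of_pos ht.1] at hlow
  rw [c.ht_psi] at hup
  have hz₀x : dist z₀ x ≤ t := by
    have := c.dist_proj_le (c.psi x t) (c.psi z₀ 0)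
    rw [c.proj_psi, c.proj_psi, ← hd] at this
    exact dist_comm x z₀ ▸ this.trans hup
  have hsub : ball z₀ (t / c.K ^ 2) ⊆ ball x (2 * t) :=
    ball_subset_ball' (by linarith [div_le_self ht.1.le (one_le_pow₀ hK : 1 ≤ (c.K : ℝ) ^ 2)])
  refine ⟨z₀, hsub, fun z hz => ⟨h.psi_mem_frontier (mem_ball.2 ?_), ?_⟩⟩
  · linarith [dist_triangle z x (c.proj Q₀), mem_ball.1 (hsub hz), mem_ball.1 hx, ht.2]
  · calc dist (c.psi x t) (c.psi z 0)
        ≤ dist (c.psi x t) (c.psi z₀ 0) + dist (c.psi z₀ 0) (c.psi z 0) := dist_triangle _ _ _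
      _ ≤ infDist (c.psi x t) (frontier Ω) + c.K * dist z₀ z := by
          simpa [hd] using c.dist_psi_le z₀ z 0 0
      _ < infDist (c.psi x t) (frontier Ω) + c.K * (t / c.K ^ 2) := by
          gcongr
          exact mem_ball'.1 hz
      _ = infDist (c.psi x t) (frontier Ω) + t / c.K := by field_simp
      _ ≤ infDist (c.psi x t) (frontier Ω) + infDist (c.psi x t) (frontier Ω) := by
          gcongr
          rwa [div_le_iff₀' (by positivity)]
      _ = 2 * infDist (c.psi x t) (frontier Ω) := (two_mul _).symm

end GraphChart.Fits
/-! ### Integrals over coordinate boxes -/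

theorem setLIntegral_le_of_forall_exists_ball {E : Type*} [NormedAddCommGroup E]
    [NormedSpace ℝ E] [FiniteDimensional ℝ E] [MeasurableSpace E] [BorelSpace E] (μ : Measure E)
    [μ.IsAddHaarMeasure] {A B : Set E} (hA : MeasurableSet A) {f g : E → ℝ≥0∞} (hg : Measurable g)
    {ρ R : ℝ} (hρ : 0 < ρ) (hR : 0 < R)
    (hfg : ∀ x ∈ A, ∃ z₀, ball z₀ ρ ⊆ ball x R ∩ B ∧ ∀ z ∈ ball z₀ ρ, f x ≤ g z) :
    ∫⁻ x in A, f x ∂μ ≤ ENNReal.ofReal ((R / ρ) ^ Module.finrank ℝ E) * ∫⁻ z in B, g z ∂μ := by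
  set k : E → E → ℝ≥0∞ := fun x => (ball x R).indicator g
  have hk : Measurable (Function.uncurry k) := by
    have : Function.uncurry k = {z : E × E | dist z.2 z.1 < R}.indicator (g ∘ Prod.snd) := rfl
    rw [this]
    exact (hg.comp measurable_snd).indicator
      (measurableSet_lt (measurable_snd.dist measurable_fst) measurable_const)
  have hV0 : μ (ball 0 ρ) ≠ 0 := (measure_ball_pos μ _ hρ).ne'
  have hVt : μ (ball 0 ρ) ≠ ⊤ := measure_ball_lt_top.ne
  refine (ENNReal.mul_le_mul_iff_right hV0 hVt).1 ?_
  calc μ (ball 0 ρ) * ∫⁻ x in A, f x ∂μ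
      = ∫⁻ x in A, μ (ball 0 ρ) * f x ∂μ := (lintegral_const_mul' _ _ hVt).symm
    _ ≤ ∫⁻ x in A, ∫⁻ z in B, k x z ∂μ ∂μ := by
        refine setLIntegral_mono' hA fun x hx => ?_
        obtain ⟨z₀, hsub, hz₀⟩ := hfg x hx
        calc μ (ball 0 ρ) * f x = ∫⁻ _ in ball z₀ ρ, f x ∂μ := by
              rw [setLIntegral_const, Measure.addHaar_ball_center μ z₀, mul_comm]
          _ ≤ ∫⁻ z in ball z₀ ρ, k x z ∂μ :=
              setLIntegral_mono' measurableSet_ball fun z hz => by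
                simpa only [k, indicator_of_mem (hsub hz).1] using hz₀ z hz
          _ ≤ ∫⁻ z in B, k x z ∂μ := lintegral_mono_set (hsub.trans inter_subset_right)
    _ = ∫⁻ z in B, ∫⁻ x in A, k x z ∂μ ∂μ := lintegral_lintegral_swap hk.aemeasurable
    _ ≤ ∫⁻ z in B, μ (ball 0 R) * g z ∂μ := by
        refine lintegral_mono fun z => (setLIntegral_le_lintegral _ _).trans_eq ?_
        have : (fun x => k x z) = (ball z R).indicator fun _ => g z := by
          funext x
          simp only [k, indicator, mem_ball, dist_comm z x]
        rw [this, lintegral_indicator_const measurableSet_ball, Measure.addHaar_ball_center μ z,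
          mul_comm]
    _ = μ (ball 0 ρ) * (ENNReal.ofReal ((R / ρ) ^ Module.finrank ℝ E) * ∫⁻ z in B, g z ∂μ) := by
        rw [lintegral_const_mul' _ _ measure_ball_lt_top.ne, ← div_mul_cancel₀ R hρ.ne',
          Measure.addHaar_ball_mul_of_pos μ 0 (by positivity), div_mul_cancel₀ R hρ.ne']
        ring

namespace GraphChart

variable {n : ℕ} {c : GraphChart n} {Ω : Set (Euc (n + 1))} {Q₀ : Euc (n + 1)} {r : ℝ}

theorem Fits.setLIntegral_slice_le (h : c.Fits Ω Q₀ r) {F N : Euc (n + 1) → ℝ≥0∞}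
    (hN : Measurable N) {t : ℝ} (ht : t ∈ Ioo 0 r)
    (hFN : ∀ y ∈ Ω, infDist y (frontier Ω) ≤ t → ∀ Q ∈ frontier Ω,
      dist y Q < 2 * infDist y (frontier Ω) → F y ≤ N Q) :
    ∫⁻ x in ball (c.proj Q₀) r, F (c.psi x t) ≤
      ENNReal.ofReal ((2 * c.K ^ 2) ^ n) * ∫⁻ z in ball (c.proj Q₀) (3 * r), N (c.psi z 0) := by
  have hK := c.one_le_K
  have ht0 := ht.1
  have hmain := setLIntegral_le_of_forall_exists_ball volume measurableSet_ball
    (A := ball (c.proj Q₀) r) (B := ball (c.proj Q₀) (3 * r)) (f := fun x => F (c.psi x t))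
    (hN.comp c.lipschitzWith_psi_zero.continuous.measurable) (ρ := t / c.K ^ 2) (R := 2 * t)
    (by positivity) (by positivity) fun x hx => ?_
  · rwa [finrank_euclideanSpace_fin,
      show 2 * t / (t / (c.K : ℝ) ^ 2) = 2 * c.K ^ 2 by field_simp] at hmain
  · have hbox : c.psi x t ∈ c.box (c.proj Q₀) r r := c.psi_mem_box.2 ⟨hx, ht⟩
    obtain ⟨z₀, hsub, hz⟩ := h.exists_shadow hx ht
    refine ⟨z₀, subset_inter hsub (hsub.trans (ball_subset_ball' ?_)), fun z hzb => ?_⟩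
    · linarith [mem_ball.1 hx, ht.2]
    · exact hFN _ (h.mem_of_mem_box hbox) ((h.infDist_le_ht hbox).trans_eq (c.ht_psi x t)) _
        (hz z hzb).1 (hz z hzb).2

/-- The part over the ball `B(x₀, r)` of the graph, with the measure carried over from Lebesgue
measure by the parametrization of the graph. -/
def graphMeasure (c : GraphChart n) (x₀ : Euc n) (r : ℝ) : Measure (Euc (n + 1)) :=
  (volume.restrict (ball x₀ r)).map fun x => c.psi x 0

instance (x₀ : Euc n) (r : ℝ) : IsFiniteMeasure (c.graphMeasure x₀ r) := by
  have : IsFiniteMeasure ((volume : Measure (Euc n)).restrict (ball x₀ r)) :=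
    isFiniteMeasure_restrict.2 measure_ball_lt_top.ne
  exact Measure.isFiniteMeasure_map _ _

theorem lintegral_graphMeasure {N : Euc (n + 1) → ℝ≥0∞} (hN : Measurable N) (x₀ : Euc n) (r : ℝ) :
    ∫⁻ Q, N Q ∂(c.graphMeasure x₀ r) = ∫⁻ x in ball x₀ r, N (c.psi x 0) :=
  lintegral_map hN c.lipschitzWith_psi_zero.continuous.measurable

-- The projection is `1`-Lipschitz, hence does not increase Hausdorff measure.
theorem Fits.exists_graphMeasure_le (h : c.Fits Ω Q₀ r) : ∃ C : ℝ≥0,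
    c.graphMeasure (c.proj Q₀) (3 * r) ≤ (C : ℝ≥0∞) • sMeasure Ω := by
  have hH : (μH[(n : ℝ)] : Measure (Euc n)).IsAddHaarMeasure := by
    simpa using MeasureTheory.isAddHaarMeasure_hausdorffMeasure (E := EuclideanSpace ℝ (Fin n))
  set C := Measure.addHaarScalarFactor (volume : Measure (Euc n)) μH[(n : ℝ)]
  have hvol : (volume : Measure (Euc n)) = C • μH[(n : ℝ)] :=
    Measure.isAddLeftInvariant_eq_smul _ _
  refine ⟨C, Measure.le_iff.2 fun s hs => ?_⟩
  have hpsi := c.lipschitzWith_psi_zero.continuous.measurable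
  have hsub : (fun x => c.psi x 0) ⁻¹' s ∩ ball (c.proj Q₀) (3 * r) ⊆
      c.proj '' (s ∩ frontier Ω) := fun x hx =>
    ⟨c.psi x 0, ⟨hx.1, h.psi_mem_frontier hx.2⟩, c.proj_psi x 0⟩
  have hproj := c.lipschitzWith_proj.hausdorffMeasure_image_le (d := n) (Nat.cast_nonneg n)
    (s ∩ frontier Ω)
  rw [ENNReal.coe_one, ENNReal.one_rpow, one_mul] at hproj
  rw [graphMeasure, Measure.map_apply hpsi hs, Measure.restrict_apply (hpsi hs), hvol,
    Measure.smul_apply, Measure.smul_apply, sMeasure, Measure.restrict_apply hs,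
    show ((n + 1 : ℕ) : ℝ) - 1 = n by push_cast; ring]
  exact mul_le_mul_right ((measure_mono hsub).trans hproj) _

theorem Fits.setLIntegral_box_le (h : c.Fits Ω Q₀ r) {F N : Euc (n + 1) → ℝ≥0∞} {τ : ℝ}
    (hF : AEMeasurable F (volume.restrict (c.box (c.proj Q₀) r τ))) (hN : Measurable N)
    (hτ : τ ≤ r)
    (hFN : ∀ y ∈ Ω, infDist y (frontier Ω) < τ → ∀ Q ∈ frontier Ω,
      dist y Q < 2 * infDist y (frontier Ω) → F y ≤ N Q) :
    ∫⁻ y in c.box (c.proj Q₀) r τ, F y ≤ ENNReal.ofReal τ * (ENNReal.ofReal ((2 * c.K ^ 2) ^ n) *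
      ∫⁻ Q, N Q ∂(c.graphMeasure (c.proj Q₀) (3 * r))) := by
  rw [c.setLIntegral_box hF, lintegral_graphMeasure hN]
  refine (setLIntegral_mono' measurableSet_Ioo fun t ht => h.setLIntegral_slice_le hN
    ⟨ht.1, ht.2.trans_le hτ⟩ fun y hy hδ => hFN y hy (hδ.trans_lt ht.2)).trans_eq ?_
  rw [setLIntegral_const, Real.volume_Ioo, sub_zero, mul_comm]

end GraphChart

/-! ### Hardy's inequality from nontangential boundary values -/

theorem rpow_setLIntegral_le {α : Type*} [MeasurableSpace α] {μ : Measure α} {p : ℝ} (hp : 1 < p)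
    {f : α → ℝ≥0∞} (hf : Measurable f) (s : Set α) :
    (∫⁻ a in s, f a ∂μ) ^ p ≤ μ s ^ (p - 1) * ∫⁻ a in s, f a ^ p ∂μ := by
  have hpq := Real.HolderConjugate.conjExponent hp
  have h := ENNReal.lintegral_mul_le_Lp_mul_Lq (μ.restrict s) hpq hf.aemeasurable
    (aemeasurable_const (b := (1 : ℝ≥0∞)))
  simp only [Pi.mul_apply, mul_one, ENNReal.one_rpow, setLIntegral_one] at h
  refine (ENNReal.rpow_le_rpow h hpq.nonneg).trans_eq ?_
  rw [ENNReal.mul_rpow_of_nonneg _ _ hpq.nonneg, ← ENNReal.rpow_mul, ← ENNReal.rpow_mul,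
    one_div_mul_cancel hpq.ne_zero, ENNReal.rpow_one, mul_comm, one_div_mul_eq_div,
    hpq.div_conj_eq_sub_one]

theorem setLIntegral_ne_top_of_rpow {α : Type*} [MeasurableSpace α] {μ : Measure α} {p : ℝ}
    (hp : 1 < p) {f : α → ℝ≥0∞} (hf : Measurable f) {s : Set α} (hs : μ s ≠ ⊤)
    (hfs : ∫⁻ a in s, f a ^ p ∂μ ≠ ⊤) : ∫⁻ a in s, f a ∂μ ≠ ⊤ := by
  intro htop
  have h := rpow_setLIntegral_le (μ := μ) hp hf s
  rw [htop, ENNReal.top_rpow_of_pos (by linarith), top_le_iff] at h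
  exact ENNReal.mul_ne_top (ENNReal.rpow_ne_top_of_nonneg (by linarith) hs) hfs h

theorem ae_le_of_forall_eventually_exists_closedBall {α : Type*} [PseudoMetricSpace α]
    [SecondCountableTopology α] [ProperSpace α] [MeasurableSpace α] [BorelSpace α] {μ : Measure α}
    [IsLocallyFiniteMeasure μ] [IsUnifLocDoublingMeasure μ] [μ.IsOpenPosMeasure] {f : α → ℝ}
    (hf : LocallyIntegrable f μ) {s : Set α} {L a : ℝ}
    (h : ∀ᵐ x ∂μ, x ∈ s → ∀ ε > 0, ∀ᶠ δ in 𝓝[>] (0 : ℝ), ∃ X, dist X x ≤ L * δ ∧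
      ∀ᵐ z ∂μ.restrict (closedBall X δ), f z ≤ a + ε) :
    ∀ᵐ x ∂μ, x ∈ s → f x ≤ a := by
  filter_upwards [h, IsUnifLocDoublingMeasure.ae_tendsto_average μ hf L] with x hx hlim hxs
  refine le_of_forall_pos_le_add fun ε hε => ?_
  obtain ⟨X, hX⟩ := (hx hxs ε hε).choice
  refine le_of_tendsto (hlim X id tendsto_id (hX.mono fun δ hδ => mem_closedBall'.2 hδ.1)) ?_
  filter_upwards [hX, self_mem_nhdsWithin] with δ hδ hδ0
  exact (convex_Iic (a + ε)).set_average_mem isClosed_Iic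
    (measure_closedBall_pos μ _ hδ0).ne' measure_closedBall_lt_top.ne hδ.2
    (hf.integrableOn_isCompact (isCompact_closedBall _ _))

theorem tendsto_const_mul_nhdsGT_zero {K : ℝ} (hK : 0 < K) :
    Tendsto (fun s : ℝ => K * s) (𝓝[>] 0) (𝓝[>] 0) := by
  have h : Tendsto (fun s : ℝ => s) (𝓝[>] 0) (𝓝[>] 0) := tendsto_id
  simpa only [mul_zero] using TendstoNhdsWithinIoi.const_mul hK h

theorem exists_forall_ball_pos {E : Type*} [NormedAddCommGroup E] [InnerProductSpace ℝ E]
    [CompleteSpace E] {f : E → ℝ} {Q : E} (hd : DifferentiableAt ℝ f Q) (h0 : f Q = 0)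
    (hf' : fderiv ℝ f Q ≠ 0) {κ : ℝ} (hκ : κ < 1) :
    ∃ e : E, ‖e‖ = 1 ∧ ∀ᶠ s in 𝓝[>] (0 : ℝ), ∀ z ∈ ball (Q + s • e) (κ * s), 0 < f z := by
  set G : E := (InnerProductSpace.toDual ℝ E).symm (fderiv ℝ f Q)
  have hG : ∀ v, fderiv ℝ f Q v = ⟪G, v⟫ := fun v =>
    (InnerProductSpace.toDual_symm_apply (x := v) (y := fderiv ℝ f Q)).symm
  have hG0 : G ≠ 0 := by simpa [G] using hf'
  set e := ‖G‖⁻¹ • G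
  have he : ‖e‖ = 1 := norm_smul_inv_norm (𝕜 := ℝ) hG0
  have hGpos := norm_pos_iff.2 hG0
  refine ⟨e, he, ?_⟩
  have hη : 0 < (1 - κ) * ‖G‖ / 4 := by nlinarith
  obtain ⟨ε, hε, hball⟩ := Metric.eventually_nhds_iff.1 (hd.hasFDerivAt.isLittleO.def hη)
  filter_upwards [Ioo_mem_nhdsGT (half_pos hε)] with s ⟨hs0, hsε⟩ z hz
  obtain ⟨v, rfl⟩ : ∃ v, z = Q + s • e + v := ⟨z - (Q + s • e), by abel⟩
  rw [mem_ball, dist_self_add_left] at hz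
  have hv : ‖s • e + v‖ ≤ 2 * s := by
    have := norm_add_le (s • e) v
    rw [norm_smul, he, mul_one, Real.norm_of_nonneg hs0.le] at this
    nlinarith
  have happrox := hball (y := Q + s • e + v) (by
    rw [add_assoc, dist_self_add_left]
    linarith)
  rw [h0, sub_zero, add_assoc, add_sub_cancel_left, hG, inner_add_right, inner_smul_right,
    inner_smul_right, real_inner_self_eq_norm_sq, Real.norm_eq_abs, ← add_assoc] at happrox
  have hGv := (abs_le.1 (abs_real_inner_le_norm G v)).1
  have hsG : s * (‖G‖⁻¹ * ‖G‖ ^ 2) = s * ‖G‖ := by field_simp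
  have hbound : (1 - κ) * ‖G‖ / 4 * ‖s • e + v‖ ≤ (1 - κ) * ‖G‖ / 4 * (2 * s) := by gcongr
  have hκG : ‖G‖ * ‖v‖ < ‖G‖ * (κ * s) := by gcongr
  have hmain : 0 < (1 - κ) * ‖G‖ * s := by nlinarith [mul_pos hη hs0]
  linarith [(abs_le.1 happrox).1]

theorem GraphChart.fderiv_ht_ne_zero {n : ℕ} {c : GraphChart n} {y : Euc (n + 1)}
    (hd : DifferentiableAt ℝ c.ht y) : fderiv ℝ c.ht y ≠ 0 := by
  intro h0
  have hline : HasDerivAt (c.psi (c.proj y)) c.vert (c.ht y) := by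
    rw [funext (c.psi_eq _)]
    simpa using ((hasDerivAt_id (c.ht y)).smul_const c.vert).const_add (c.psi (c.proj y) 0)
  have hcomp := HasFDerivAt.comp_hasDerivAt (l := c.ht) (c.ht y)
    (by simpa only [c.psi_proj_ht] using hd.hasFDerivAt) hline
  have hid : c.ht ∘ c.psi (c.proj y) = id := funext fun t => c.ht_psi _ t
  rw [h0, hid] at hcomp
  exact zero_ne_one (hcomp.unique (hasDerivAt_id _))

namespace GraphChart.Fits

variable {n : ℕ} {c : GraphChart n} {Ω : Set (Euc (n + 1))} {Q₀ : Euc (n + 1)} {r : ℝ}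

theorem exists_closedBall_subset_ntCone (h : c.Fits Ω Q₀ r) {x : Euc n}
    (hx : x ∈ ball (c.proj Q₀) r) (hd : DifferentiableAt ℝ c.ht (c.psi x 0)) :
    ∃ e : Euc (n + 1), ‖e‖ = 1 ∧ ∀ᶠ s in 𝓝[>] (0 : ℝ),
      closedBall (c.psi x 0 + s • e) (s / 8) ⊆ ntCone Ω (c.psi x 0) ∩ {y | 0 < c.ht y} := by
  have hK := c.one_le_K
  set Q := c.psi x 0
  obtain ⟨e, he, hpos⟩ := exists_forall_ball_pos hd (c.ht_psi x 0) (fderiv_ht_ne_zero hd)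
    (κ := 7 / 8) (by norm_num)
  refine ⟨e, he, ?_⟩
  have hQ : Q ∈ ball Q₀ (4 * c.K * (c.K + 1) * r) := by
    refine h.mem_ball_of_le (a := c.K) ?_ (by nlinarith)
    have := h.dist_psi_center_le x 0
    rw [abs_zero, add_zero] at this
    exact this.trans_lt (mul_lt_mul_of_pos_left (mem_ball.1 hx) (by positivity))
  obtain ⟨ρ, hρ, hρsub⟩ := Metric.isOpen_iff.1 isOpen_ball Q hQ
  filter_upwards [hpos, Ioo_mem_nhdsGT (half_pos hρ)] with s hs ⟨hs0, hsρ⟩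
  have hseQ : dist (Q + s • e) Q = s := by
    rw [dist_self_add_left, norm_smul, he, mul_one, Real.norm_of_nonneg hs0.le]
  have hnear : ∀ z ∈ ball (Q + s • e) (7 / 8 * s), z ∈ ball Q₀ (4 * c.K * (c.K + 1) * r) := by
    intro z hz
    exact hρsub (mem_ball.2 (by linarith [dist_triangle z (Q + s • e) Q, mem_ball.1 hz]))
  have hinf : 7 / 8 * s ≤ infDist (Q + s • e) (frontier Ω) := by
    refine (le_infDist ⟨Q₀, h.mem_frontier⟩).2 fun z hz => le_of_not_gt fun hlt => ?_
    rw [dist_comm] at hlt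
    exact (hs z hlt).ne' ((h.mem_frontier_iff z (hnear z hlt)).1 hz)
  intro y hy
  rw [mem_closedBall] at hy
  have hyb : y ∈ ball (Q + s • e) (7 / 8 * s) := mem_ball.2 (by linarith)
  refine ⟨⟨(h.mem_iff y (hnear y hyb)).2 (hs y hyb), ?_⟩, hs y hyb⟩
  have := infDist_le_infDist_add_dist (s := frontier Ω) (x := Q + s • e) (y := y)
  rw [dist_comm] at this
  linarith [dist_triangle y (Q + s • e) Q]

-- Vertical segments need not lie in the cones, whose aperture is fixed while the Lipschitz constant
-- of the boundary is arbitrary: the slices are found along the normal direction instead.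
theorem eventually_exists_slice_subset (h : c.Fits Ω Q₀ r) {x : Euc n}
    (hx : x ∈ ball (c.proj Q₀) r) (hd : DifferentiableAt ℝ c.ht (c.psi x 0))
    {S : Set (Euc (n + 1))} (hS : S ∈ 𝓝[ntCone Ω (c.psi x 0)] c.psi x 0) {t : ℝ} (ht : 0 < t) :
    ∀ᶠ δ in 𝓝[>] (0 : ℝ), ∃ X, dist X x ≤ 8 * c.K * δ ∧
      ∃ τ ∈ Ioc 0 t, ∀ z ∈ closedBall X δ, c.psi z τ ∈ S := by
  have hK := c.one_le_K
  have hK₈ : (0 : ℝ) < 8 * c.K := by positivity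
  obtain ⟨e, he, hcone⟩ := h.exists_closedBall_subset_ntCone hx hd
  set Q := c.psi x 0
  obtain ⟨ρ, hρ, hρS⟩ := Metric.mem_nhdsWithin_iff.1 hS
  have hsmall : ∀ᶠ s in 𝓝[>] (0 : ℝ), ∃ X, dist X x ≤ s ∧
      ∃ τ ∈ Ioc 0 t, ∀ z ∈ closedBall X (s / (8 * c.K)), c.psi z τ ∈ S := by
    have htK : 0 < t / c.K := by positivity
    filter_upwards [hcone, Ioo_mem_nhdsGT (half_pos hρ), Ioo_mem_nhdsGT htK]
      with s hs ⟨hs0, hsρ⟩ ⟨_, hst⟩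
    have hseQ : dist (Q + s • e) Q = s := by
      rw [dist_self_add_left, norm_smul, he, mul_one, Real.norm_of_nonneg hs0.le]
    have hproj := c.dist_proj_le (Q + s • e) Q
    have hht := c.abs_ht_sub_le (Q + s • e) Q
    rw [c.proj_psi, hseQ] at hproj
    rw [c.ht_psi, sub_zero, hseQ] at hht
    rw [lt_div_iff₀' (by positivity)] at hst
    refine ⟨c.proj (Q + s • e), hproj, c.ht (Q + s • e),
      ⟨(hs (mem_closedBall_self (by positivity))).2, by linarith [le_abs_self (c.ht (Q + s • e))]⟩,
      fun z hz => ?_⟩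
    have hdist : dist (c.psi z (c.ht (Q + s • e))) (Q + s • e) ≤ s / 8 := by
      have := c.dist_psi_le z (c.proj (Q + s • e)) (c.ht (Q + s • e)) (c.ht (Q + s • e))
      rw [c.psi_proj_ht, sub_self, abs_zero, add_zero] at this
      refine this.trans
        ((mul_le_mul_of_nonneg_left (mem_closedBall.1 hz) c.K.coe_nonneg).trans_eq ?_)
      field_simp
    refine hρS ⟨mem_ball.2 ?_, (hs (mem_closedBall.2 hdist)).1⟩
    linarith [dist_triangle (c.psi z (c.ht (Q + s • e))) (Q + s • e) Q]
  filter_upwards [(tendsto_const_mul_nhdsGT_zero hK₈).eventually hsmall] with δ hδ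
  rwa [mul_div_cancel_left₀ δ hK₈.ne'] at hδ

theorem psi_mem (h : c.Fits Ω Q₀ r) {x : Euc n} (hx : x ∈ closedBall (c.proj Q₀) r) {t : ℝ}
    (ht : t ∈ Ioo 0 r) : c.psi x t ∈ Ω := by
  have hK := c.one_le_K
  rw [h.mem_iff _ (h.mem_ball_of_le (a := c.K + 1) ?_ (by nlinarith)), c.ht_psi]
  · exact ht.1
  · have := h.dist_psi_center_le x t
    rw [abs_of_pos ht.1] at this
    nlinarith [mem_closedBall.1 hx, ht.2]

theorem enorm_sub_le_lintegral_fderiv (h : c.Fits Ω Q₀ r) (hΩ : IsOpen Ω) {w : Euc (n + 1) → ℝ}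
    (hw : ContDiffOn ℝ 1 w Ω) {x : Euc n} (hx : x ∈ ball (c.proj Q₀) r)
    {s t : ℝ} (hs : 0 < s) (hst : s ≤ t) (ht : t < r) :
    ‖w (c.psi x t) - w (c.psi x s)‖ₑ ≤ ∫⁻ τ in Ioo 0 t, ‖fderiv ℝ w (c.psi x τ)‖ₑ := by
  have hmem : ∀ τ ∈ Icc s t, c.psi x τ ∈ Ω := fun τ hτ =>
    h.psi_mem (ball_subset_closedBall hx) ⟨hs.trans_le hτ.1, hτ.2.trans_lt ht⟩
  have hψ : ContDiff ℝ 1 (c.psi x) := by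
    rw [funext (c.psi_eq x)]
    fun_prop
  have hψ' : ∀ τ, HasDerivAt (c.psi x) c.vert τ := fun τ => by
    rw [funext (c.psi_eq x)]
    simpa using ((hasDerivAt_id τ).smul_const c.vert).const_add (c.psi x 0)
  have hderiv : ∀ τ ∈ Icc s t,
      ‖deriv (fun τ => w (c.psi x τ)) τ‖ₑ ≤ ‖fderiv ℝ w (c.psi x τ)‖ₑ := by
    intro τ hτ
    have hdiff := (hw.contDiffAt (hΩ.mem_nhds (hmem τ hτ))).differentiableAt one_ne_zero
    have hchain : deriv (fun τ => w (c.psi x τ)) τ = fderiv ℝ w (c.psi x τ) c.vert :=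
      (hdiff.hasFDerivAt.comp_hasDerivAt τ (hψ' τ)).deriv
    rw [hchain]
    simpa [← ofReal_norm, c.norm_vert] using
      ContinuousLinearMap.le_opENorm (fderiv ℝ w (c.psi x τ)) c.vert
  calc ‖w (c.psi x t) - w (c.psi x s)‖ₑ
      ≤ ∫⁻ τ in Icc s t, ‖deriv (fun τ => w (c.psi x τ)) τ‖ₑ :=
        enorm_sub_le_lintegral_deriv_of_contDiffOn_Icc (hw.comp hψ.contDiffOn hmem) hst
    _ ≤ ∫⁻ τ in Icc s t, ‖fderiv ℝ w (c.psi x τ)‖ₑ := setLIntegral_mono' measurableSet_Icc hderiv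
    _ ≤ ∫⁻ τ in Ioc 0 t, ‖fderiv ℝ w (c.psi x τ)‖ₑ :=
        lintegral_mono_set fun τ hτ => ⟨hs.trans_le hτ.1, hτ.2⟩
    _ = ∫⁻ τ in Ioo 0 t, ‖fderiv ℝ w (c.psi x τ)‖ₑ := by rw [restrict_Ioo_eq_restrict_Ioc]

theorem eventually_exists_slice_le (h : c.Fits Ω Q₀ r) (hΩ : IsOpen Ω) {w : Euc (n + 1) → ℝ}
    (hw : ContDiffOn ℝ 1 w Ω) {x : Euc n} (hx : x ∈ ball (c.proj Q₀) r)
    (hd : DifferentiableAt ℝ c.ht (c.psi x 0)) (hnt : NTLim Ω w (c.psi x 0) 0) {t : ℝ}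
    (ht : t ∈ Ioo 0 r) {ε : ℝ} (hε : 0 < ε) :
    ∀ᶠ δ in 𝓝[>] (0 : ℝ), ∃ X, dist X x ≤ 8 * c.K * δ ∧
      ∀ z ∈ closedBall X δ, z ∈ ball (c.proj Q₀) r ∧ ‖w (c.psi z t)‖ₑ ≤
        (∫⁻ τ in Ioo 0 t, ‖fderiv ℝ w (c.psi z τ)‖ₑ) + ENNReal.ofReal ε := by
  have hS : {y | ‖w y‖ ≤ ε} ∈ 𝓝[ntCone Ω (c.psi x 0)] c.psi x 0 := by
    filter_upwards [hnt.norm.eventually_lt_const (norm_zero.trans_lt hε)] with y hy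
    exact hy.le
  have hballs : ∀ᶠ δ in 𝓝[>] (0 : ℝ), closedBall x (δ + 8 * c.K * δ) ⊆ ball (c.proj Q₀) r := by
    have hlim : Tendsto (fun δ : ℝ => δ + 8 * c.K * δ) (𝓝[>] 0) (𝓝 0) :=
      (Continuous.tendsto' (by fun_prop) 0 0 (by simp)).mono_left nhdsWithin_le_nhds
    exact hlim.eventually (eventually_closedBall_subset (isOpen_ball.mem_nhds hx))
  filter_upwards [h.eventually_exists_slice_subset hx hd hS ht.1, hballs]
    with δ ⟨X, hX, τ, hτ, hz⟩ hδB
  refine ⟨X, hX, fun z hzX => ?_⟩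
  have hzB := hδB (closedBall_subset_closedBall' (add_le_add_right hX δ) hzX)
  refine ⟨hzB, ?_⟩
  calc ‖w (c.psi z t)‖ₑ = ‖(w (c.psi z t) - w (c.psi z τ)) + w (c.psi z τ)‖ₑ := by
        rw [sub_add_cancel]
    _ ≤ ‖w (c.psi z t) - w (c.psi z τ)‖ₑ + ‖w (c.psi z τ)‖ₑ := enorm_add_le _ _
    _ ≤ _ := add_le_add (h.enorm_sub_le_lintegral_fderiv hΩ hw hzB hτ.1 hτ.2 ht.2)
        ((ofReal_norm _).symm.trans_le (ENNReal.ofReal_le_ofReal (hz z hzX)))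

theorem ae_enorm_slice_le (h : c.Fits Ω Q₀ r) (hΩ : IsOpen Ω) {w : Euc (n + 1) → ℝ}
    (hw : ContDiffOn ℝ 1 w Ω)
    (hnt : ∀ᵐ x ∂volume.restrict (ball (c.proj Q₀) r), NTLim Ω w (c.psi x 0) 0) {t : ℝ}
    (ht : t ∈ Ioo 0 r) (hfin : ∫⁻ y in c.box (c.proj Q₀) r t, ‖fderiv ℝ w y‖ₑ ≠ ⊤) :
    ∀ᵐ x ∂volume.restrict (ball (c.proj Q₀) r),
      ‖w (c.psi x t)‖ₑ ≤ ∫⁻ τ in Ioo 0 t, ‖fderiv ℝ w (c.psi x τ)‖ₑ := by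
  set B := ball (c.proj Q₀) r
  set g : Euc n → ℝ≥0∞ := fun x => ∫⁻ τ in Ioo 0 t, ‖fderiv ℝ w (c.psi x τ)‖ₑ
  have hDm : Measurable fun y => ‖fderiv ℝ w y‖ₑ := (measurable_fderiv ℝ w).enorm
  have hDψ : Measurable (Function.uncurry fun (x : Euc n) (τ : ℝ) => ‖fderiv ℝ w (c.psi x τ)‖ₑ) :=
    hDm.comp c.continuous_psi.measurable
  have hgm : Measurable g := hDψ.lintegral_prod_right'
  have hgfin : ∫⁻ x in B, g x ≠ ⊤ := by
    rwa [c.setLIntegral_box hDm.aemeasurable, ← lintegral_lintegral_swap hDψ.aemeasurable] at hfin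
  have hgae : ∀ᵐ x, x ∈ B → g x < ⊤ :=
    (ae_restrict_iff' measurableSet_ball).1 (ae_lt_top hgm hgfin)
  set f : Euc n → ℝ := B.indicator fun x => ‖w (c.psi x t)‖ - (g x).toReal
  have hwc : ContinuousOn (fun x => ‖w (c.psi x t)‖) (closedBall (c.proj Q₀) r) :=
    (hw.continuousOn.comp (c.continuous_psi.comp
      (by fun_prop : Continuous fun x : Euc n => (x, t))).continuousOn fun x hx =>
        h.psi_mem hx ht).norm
  have hfi : Integrable f := (integrable_indicator_iff measurableSet_ball).2 <|
    ((hwc.integrableOn_compact (isCompact_closedBall _ _)).mono_set ball_subset_closedBall).sub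
      (integrable_toReal_of_lintegral_ne_top hgm.aemeasurable hgfin)
  have hf0 : ∀ᵐ x, x ∈ B → f x ≤ 0 := by
    refine ae_le_of_forall_eventually_exists_closedBall hfi.locallyIntegrable (L := 8 * c.K) ?_
    filter_upwards [c.ae_differentiableAt_ht, (ae_restrict_iff' measurableSet_ball).1 hnt]
      with x hdiff hntx hxB ε hε
    filter_upwards [h.eventually_exists_slice_le hΩ hw hxB hdiff (hntx hxB) ht hε]
      with δ ⟨X, hX, hz⟩
    refine ⟨X, hX, (ae_restrict_iff' measurableSet_closedBall).2 ?_⟩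
    filter_upwards [hgae] with z hgz hzX
    obtain ⟨hzB, hle⟩ := hz z hzX
    have := ENNReal.toReal_mono (ENNReal.add_ne_top.2 ⟨(hgz hzB).ne, ENNReal.ofReal_ne_top⟩) hle
    rw [ENNReal.toReal_add (hgz hzB).ne ENNReal.ofReal_ne_top, ENNReal.toReal_ofReal hε.le,
      toReal_enorm] at this
    have hfz : f z = ‖w (c.psi z t)‖ - (g z).toReal := indicator_of_mem hzB _
    linarith
  refine (ae_restrict_iff' measurableSet_ball).2 (hf0.mono fun x hx hxB => ?_)
  have hfx : f x = ‖w (c.psi x t)‖ - (g x).toReal := indicator_of_mem hxB _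
  have := hx hxB
  rw [hfx, sub_nonpos] at this
  exact (ofReal_norm _).symm.trans_le (ENNReal.ofReal_le_of_le_toReal this)

theorem setLIntegral_slice_enorm_rpow_le (h : c.Fits Ω Q₀ r) (hΩ : IsOpen Ω)
    {w : Euc (n + 1) → ℝ} (hw : ContDiffOn ℝ 1 w Ω)
    (hnt : ∀ᵐ x ∂volume.restrict (ball (c.proj Q₀) r), NTLim Ω w (c.psi x 0) 0)
    {p : ℝ} (hp : 1 < p) {t τ : ℝ} (ht : t ∈ Ioo 0 τ) (hτ : τ ≤ r)
    (hfin : ∫⁻ y in c.box (c.proj Q₀) r τ, ‖fderiv ℝ w y‖ₑ ≠ ⊤) :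
    ∫⁻ x in ball (c.proj Q₀) r, ‖w (c.psi x t)‖ₑ ^ p ≤
      ENNReal.ofReal τ ^ (p - 1) * ∫⁻ y in c.box (c.proj Q₀) r τ, ‖fderiv ℝ w y‖ₑ ^ p := by
  have hDm : Measurable fun y => ‖fderiv ℝ w y‖ₑ := (measurable_fderiv ℝ w).enorm
  have hDψ : Measurable (Function.uncurry fun (x : Euc n) (s : ℝ) => ‖fderiv ℝ w (c.psi x s)‖ₑ) :=
    hDm.comp c.continuous_psi.measurable
  have hmono : c.box (c.proj Q₀) r t ⊆ c.box (c.proj Q₀) r τ := fun y hy =>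
    ⟨hy.1, hy.2.1, hy.2.2.trans ht.2⟩
  have hslice := h.ae_enorm_slice_le hΩ hw hnt ⟨ht.1, ht.2.trans_le hτ⟩
    (ne_top_of_le_ne_top hfin (lintegral_mono_set hmono))
  calc ∫⁻ x in ball (c.proj Q₀) r, ‖w (c.psi x t)‖ₑ ^ p
      ≤ ∫⁻ x in ball (c.proj Q₀) r, ENNReal.ofReal τ ^ (p - 1) *
          ∫⁻ s in Ioo 0 τ, ‖fderiv ℝ w (c.psi x s)‖ₑ ^ p := by
        refine lintegral_mono_ae (hslice.mono fun x hx => ?_)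
        have hle : ‖w (c.psi x t)‖ₑ ≤ ∫⁻ s in Ioo 0 τ, ‖fderiv ℝ w (c.psi x s)‖ₑ :=
          hx.trans (lintegral_mono_set (Ioo_subset_Ioo_right ht.2.le))
        refine (ENNReal.rpow_le_rpow hle (by linarith)).trans
          ((rpow_setLIntegral_le hp (hDψ.comp measurable_prodMk_left) _).trans_eq ?_)
        simp only [Real.volume_Ioo, sub_zero, Function.comp_apply, Function.uncurry_apply_pair]
    _ = ENNReal.ofReal τ ^ (p - 1) * ∫⁻ y in c.box (c.proj Q₀) r τ, ‖fderiv ℝ w y‖ₑ ^ p := by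
        rw [lintegral_const_mul' _ _
          (ENNReal.rpow_ne_top_of_nonneg (by linarith) ENNReal.ofReal_ne_top),
          c.setLIntegral_box (hDm.pow_const p).aemeasurable,
          lintegral_lintegral_swap (hDψ.pow_const p).aemeasurable]

theorem setLIntegral_box_enorm_rpow_le (h : c.Fits Ω Q₀ r) (hΩ : IsOpen Ω)
    {w : Euc (n + 1) → ℝ} (hw : ContDiffOn ℝ 1 w Ω)
    (hnt : ∀ᵐ x ∂volume.restrict (ball (c.proj Q₀) r), NTLim Ω w (c.psi x 0) 0)
    {p : ℝ} (hp : 1 < p) {τ : ℝ} (hτ0 : 0 < τ) (hτ : τ ≤ r) :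
    ∫⁻ y in c.box (c.proj Q₀) r τ, ‖w y‖ₑ ^ p ≤
      ENNReal.ofReal τ ^ p * ∫⁻ y in c.box (c.proj Q₀) r τ, ‖fderiv ℝ w y‖ₑ ^ p := by
  have hτ' : ENNReal.ofReal τ ≠ 0 := (ENNReal.ofReal_pos.2 hτ0).ne'
  by_cases htop : ∫⁻ y in c.box (c.proj Q₀) r τ, ‖fderiv ℝ w y‖ₑ ^ p = ⊤
  · rw [htop, ENNReal.mul_top (by simp [hτ', (zero_lt_one.trans hp).not_gt])]
    exact le_top
  have hvol : volume (c.box (c.proj Q₀) r τ) ≠ ⊤ := by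
    rw [← setLIntegral_one, c.setLIntegral_box aemeasurable_const]
    simp only [setLIntegral_one, setLIntegral_const, Real.volume_Ioo]
    exact ENNReal.mul_ne_top measure_ball_lt_top.ne ENNReal.ofReal_ne_top
  have hfin := setLIntegral_ne_top_of_rpow hp (measurable_fderiv ℝ w).enorm hvol htop
  have hbox : c.box (c.proj Q₀) r τ ⊆ Ω := fun y hy =>
    h.mem_of_mem_box ⟨hy.1, hy.2.1, hy.2.2.trans_le hτ⟩
  have hwm : AEMeasurable (fun y => ‖w y‖ₑ ^ p) (volume.restrict (c.box (c.proj Q₀) r τ)) :=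
    ((hw.continuousOn.mono hbox).aemeasurable (c.isOpen_box _ _ _).measurableSet).enorm.pow_const p
  rw [c.setLIntegral_box hwm]
  refine (setLIntegral_mono' measurableSet_Ioo fun t ht =>
    h.setLIntegral_slice_enorm_rpow_le hΩ hw hnt hp ht hτ hfin).trans_eq ?_
  rw [setLIntegral_const, Real.volume_Ioo, sub_zero, mul_right_comm]
  nth_rw 2 [← ENNReal.rpow_one (ENNReal.ofReal τ)]
  rw [← ENNReal.rpow_add _ _ hτ' ENNReal.ofReal_ne_top, sub_add_cancel]

end GraphChart.Fits
/-! ### Estimates in thin boundary layers -/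

/-- The points of `Ω` at distance less than `s` from the boundary. -/
def boundaryLayer (Ω : Set (Euc d)) (s : ℝ) : Set (Euc d) :=
  {y | y ∈ Ω ∧ infDist y (frontier Ω) < s}

theorem isOpen_boundaryLayer {Ω : Set (Euc d)} (hΩ : IsOpen Ω) (s : ℝ) :
    IsOpen (boundaryLayer Ω s) :=
  hΩ.inter (isOpen_lt (continuous_infDist_pt _) continuous_const)

theorem boundaryLayer_subset (Ω : Set (Euc d)) (s : ℝ) : boundaryLayer Ω s ⊆ Ω := fun _ hy => hy.1

theorem setLIntegral_biUnion_finset_le {α ι : Type*} [MeasurableSpace α] {μ : Measure α}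
    (t : Finset ι) (s : ι → Set α) (f : α → ℝ≥0∞) :
    ∫⁻ a in ⋃ i ∈ t, s i, f a ∂μ ≤ ∑ i ∈ t, ∫⁻ a in s i, f a ∂μ := by
  classical
  induction t using Finset.induction_on with
  | empty => simp
  | insert i t hi ih =>
    rw [Finset.set_biUnion_insert, Finset.sum_insert hi]
    exact (lintegral_union_le _ _ _).trans (by gcongr)

namespace GraphChart.Fits

variable {n : ℕ} {c : GraphChart n} {Ω : Set (Euc (n + 1))} {Q₀ : Euc (n + 1)} {r : ℝ}

theorem box_subset_boundaryLayer (h : c.Fits Ω Q₀ r) {τ : ℝ} (hτ : τ ≤ r) :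
    c.box (c.proj Q₀) r τ ⊆ boundaryLayer Ω τ := by
  intro y hy
  have hy' : y ∈ c.box (c.proj Q₀) r r := ⟨hy.1, hy.2.1, hy.2.2.trans_le hτ⟩
  exact ⟨h.mem_of_mem_box hy', (h.infDist_le_ht hy').trans_lt hy.2.2⟩

theorem mem_box (h : c.Fits Ω Q₀ r) {y P : Euc (n + 1)} (hy : y ∈ Ω)
    (hP : P ∈ ball Q₀ (r / 2)) (hyP : infDist y (frontier Ω) = dist y P) {s K : ℝ}
    (hK : c.K ≤ K) (hs : infDist y (frontier Ω) < s) (hs₀ : s ≤ r / 2) :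
    y ∈ c.box (c.proj Q₀) r (K * s) := by
  have hr := h.r_pos
  have hK₁ := c.one_le_K
  have hd : dist y Q₀ < r := by linarith [dist_triangle y P Q₀, mem_ball.1 hP]
  have hdK : dist y Q₀ < (c.K + 1) * r := by nlinarith
  refine ⟨mem_ball.2 ((c.dist_proj_le _ _).trans_lt hd),
    (h.mem_iff y (h.mem_ball_of_le hdK (by nlinarith))).1 hy, ?_⟩
  calc c.ht y ≤ c.K * infDist y (frontier Ω) := (le_abs_self _).trans (h.abs_ht_le hdK)
    _ < c.K * s := by gcongr
    _ ≤ K * s := mul_le_mul_of_nonneg_right hK (infDist_nonneg.trans hs.le)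

theorem ae_of_ae_sMeasure (h : c.Fits Ω Q₀ r) {P : Euc (n + 1) → Prop}
    (hP : ∀ᵐ Q ∂sMeasure Ω, P Q) :
    ∀ᵐ x ∂volume.restrict (ball (c.proj Q₀) r), P (c.psi x 0) := by
  obtain ⟨C, hC⟩ := h.exists_graphMeasure_le
  have hν : ∀ᵐ Q ∂c.graphMeasure (c.proj Q₀) (3 * r), P Q :=
    (Measure.absolutelyContinuous_of_le_smul hC).ae_le hP
  exact ae_mono (Measure.restrict_mono (ball_subset_ball (by linarith [h.r_pos])) le_rfl)
    (ae_of_ae_map c.lipschitzWith_psi_zero.continuous.measurable.aemeasurable hν)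

end GraphChart.Fits

/-- A choice of fitted graph charts at all boundary points of `Ω`, together with finitely many
centers whose charts cover the boundary with room to spare. -/
structure BoundaryAtlas {n : ℕ} (Ω : Set (Euc (n + 1))) where
  chart : frontier Ω → GraphChart n
  radius : frontier Ω → ℝ
  fits : ∀ Q, (chart Q).Fits Ω Q (radius Q)
  centers : Finset (frontier Ω)
  frontier_subset : frontier Ω ⊆ ⋃ Q ∈ centers, ball (Q : Euc (n + 1)) (radius Q / 2)
  frontier_nonempty : (frontier Ω).Nonempty

theorem HasLipschitzBoundary.nonempty_boundaryAtlas {n : ℕ} {Ω : Set (Euc (n + 1))}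
    (h : HasLipschitzBoundary Ω) (hΩ : Bornology.IsBounded Ω) (hne : Ω.Nonempty) :
    Nonempty (BoundaryAtlas Ω) := by
  have hcpt : IsCompact (frontier Ω) :=
    isCompact_of_isClosed_isBounded isClosed_frontier (hΩ.closure.subset frontier_subset_closure)
  choose c r hfit using fun Q : frontier Ω => h.exists_fits Q.2
  obtain ⟨t, ht⟩ := hcpt.elim_finite_subcover
    (fun Q : frontier Ω => ball (Q : Euc (n + 1)) (r Q / 2)) (fun _ => isOpen_ball) fun Q hQ =>
      mem_iUnion.2 ⟨⟨Q, hQ⟩, mem_ball_self (half_pos (hfit ⟨Q, hQ⟩).r_pos)⟩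
  refine ⟨⟨c, r, hfit, t, ht, nonempty_frontier_iff.2 ⟨hne, ?_⟩⟩⟩
  rintro rfl
  exact NormedSpace.unbounded_univ ℝ (Euc (n + 1)) hΩ

namespace BoundaryAtlas

variable {n : ℕ} {Ω : Set (Euc (n + 1))} (𝒜 : BoundaryAtlas Ω)

/-- A common bound for the distortion constants of the charts at the centers. -/
def K : ℝ := 1 + ∑ Q ∈ 𝒜.centers, ((𝒜.chart Q).K : ℝ)

theorem one_le_K : 1 ≤ 𝒜.K :=
  le_add_of_nonneg_right (Finset.sum_nonneg fun _ _ => NNReal.coe_nonneg _)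

theorem K_pos : 0 < 𝒜.K := one_pos.trans_le 𝒜.one_le_K

theorem chart_K_le {Q : frontier Ω} (hQ : Q ∈ 𝒜.centers) : (𝒜.chart Q).K ≤ 𝒜.K :=
  (Finset.single_le_sum (f := fun Q => ((𝒜.chart Q).K : ℝ)) (fun _ _ => NNReal.coe_nonneg _)
    hQ).trans (le_add_of_nonneg_left zero_le_one)

/-- The coordinate box of height `τ` at a boundary point. -/
def box (Q : frontier Ω) (τ : ℝ) : Set (Euc (n + 1)) :=
  (𝒜.chart Q).box ((𝒜.chart Q).proj Q) (𝒜.radius Q) τ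

/-- The sum of the graph measures at the centers: a finite measure carried by the boundary, against
which boundary layers can be sliced. -/
def measure : Measure (Euc (n + 1)) :=
  ∑ Q ∈ 𝒜.centers, (𝒜.chart Q).graphMeasure ((𝒜.chart Q).proj Q) (3 * 𝒜.radius Q)

instance : IsFiniteMeasure 𝒜.measure := by
  refine ⟨?_⟩
  rw [measure, Measure.finsetSum_apply]
  exact ENNReal.sum_lt_top.2 fun Q _ => measure_lt_top _ _

theorem graphMeasure_le_measure {Q : frontier Ω} (hQ : Q ∈ 𝒜.centers) :
    (𝒜.chart Q).graphMeasure ((𝒜.chart Q).proj Q) (3 * 𝒜.radius Q) ≤ 𝒜.measure :=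
  Finset.single_le_sum (f := fun Q => (𝒜.chart Q).graphMeasure ((𝒜.chart Q).proj Q)
    (3 * 𝒜.radius Q)) (fun _ _ => Measure.zero_le _) hQ

theorem exists_measure_le : ∃ C : ℝ≥0, 𝒜.measure ≤ (C : ℝ≥0∞) • sMeasure Ω := by
  choose C hC using fun Q => (𝒜.fits Q).exists_graphMeasure_le
  refine ⟨∑ Q ∈ 𝒜.centers, C Q, ?_⟩
  rw [ENNReal.ofNNReal_finsetSum, Finset.sum_smul]
  exact Finset.sum_le_sum fun Q _ => hC Q

theorem eventually_setLIntegral_boundaryLayer_le : ∀ᶠ s in 𝓝[>] (0 : ℝ),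
    (∀ Q ∈ 𝒜.centers, 𝒜.K * s ≤ 𝒜.radius Q) ∧ ∀ f : Euc (n + 1) → ℝ≥0∞,
      ∫⁻ y in boundaryLayer Ω s, f y ≤ ∑ Q ∈ 𝒜.centers, ∫⁻ y in 𝒜.box Q (𝒜.K * s), f y := by
  have hsmall : ∀ᶠ s in 𝓝[>] (0 : ℝ), ∀ Q ∈ 𝒜.centers, 𝒜.K * s < 𝒜.radius Q / 2 :=
    (eventually_all_finset 𝒜.centers).2 fun Q _ =>
      (tendsto_nhds_of_tendsto_nhdsWithin
        (tendsto_const_mul_nhdsGT_zero 𝒜.K_pos)).eventually_lt_const (half_pos (𝒜.fits Q).r_pos)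
  filter_upwards [hsmall, self_mem_nhdsWithin] with s hs hs0
  refine ⟨fun Q hQ => by linarith [hs Q hQ, (𝒜.fits Q).r_pos], fun f => ?_⟩
  refine (lintegral_mono_set ?_).trans (setLIntegral_biUnion_finset_le 𝒜.centers _ f)
  rintro y ⟨hy, hys⟩
  obtain ⟨P, hP, hd⟩ := isClosed_frontier.exists_infDist_eq_dist 𝒜.frontier_nonempty y
  obtain ⟨Q, hQ, hPQ⟩ := mem_iUnion₂.1 (𝒜.frontier_subset hP)
  exact mem_iUnion₂.2 ⟨Q, hQ, (𝒜.fits Q).mem_box hy hPQ hd (𝒜.chart_K_le hQ) hys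
    ((le_mul_of_one_le_left (mem_Ioi.1 hs0).le 𝒜.one_le_K).trans (hs Q hQ).le)⟩

theorem exists_setLIntegral_boundaryLayer_le : ∃ C : ℝ≥0, ∀ᶠ s in 𝓝[>] (0 : ℝ),
    ∀ F N : Euc (n + 1) → ℝ≥0∞, ContinuousOn F Ω → Measurable N →
      (∀ Q, ∀ y ∈ ntCone Ω Q ∩ boundaryLayer Ω (𝒜.K * s), F y ≤ N Q) →
      ∫⁻ y in boundaryLayer Ω s, F y ≤ ENNReal.ofReal s * (C * ∫⁻ Q, N Q ∂𝒜.measure) := by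
  let A : frontier Ω → ℝ≥0 := fun Q => ((2 * (𝒜.chart Q).K ^ 2 : ℝ) ^ n).toNNReal
  refine ⟨𝒜.K.toNNReal * ∑ Q ∈ 𝒜.centers, A Q, ?_⟩
  filter_upwards [𝒜.eventually_setLIntegral_boundaryLayer_le] with s ⟨hsr, hs⟩ F N hF hN hFN
  have hbox : ∀ Q ∈ 𝒜.centers, ∫⁻ y in 𝒜.box Q (𝒜.K * s), F y ≤
      ENNReal.ofReal (𝒜.K * s) * (A Q * ∫⁻ Q, N Q ∂𝒜.measure) := fun Q hQ => by
    have hsub : 𝒜.box Q (𝒜.K * s) ⊆ Ω :=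
      ((𝒜.fits Q).box_subset_boundaryLayer (hsr Q hQ)).trans (boundaryLayer_subset Ω _)
    refine ((𝒜.fits Q).setLIntegral_box_le ((hF.mono hsub).aemeasurable
      ((𝒜.chart Q).isOpen_box _ _ _).measurableSet) hN (hsr Q hQ) fun y hy hys P _ hyP =>
        hFN P y ⟨⟨hy, hyP⟩, hy, hys⟩).trans ?_
    exact mul_le_mul_right (mul_le_mul_right
      (lintegral_mono' (𝒜.graphMeasure_le_measure hQ) le_rfl) _) _
  calc ∫⁻ y in boundaryLayer Ω s, F y
      ≤ ∑ Q ∈ 𝒜.centers, ENNReal.ofReal (𝒜.K * s) * (A Q * ∫⁻ Q, N Q ∂𝒜.measure) :=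
        (hs F).trans (Finset.sum_le_sum hbox)
    _ = _ := by
        rw [← Finset.mul_sum, ← Finset.sum_mul, ENNReal.ofReal_mul 𝒜.K_pos.le, ENNReal.coe_mul,
          ENNReal.ofNNReal_finsetSum, ENNReal.ofReal]
        ring

theorem eventually_setLIntegral_enorm_rpow_le (hΩ : IsOpen Ω) {p : ℝ} (hp : 1 < p) :
    ∀ᶠ s in 𝓝[>] (0 : ℝ), ∀ w : Euc (n + 1) → ℝ, ContDiffOn ℝ 1 w Ω →
      (∀ᵐ Q ∂sMeasure Ω, NTLim Ω w Q 0) → ∫⁻ y in boundaryLayer Ω s, ‖w y‖ₑ ^ p ≤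
        𝒜.centers.card * (ENNReal.ofReal (𝒜.K * s) ^ p *
          ∫⁻ y in boundaryLayer Ω (𝒜.K * s), ‖fderiv ℝ w y‖ₑ ^ p) := by
  filter_upwards [𝒜.eventually_setLIntegral_boundaryLayer_le, self_mem_nhdsWithin]
    with s ⟨hsr, hs⟩ hs0 w hw hnt
  rw [← nsmul_eq_mul]
  refine (hs _).trans (Finset.sum_le_card_nsmul _ _ _ fun Q hQ => ?_)
  refine ((𝒜.fits Q).setLIntegral_box_enorm_rpow_le hΩ hw ((𝒜.fits Q).ae_of_ae_sMeasure hnt)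
    hp (mul_pos 𝒜.K_pos hs0) (hsr Q hQ)).trans ?_
  gcongr
  exact (𝒜.fits Q).box_subset_boundaryLayer (hsr Q hQ)

end BoundaryAtlas
/-! ### Rates of decay at the boundary -/

/-- The `p`-th power integral of `f` over the boundary layer of width `s` is at most `A * s ^ m`
for small `s`. -/
def LayerBound (Ω : Set (Euc d)) (p m : ℝ) (A : ℝ≥0) (f : Euc d → ℝ) : Prop :=
  ∀ᶠ s in 𝓝[>] (0 : ℝ), ∫⁻ y in boundaryLayer Ω s, ‖f y‖ₑ ^ p ≤ A * ENNReal.ofReal s ^ m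

/-- The `p`-th power integral of `f` over the boundary layer of width `s` is `O(s ^ m)`. -/
def LayerBigO (Ω : Set (Euc d)) (p m : ℝ) (f : Euc d → ℝ) : Prop :=
  ∃ A, LayerBound Ω p m A f

/-- The `p`-th power integral of `f` over the boundary layer of width `s` is `o(s ^ m)`. -/
def LayerLittleO (Ω : Set (Euc d)) (p m : ℝ) (f : Euc d → ℝ) : Prop :=
  ∀ A > 0, LayerBound Ω p m A f

section

variable {Ω : Set (Euc d)} {p q m : ℝ} {f g : Euc d → ℝ}

theorem LayerBound.of_le {A : ℝ≥0} (hΩ : IsOpen Ω) (hp : 0 ≤ p) (h : LayerBound Ω p m A g)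
    (hfg : ∀ y ∈ Ω, ‖f y‖ₑ ≤ ‖g y‖ₑ) : LayerBound Ω p m A f := by
  filter_upwards [h] with s hs
  refine (setLIntegral_mono' (isOpen_boundaryLayer hΩ s).measurableSet fun y hy => ?_).trans hs
  exact ENNReal.rpow_le_rpow (hfg y hy.1) hp

theorem LayerBigO.of_le (hΩ : IsOpen Ω) (hp : 0 ≤ p) (h : LayerBigO Ω p m g)
    (hfg : ∀ y ∈ Ω, ‖f y‖ₑ ≤ ‖g y‖ₑ) : LayerBigO Ω p m f :=
  h.imp fun _ hA => hA.of_le hΩ hp hfg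

theorem LayerBigO.of_le_sum {ι : Type*} {t : Finset ι} {g : ι → Euc d → ℝ} (hΩ : IsOpen Ω)
    (hp : 1 ≤ p) (hg : ∀ i, ContinuousOn (g i) Ω) (h : ∀ i, LayerBigO Ω p m (g i))
    (hfg : ∀ y ∈ Ω, ‖f y‖ₑ ≤ ∑ i ∈ t, ‖g i y‖ₑ) : LayerBigO Ω p m f := by
  choose A hA using h
  let B : ℝ≥0 := (t.card : ℝ≥0) ^ (p - 1)
  refine ⟨B * ∑ i ∈ t, A i, ?_⟩
  filter_upwards [(eventually_all_finset t).2 fun i _ => hA i] with s hs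
  have hm := (isOpen_boundaryLayer hΩ s).measurableSet
  have hpow : ∀ y, (∑ i ∈ t, ‖g i y‖ₑ) ^ p ≤ B * ∑ i ∈ t, ‖g i y‖ₑ ^ p := fun y => by
    have := ENNReal.coe_le_coe.2
      (NNReal.rpow_sum_le_const_mul_sum_rpow t (fun i => ‖g i y‖₊) hp)
    simpa [B, ENNReal.coe_rpow_of_nonneg _ (zero_le_one.trans hp), enorm] using this
  calc ∫⁻ y in boundaryLayer Ω s, ‖f y‖ₑ ^ p
      ≤ ∫⁻ y in boundaryLayer Ω s, B * ∑ i ∈ t, ‖g i y‖ₑ ^ p :=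
        setLIntegral_mono' hm fun y hy =>
          (ENNReal.rpow_le_rpow (hfg y hy.1) (zero_le_one.trans hp)).trans (hpow y)
    _ = B * ∑ i ∈ t, ∫⁻ y in boundaryLayer Ω s, ‖g i y‖ₑ ^ p := by
        rw [lintegral_const_mul' _ _ ENNReal.coe_ne_top, lintegral_finsetSum']
        exact fun i _ =>
          (((hg i).mono (boundaryLayer_subset Ω s)).enorm.aemeasurable hm).pow_const p
    _ ≤ B * ∑ i ∈ t, A i * ENNReal.ofReal s ^ m := by
        gcongr with i hi
        exact hs i hi
    _ = _ := by
        rw [← Finset.sum_mul, ENNReal.coe_mul, ENNReal.ofNNReal_finsetSum, mul_assoc]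

theorem LayerBigO.mul_littleO (hΩ : IsOpen Ω) (hpq : p.HolderConjugate q)
    (hf : ContinuousOn f Ω) (hg : ContinuousOn g Ω) {a b : ℝ} (hfO : LayerBigO Ω p a f)
    (hgo : LayerLittleO Ω q b g) : LayerLittleO Ω 1 (a / p + b / q) (f * g) := by
  intro ε hε
  obtain ⟨A, hA⟩ := hfO
  set A' := (A + 1) ^ (1 / p)
  have hA' : 0 < A' := NNReal.rpow_pos (by positivity)
  have hB : 0 < (ε / A') ^ q := NNReal.rpow_pos (by positivity)
  filter_upwards [hA, hgo _ hB, self_mem_nhdsWithin] with s hfs hgs hs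
  have hm := (isOpen_boundaryLayer hΩ s).measurableSet
  have hsub := boundaryLayer_subset Ω s
  have hS : ENNReal.ofReal s ≠ 0 := (ENNReal.ofReal_pos.2 (mem_Ioi.1 hs)).ne'
  have hp := hpq.one_div_nonneg
  have hq := hpq.symm.one_div_nonneg
  have hA1 : (A : ℝ≥0∞) ^ (1 / p) ≤ A' := by
    rw [← ENNReal.coe_rpow_of_nonneg _ hp]
    exact ENNReal.coe_le_coe.2 (NNReal.rpow_le_rpow le_self_add hp)
  have hBq : (((ε / A') ^ q : ℝ≥0) : ℝ≥0∞) ^ (1 / q) = (ε / A' : ℝ≥0) := by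
    rw [← ENNReal.coe_rpow_of_nonneg _ hq, ← NNReal.rpow_mul, mul_one_div_cancel hpq.symm.ne_zero,
      NNReal.rpow_one]
  calc ∫⁻ y in boundaryLayer Ω s, ‖(f * g) y‖ₑ ^ (1 : ℝ)
      = ∫⁻ y in boundaryLayer Ω s, ‖f y‖ₑ * ‖g y‖ₑ := by
        simp only [ENNReal.rpow_one, Pi.mul_apply, enorm_mul]
    _ ≤ (∫⁻ y in boundaryLayer Ω s, ‖f y‖ₑ ^ p) ^ (1 / p) *
          (∫⁻ y in boundaryLayer Ω s, ‖g y‖ₑ ^ q) ^ (1 / q) :=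
        ENNReal.lintegral_mul_le_Lp_mul_Lq _ hpq ((hf.mono hsub).enorm.aemeasurable hm)
          ((hg.mono hsub).enorm.aemeasurable hm)
    _ ≤ (A * ENNReal.ofReal s ^ a) ^ (1 / p) *
          (((ε / A') ^ q : ℝ≥0) * ENNReal.ofReal s ^ b) ^ (1 / q) := by gcongr
    _ ≤ A' * (ε / A' : ℝ≥0) * ENNReal.ofReal s ^ (a / p + b / q) := by
        rw [ENNReal.mul_rpow_of_nonneg _ _ hp, ENNReal.mul_rpow_of_nonneg _ _ hq, hBq,
          ← ENNReal.rpow_mul, ← ENNReal.rpow_mul, mul_one_div, mul_one_div,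
          ENNReal.rpow_add _ _ hS ENNReal.ofReal_ne_top, mul_mul_mul_comm]
        gcongr
    _ = ε * ENNReal.ofReal s ^ (a / p + b / q) := by
        rw [← ENNReal.coe_mul, mul_div_cancel₀ _ hA'.ne']

end

theorem norm_fderiv_eq_gnorm1 (w : Euc d → ℝ) (y : Euc d) : ‖fderiv ℝ w y‖ = gnorm1 w y := by
  have hcoord : ∀ i, ((InnerProductSpace.toDual ℝ (Euc d)).symm (fderiv ℝ w y)) i = pder i w y :=
    fun i => by
      rw [← EuclideanSpace.basisFun_inner, real_inner_comm, InnerProductSpace.toDual_symm_apply]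
      simp [pder]
  rw [← (InnerProductSpace.toDual ℝ (Euc d)).symm.norm_map, EuclideanSpace.norm_eq]
  simp only [hcoord, Real.norm_eq_abs, sq_abs, gnorm1]

theorem enorm_fderiv_eq_enorm_gnorm1 (w : Euc d → ℝ) (y : Euc d) :
    ‖fderiv ℝ w y‖ₑ = ‖gnorm1 w y‖ₑ := by
  rw [← norm_fderiv_eq_gnorm1, enorm_norm]

/-! ### Hardy's inequality in boundary layers -/

namespace BoundaryAtlas

variable {n : ℕ} {Ω : Set (Euc (n + 1))} {p m : ℝ} {w : Euc (n + 1) → ℝ}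

theorem exists_layerBound_of_gnorm1 (𝒜 : BoundaryAtlas Ω) (hΩ : IsOpen Ω) (hp : 1 < p)
    (hw : ContDiffOn ℝ 1 w Ω) (hnt : ∀ᵐ Q ∂sMeasure Ω, NTLim Ω w Q 0) :
    ∃ B : ℝ≥0, 0 < B ∧ ∀ A, LayerBound Ω p m A (gnorm1 w) → LayerBound Ω p (m + p) (B * A) w := by
  refine ⟨(𝒜.centers.card + 1) * 𝒜.K.toNNReal ^ (m + p), ?_, fun A h => ?_⟩
  · have := Real.toNNReal_pos.2 𝒜.K_pos
    exact mul_pos (by positivity) (NNReal.rpow_pos this)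
  filter_upwards [𝒜.eventually_setLIntegral_enorm_rpow_le hΩ hp, self_mem_nhdsWithin,
    (tendsto_const_mul_nhdsGT_zero 𝒜.K_pos).eventually h] with s hs hs0 hKs
  simp only [← enorm_fderiv_eq_enorm_gnorm1] at hKs
  have hs' : ENNReal.ofReal (𝒜.K * s) ≠ 0 := (ENNReal.ofReal_pos.2 (mul_pos 𝒜.K_pos hs0)).ne'
  calc ∫⁻ y in boundaryLayer Ω s, ‖w y‖ₑ ^ p
      ≤ 𝒜.centers.card * (ENNReal.ofReal (𝒜.K * s) ^ p *
          (A * ENNReal.ofReal (𝒜.K * s) ^ m)) := (hs w hw hnt).trans (by gcongr)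
    _ ≤ (𝒜.centers.card + 1) * (ENNReal.ofReal (𝒜.K * s) ^ p *
          (A * ENNReal.ofReal (𝒜.K * s) ^ m)) := by gcongr; exact le_self_add
    _ = (𝒜.centers.card + 1) * A * ENNReal.ofReal (𝒜.K * s) ^ (m + p) := by
        rw [ENNReal.rpow_add _ _ hs' ENNReal.ofReal_ne_top]
        ring
    _ = _ := by
        rw [ENNReal.ofReal_mul 𝒜.K_pos.le,
          ENNReal.mul_rpow_of_ne_top ENNReal.ofReal_ne_top ENNReal.ofReal_ne_top, ENNReal.ofReal,
          ← ENNReal.coe_rpow_of_ne_zero (by simpa using 𝒜.K_pos)]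
        push_cast
        ring

theorem layerBigO_of_gnorm1 (𝒜 : BoundaryAtlas Ω) (hΩ : IsOpen Ω) (hp : 1 < p)
    (hw : ContDiffOn ℝ 1 w Ω) (hnt : ∀ᵐ Q ∂sMeasure Ω, NTLim Ω w Q 0)
    (h : LayerBigO Ω p m (gnorm1 w)) :
    LayerBigO Ω p (m + p) w := by
  obtain ⟨B, -, hB⟩ := 𝒜.exists_layerBound_of_gnorm1 (m := m) hΩ hp hw hnt
  exact h.elim fun A hA => ⟨B * A, hB A hA⟩

theorem layerLittleO_of_gnorm1 (𝒜 : BoundaryAtlas Ω) (hΩ : IsOpen Ω) (hp : 1 < p)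
    (hw : ContDiffOn ℝ 1 w Ω) (hnt : ∀ᵐ Q ∂sMeasure Ω, NTLim Ω w Q 0)
    (h : LayerLittleO Ω p m (gnorm1 w)) :
    LayerLittleO Ω p (m + p) w := by
  obtain ⟨B, hB0, hB⟩ := 𝒜.exists_layerBound_of_gnorm1 (m := m) hΩ hp hw hnt
  intro A hA
  simpa only [mul_div_cancel₀ _ hB0.ne'] using hB _ (h (A / B) (by positivity))

end BoundaryAtlas

/-! ### Nontangential maximal functions -/

/-- The nontangential maximal function of `w` over the part of the cone that lies in `S`. -/
def ntMaxOn (Ω S : Set (Euc d)) (w : Euc d → ℝ) (Q : Euc d) : ℝ≥0∞ :=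
  ⨆ x ∈ ntCone Ω Q ∩ S, ‖w x‖ₑ

section

variable {Ω S : Set (Euc d)} {w : Euc d → ℝ} {Q : Euc d}

theorem ntMaxOn_univ : ntMaxOn Ω univ w = ntMax Ω w := by
  funext Q
  simp only [ntMaxOn, inter_univ]
  rfl

theorem enorm_le_ntMaxOn {y : Euc d} (hy : y ∈ ntCone Ω Q ∩ S) : ‖w y‖ₑ ≤ ntMaxOn Ω S w Q :=
  le_iSup₂ (f := fun x (_ : x ∈ ntCone Ω Q ∩ S) => ‖w x‖ₑ) y hy

theorem enorm_le_ntMax {y : Euc d} (hy : y ∈ ntCone Ω Q) : ‖w y‖ₑ ≤ ntMax Ω w Q :=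
  le_iSup₂ (f := fun x (_ : x ∈ ntCone Ω Q) => ‖w x‖ₑ) y hy

theorem measurable_ntMaxOn (Ω S : Set (Euc d)) (w : Euc d → ℝ) : Measurable (ntMaxOn Ω S w) := by
  refine measurable_of_Ioi fun a => IsOpen.measurableSet ?_
  have h : ntMaxOn Ω S w ⁻¹' Ioi a =
      ⋃ x ∈ {x ∈ Ω ∩ S | a < ‖w x‖ₑ}, ball x (2 * infDist x (frontier Ω)) := by
    ext Q
    simp only [ntMaxOn, ntCone, mem_preimage, mem_Ioi, lt_iSup_iff, mem_iUnion, mem_ball,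
      dist_comm Q, mem_inter_iff, mem_ofPred_eq]
    grind
  rw [h]
  exact isOpen_biUnion fun _ _ => isOpen_ball

theorem measurable_ntMax (Ω : Set (Euc d)) (w : Euc d → ℝ) : Measurable (ntMax Ω w) :=
  ntMaxOn_univ (w := w) ▸ measurable_ntMaxOn Ω univ w

theorem tendsto_ntMaxOn_boundaryLayer (h : NTLim Ω w Q 0) :
    Tendsto (fun s => ntMaxOn Ω (boundaryLayer Ω s) w Q) (𝓝[>] 0) (𝓝 0) := by
  refine ENNReal.tendsto_nhds_zero.2 fun ε hε => ?_
  have hlim : Tendsto (fun y => ‖w y‖ₑ) (𝓝[ntCone Ω Q] Q) (𝓝 0) := by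
    simpa using h.enorm
  obtain ⟨δ, hδ, hball⟩ := Metric.mem_nhdsWithin_iff.1 (hlim.eventually_lt_const hε)
  filter_upwards [Ioo_mem_nhdsGT (half_pos hδ)] with s hs
  refine iSup₂_le fun y hy => le_of_lt (hball ⟨mem_ball.2 ?_, hy.1⟩)
  linarith [hy.1.2, hy.2.2, hs.2]

theorem lintegral_ntMax_rpow_lt_top {p : ℝ} (hp : 0 < p) (h : ntMaxLp Ω w p < ⊤) :
    ∫⁻ Q, ntMax Ω w Q ^ p ∂sMeasure Ω < ⊤ :=
  (ENNReal.rpow_lt_top_iff_of_pos (one_div_pos.2 hp)).1 h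

end

namespace BoundaryAtlas

variable {n : ℕ} {Ω : Set (Euc (n + 1))} {p : ℝ} {f w : Euc (n + 1) → ℝ}

theorem lintegral_ntMax_rpow_ne_top (𝒜 : BoundaryAtlas Ω) (hp : 0 < p)
    (hw : ntMaxLp Ω w p < ⊤) : ∫⁻ Q, ntMax Ω w Q ^ p ∂𝒜.measure ≠ ⊤ := by
  obtain ⟨C, hC⟩ := 𝒜.exists_measure_le
  refine ne_top_of_le_ne_top ?_ (lintegral_mono' hC le_rfl)
  rw [lintegral_smul_measure, smul_eq_mul]
  exact ENNReal.mul_ne_top ENNReal.coe_ne_top (lintegral_ntMax_rpow_lt_top hp hw).ne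

theorem layerBigO_of_ntMaxLp (𝒜 : BoundaryAtlas Ω) (hp : 1 ≤ p) (hf : ContinuousOn f Ω)
    {B : ℝ≥0} (hfw : ∀ y ∈ Ω, ‖f y‖ₑ ≤ ‖w y‖ₑ + B) (hw : ntMaxLp Ω w p < ⊤) :
    LayerBigO Ω p 1 f := by
  have hp0 : 0 < p := one_pos.trans_le hp
  obtain ⟨C, hC⟩ := 𝒜.exists_setLIntegral_boundaryLayer_le
  have hfin : ∫⁻ Q, (ntMax Ω w Q + B) ^ p ∂𝒜.measure ≠ ⊤ := by
    refine ne_top_of_le_ne_top ?_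
      (lintegral_mono fun Q => ENNReal.rpow_add_le_mul_rpow_add_rpow _ _ hp)
    have h2 : (2 : ℝ≥0∞) ^ (p - 1) ≠ ⊤ :=
      ENNReal.rpow_ne_top_of_nonneg (sub_nonneg.2 hp) ENNReal.ofNat_ne_top
    rw [lintegral_const_mul' _ _ h2, lintegral_add_right _ measurable_const, lintegral_const]
    exact ENNReal.mul_ne_top h2 (ENNReal.add_ne_top.2 ⟨𝒜.lintegral_ntMax_rpow_ne_top hp0 hw,
      ENNReal.mul_ne_top (ENNReal.rpow_ne_top_of_nonneg hp0.le ENNReal.coe_ne_top)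
        (measure_ne_top _ _)⟩)
  refine ⟨C * (∫⁻ Q, (ntMax Ω w Q + B) ^ p ∂𝒜.measure).toNNReal, ?_⟩
  filter_upwards [hC] with s hs
  have h := hs (fun y => ‖f y‖ₑ ^ p) (fun Q => (ntMax Ω w Q + B) ^ p)
    (ENNReal.continuous_rpow_const.comp_continuousOn hf.enorm)
    (((measurable_ntMax Ω w).add_const _).pow_const p)
    fun Q y hy => ENNReal.rpow_le_rpow ((hfw y hy.2.1).trans
      (add_le_add (enorm_le_ntMax hy.1) le_rfl)) hp0.le
  rwa [ENNReal.coe_mul, ENNReal.coe_toNNReal hfin, ENNReal.rpow_one, mul_comm]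

theorem tendsto_lintegral_ntMaxOn_rpow (𝒜 : BoundaryAtlas Ω) (hp : 0 < p)
    (hfw : ∀ y ∈ Ω, ‖f y‖ₑ ≤ ‖w y‖ₑ) (hw : ntMaxLp Ω w p < ⊤)
    (hnt : ∀ᵐ Q ∂sMeasure Ω, NTLim Ω f Q 0) :
    Tendsto (fun s => ∫⁻ Q, ntMaxOn Ω (boundaryLayer Ω s) f Q ^ p ∂𝒜.measure) (𝓝[>] 0) (𝓝 0) := by
  obtain ⟨C, hC⟩ := 𝒜.exists_measure_le
  rw [← lintegral_zero (μ := 𝒜.measure)]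
  refine tendsto_lintegral_filter_of_dominated_convergence (fun Q => ntMax Ω w Q ^ p)
    (.of_forall fun s => (measurable_ntMaxOn Ω _ f).pow_const p)
    (.of_forall fun s => .of_forall fun Q => ENNReal.rpow_le_rpow (iSup₂_le fun y hy =>
      (hfw y hy.2.1).trans (enorm_le_ntMax hy.1)) hp.le)
    (𝒜.lintegral_ntMax_rpow_ne_top hp hw) ?_
  filter_upwards [(Measure.absolutelyContinuous_of_le_smul hC).ae_le hnt] with Q hQ
  simpa only [ENNReal.zero_rpow_of_pos hp] using
    (tendsto_ntMaxOn_boundaryLayer hQ).ennrpow_const p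

theorem layerLittleO_of_ntLim_zero (𝒜 : BoundaryAtlas Ω) (hp : 0 < p) (hf : ContinuousOn f Ω)
    (hfw : ∀ y ∈ Ω, ‖f y‖ₑ ≤ ‖w y‖ₑ) (hw : ntMaxLp Ω w p < ⊤)
    (hnt : ∀ᵐ Q ∂sMeasure Ω, NTLim Ω f Q 0) : LayerLittleO Ω p 1 f := by
  intro A hA
  obtain ⟨C, hC⟩ := 𝒜.exists_setLIntegral_boundaryLayer_le
  have hlim := ENNReal.Tendsto.const_mul (a := C) ((𝒜.tendsto_lintegral_ntMaxOn_rpow hp hfw hw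
    hnt).comp (tendsto_const_mul_nhdsGT_zero 𝒜.K_pos)) (.inr ENNReal.coe_ne_top)
  simp only [mul_zero, Function.comp_apply] at hlim
  filter_upwards [hC, hlim.eventually_le_const (ENNReal.coe_pos.2 hA)] with s hs hsA
  rw [ENNReal.rpow_one, mul_comm]
  exact (hs (fun y => ‖f y‖ₑ ^ p) (fun Q => ntMaxOn Ω (boundaryLayer Ω (𝒜.K * s)) f Q ^ p)
    (ENNReal.continuous_rpow_const.comp_continuousOn hf.enorm)
    ((measurable_ntMaxOn Ω _ f).pow_const p)
    fun Q y hy => ENNReal.rpow_le_rpow (enorm_le_ntMaxOn hy) hp.le).trans (by gcongr)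

end BoundaryAtlas

/-! ### The representation formula -/

section Norms

variable {u : Euc d → ℝ} {x : Euc d}

theorem gnorm1_nonneg (u : Euc d → ℝ) (x : Euc d) : 0 ≤ gnorm1 u x := Real.sqrt_nonneg _

theorem gnorm2_nonneg (u : Euc d → ℝ) (x : Euc d) : 0 ≤ gnorm2 u x := Real.sqrt_nonneg _

theorem abs_pder_le_gnorm1 (u : Euc d → ℝ) (x : Euc d) (i : Fin d) :
    |pder i u x| ≤ gnorm1 u x :=
  Real.abs_le_sqrt (Finset.single_le_sum (f := fun i => pder i u x ^ 2) (fun _ _ => sq_nonneg _)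
    (Finset.mem_univ i))

theorem gnorm2_eq_sqrt_sum_gnorm1 (u : Euc d → ℝ) (x : Euc d) :
    gnorm2 u x = √(∑ j, gnorm1 (pder j u) x ^ 2) := by
  simp only [gnorm1, gnorm2, Real.sq_sqrt (Finset.sum_nonneg fun _ _ => sq_nonneg _)]
  rw [Finset.sum_comm]

theorem gnorm1_pder_le_gnorm2 (u : Euc d → ℝ) (x : Euc d) (j : Fin d) :
    gnorm1 (pder j u) x ≤ gnorm2 u x := by
  rw [gnorm2_eq_sqrt_sum_gnorm1]
  exact Real.le_sqrt_of_sq_le (Finset.single_le_sum (f := fun j => gnorm1 (pder j u) x ^ 2)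
    (fun _ _ => sq_nonneg _) (Finset.mem_univ j))

theorem abs_pder_pder_le_gnorm2 (u : Euc d → ℝ) (x : Euc d) (i j : Fin d) :
    |pder i (pder j u) x| ≤ gnorm2 u x :=
  (abs_pder_le_gnorm1 _ x i).trans (gnorm1_pder_le_gnorm2 u x j)

theorem continuousOn_gnorm1 {Ω : Set (Euc d)} (hΩ : IsOpen Ω) (hu : ContDiffOn ℝ (⊤ : ℕ∞) u Ω) :
    ContinuousOn (gnorm1 u) Ω :=
  (continuousOn_finsetSum _ fun i _ => (contDiffOn_pder hΩ hu i).continuousOn.pow 2).sqrt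

theorem continuousOn_gnorm2 {Ω : Set (Euc d)} (hΩ : IsOpen Ω) (hu : ContDiffOn ℝ (⊤ : ℕ∞) u Ω) :
    ContinuousOn (gnorm2 u) Ω :=
  (continuousOn_finsetSum _ fun i _ => continuousOn_finsetSum _ fun j _ =>
    (contDiffOn_pder hΩ (contDiffOn_pder hΩ hu j) i).continuousOn.pow 2).sqrt

theorem gnorm1_le_sum_abs (u : Euc d → ℝ) (x : Euc d) : gnorm1 u x ≤ ∑ i, |pder i u x| :=
  Real.sqrt_le_iff.2 ⟨Finset.sum_nonneg fun _ _ => abs_nonneg _, by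
    simpa using Finset.sum_sq_le_sq_sum_of_nonneg (s := Finset.univ)
      fun i _ => abs_nonneg (pder i u x)⟩

theorem gnorm2_eq_norm (u : Euc d → ℝ) (x : Euc d) : gnorm2 u x =
    ‖WithLp.toLp 2 fun ij : Fin d × Fin d => pder ij.1 (pder ij.2 u) x‖ := by
  simp only [gnorm2, EuclideanSpace.norm_eq, Real.norm_eq_abs, sq_abs, Fintype.sum_prod_type]

theorem gnorm2_sub_le {f g : Euc d → ℝ} (hf : ContDiffAt ℝ (⊤ : ℕ∞) f x)
    (hg : ContDiffAt ℝ (⊤ : ℕ∞) g x) :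
    gnorm2 (fun y => f y - g y) x ≤ gnorm2 f x + gnorm2 g x := by
  have hsub : ∀ i j, pder i (pder j fun y => f y - g y) x =
      pder i (pder j f) x - pder i (pder j g) x := fun i j => by
    have hfirst : pder j (fun y => f y - g y) =ᶠ[𝓝 x] fun y => pder j f y - pder j g y := by
      filter_upwards [eventually_differentiableAt_of_smoothAt hf,
        eventually_differentiableAt_of_smoothAt hg] with y hfy hgy using pder_sub hfy hgy j
    rw [(pder_eventuallyEq hfirst i).eq_of_nhds]
    exact pder_sub (differentiableAt_of_smoothAt (contDiffAt_pder hf j))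
      (differentiableAt_of_smoothAt (contDiffAt_pder hg j)) i
  simp only [gnorm2_eq_norm, hsub]
  let hess (h : Euc d → ℝ) : EuclideanSpace ℝ (Fin d × Fin d) :=
    WithLp.toLp 2 fun ij => pder ij.1 (pder ij.2 h) x
  exact norm_sub_le (hess f) (hess g)

theorem abs_sum_fin_le {f : Fin d → ℝ} {c : ℝ} (h : ∀ i, |f i| ≤ c) : |∑ i, f i| ≤ d * c := by
  simpa using (Finset.abs_sum_le_sum_abs f Finset.univ).trans
    (Finset.sum_le_card_nsmul _ _ c fun i _ => h i)

end Norms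

section CommutatorBounds

variable {G u φ : Euc d → ℝ} {x : Euc d} {c₁ c₂ c₃ : ℝ}

theorem abs_lapComm_le (u : Euc d → ℝ) (h₁ : ∀ i, |pder i φ x| ≤ c₁)
    (h₂ : ∀ i j, |pder i (pder j φ) x| ≤ c₂) :
    |lapComm φ u x| ≤ d * (2 * (gnorm1 u x * c₁) + |u x| * c₂) := by
  have hgrad : |∑ i, pder i u x * pder i φ x| ≤ d * (gnorm1 u x * c₁) :=
    abs_sum_fin_le fun i => by
      rw [abs_mul]
      exact mul_le_mul (abs_pder_le_gnorm1 u x i) (h₁ i) (abs_nonneg _) (gnorm1_nonneg u x)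
  have hlap : |lap φ x| ≤ d * c₂ := abs_sum_fin_le fun i => h₂ i i
  calc |lapComm φ u x| ≤ 2 * |∑ i, pder i u x * pder i φ x| + |u x| * |lap φ x| := by
        exact (abs_add_le _ _).trans_eq (by rw [abs_mul, abs_mul, abs_two])
    _ ≤ 2 * (d * (gnorm1 u x * c₁)) + |u x| * (d * c₂) := by gcongr
    _ = _ := by ring

theorem pder_lapComm (hG : ContDiffAt ℝ (⊤ : ℕ∞) G x) (hφ : ContDiffAt ℝ (⊤ : ℕ∞) φ x)
    (i : Fin d) : pder i (lapComm φ G) x =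
      ∑ j, (2 * (pder i (pder j G) x * pder j φ x + pder j G x * pder i (pder j φ) x) +
        (pder i G x * pder j (pder j φ) x + G x * pder i (pder j (pder j φ)) x)) := by
  have hdG := differentiableAt_of_smoothAt hG
  have hdG' := fun j => differentiableAt_of_smoothAt (contDiffAt_pder hG j)
  have hdφ' := fun j => differentiableAt_of_smoothAt (contDiffAt_pder hφ j)
  have hdlap := differentiableAt_of_smoothAt (contDiffAt_lap hφ)
  have hsum : DifferentiableAt ℝ (fun y => ∑ j, pder j G y * pder j φ y) x :=
    .fun_sum fun j _ => (hdG' j).fun_mul (hdφ' j)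
  have hlap : pder i (lap φ) x = ∑ j, pder i (pder j (pder j φ)) x :=
    pder_sum _ (fun j _ => differentiableAt_of_smoothAt
      (contDiffAt_pder (contDiffAt_pder hφ j) j)) i
  change pder i (fun y => 2 * ∑ j, pder j G y * pder j φ y + G y * lap φ y) x = _
  rw [pder_add (hsum.const_mul 2) (hdG.fun_mul hdlap), pder_const_mul hsum,
    pder_sum _ fun j _ => (hdG' j).fun_mul (hdφ' j), pder_mul hdG hdlap, hlap, lap]
  simp only [pder_mul (hdG' _) (hdφ' _), Finset.sum_add_distrib, Finset.mul_sum, mul_add]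

theorem abs_pder_lapComm_le (hG : ContDiffAt ℝ (⊤ : ℕ∞) G x) (hφ : ContDiffAt ℝ (⊤ : ℕ∞) φ x)
    (h₁ : ∀ i, |pder i φ x| ≤ c₁) (h₂ : ∀ i j, |pder i (pder j φ) x| ≤ c₂)
    (h₃ : ∀ i j k, |pder i (pder j (pder k φ)) x| ≤ c₃) (i : Fin d) :
    |pder i (lapComm φ G) x| ≤
      d * (2 * (gnorm2 G x * c₁) + 3 * (gnorm1 G x * c₂) + |G x| * c₃) := by
  have hmul : ∀ {a b A B : ℝ}, |a| ≤ A → |b| ≤ B → |a * b| ≤ A * B := fun ha hb => by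
    rw [abs_mul]
    exact mul_le_mul ha hb (abs_nonneg _) ((abs_nonneg _).trans ha)
  rw [pder_lapComm hG hφ]
  refine abs_sum_fin_le fun j => ?_
  have b₁ := abs_le.1 (hmul (abs_pder_pder_le_gnorm2 G x i j) (h₁ j))
  have b₂ := abs_le.1 (hmul (abs_pder_le_gnorm1 G x j) (h₂ i j))
  have b₃ := abs_le.1 (hmul (abs_pder_le_gnorm1 G x i) (h₂ j j))
  have b₄ := abs_le.1 (hmul le_rfl (h₃ i j j) (a := G x))
  exact abs_le.2 ⟨by linarith [b₁.1, b₂.1, b₃.1, b₄.1], by linarith [b₁.2, b₂.2, b₃.2, b₄.2]⟩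

theorem abs_commInt_le (hG : ContDiffAt ℝ (⊤ : ℕ∞) G x) (hφ : ContDiffAt ℝ (⊤ : ℕ∞) φ x)
    (h₁ : ∀ i, |pder i φ x| ≤ c₁) (h₂ : ∀ i j, |pder i (pder j φ) x| ≤ c₂)
    (h₃ : ∀ i j k, |pder i (pder j (pder k φ)) x| ≤ c₃) :
    |commInt G u φ x| ≤ d ^ 2 * (4 * (c₁ * (gnorm2 G x * gnorm1 u x)) +
      c₂ * (gnorm2 G x * |u x|) + 3 * (c₂ * (gnorm1 G x * gnorm1 u x)) +
      c₃ * (|G x| * gnorm1 u x)) := by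
  have hG₂ := gnorm2_nonneg G x
  have hlap : |lap G x| ≤ d * gnorm2 G x :=
    abs_sum_fin_le fun i => abs_pder_pder_le_gnorm2 G x i i
  have hsum : |∑ i, pder i (lapComm φ G) x * pder i u x| ≤
      d * (d * (2 * (gnorm2 G x * c₁) + 3 * (gnorm1 G x * c₂) + |G x| * c₃) * gnorm1 u x) :=
    abs_sum_fin_le fun i => by
      have hi := abs_pder_lapComm_le hG hφ h₁ h₂ h₃ i
      rw [abs_mul]
      exact mul_le_mul hi (abs_pder_le_gnorm1 u x i) (abs_nonneg _) ((abs_nonneg _).trans hi)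
  calc |commInt G u φ x|
      ≤ |lap G x| * |lapComm φ u x| + |∑ i, pder i (lapComm φ G) x * pder i u x| := by
        rw [← abs_mul]
        exact abs_add_le _ _
    _ ≤ d * gnorm2 G x * (d * (2 * (gnorm1 u x * c₁) + |u x| * c₂)) +
          d * (d * (2 * (gnorm2 G x * c₁) + 3 * (gnorm1 G x * c₂) + |G x| * c₃) *
            gnorm1 u x) := by
        gcongr
        exact abs_lapComm_le u h₁ h₂
    _ = _ := by ring

end CommutatorBounds

theorem exists_smooth_eq_fundSol (hd : 2 ≤ d) {c : ℝ} (hc : c ≠ 0) (x : Euc d) {ρ : ℝ}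
    (hρ : 0 < ρ) : ∃ Γ : Euc d → ℝ, ContDiff ℝ (⊤ : ℕ∞) Γ ∧
      ∀ y, ρ ≤ dist y x → Γ y = fundSol d c (y - x) := by
  obtain ⟨F, -, -, hF, hfund, -⟩ := exists_fundSol_regularization hd hc
  let b : ContDiffBump x := ⟨ρ / 2, ρ, by linarith, by linarith⟩
  refine ⟨fun y => (1 - b y) * F (‖y - x‖ ^ 2), contDiff_iff_contDiffAt.2 fun y => ?_,
    fun y hy => ?_⟩
  · by_cases hy : y = x
    · subst hy
      refine (contDiffAt_const (c := (0 : ℝ))).congr_of_eventuallyEq ?_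
      filter_upwards [b.eventuallyEq_one] with z hz
      simp [hz]
    · have hpos : 0 < ‖y - x‖ ^ 2 := pow_pos (norm_pos_iff.2 (sub_ne_zero.2 hy)) 2
      exact (contDiffAt_const.sub b.contDiffAt).mul ((hF.contDiffAt (Ioi_mem_nhds hpos)).comp y
        ((contDiff_id.sub contDiff_const).norm_sq ℝ).contDiffAt)
  · have hyx : y - x ≠ 0 := sub_ne_zero.2 (dist_pos.1 (hρ.trans_le hy))
    simp only [b.zero_of_le_dist hy, hfund _ hyx, sub_zero, one_mul]

theorem exists_integral_commInt_eq (hd : 2 ≤ d) {c : ℝ} (hc : c ≠ 0) :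
    ∃ c₀ : ℝ, c₀ ≠ 0 ∧ ∀ {Ω : Set (Euc d)} {Γ W u φ : Euc d → ℝ} {x : Euc d}, IsOpen Ω →
      ContDiff ℝ (⊤ : ℕ∞) Γ → Biharmonic Ω W → Biharmonic Ω u → ContDiff ℝ (⊤ : ℕ∞) φ →
      HasCompactSupport φ → tsupport φ ⊆ Ω → (φ =ᶠ[𝓝 x] fun _ => 1) →
      (∀ y, Γ y ≠ fundSol d c (y - x) → φ =ᶠ[𝓝 y] fun _ => 1) →
      ∫ y, commInt (fun z => Γ z - W z) u φ y = c₀ * u x := by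
  obtain ⟨c₀, hc₀, hrep⟩ := integral_fundSol_mul_bilap hd hc
  refine ⟨c₀, hc₀, fun {Ω Γ W u φ x} hΩ hΓ hW hu hφ hcφ hφΩ hx hΓφ => ?_⟩
  set v : Euc d → ℝ := fun y => u y * φ y
  have hv : ContDiff ℝ (⊤ : ℕ∞) v := contDiff_mul_of_tsupport_subset hΩ hu.1 hφ hcφ hφΩ
  have hcv : HasCompactSupport v := hcφ.mul_left
  have hcbv : HasCompactSupport (bilap v) := hasCompactSupport_lap (hasCompactSupport_lap hcv)
  have hvΩ : tsupport v ⊆ Ω := (tsupport_mul_subset_right).trans hφΩ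
  have hv0 : ∀ y, (φ =ᶠ[𝓝 y] fun _ => 1) → bilap v y = 0 := fun y hy => by
    have hvu : v =ᶠ[𝓝 y] u := by filter_upwards [hy] with z hz using by simp [v, hz]
    rw [(bilap_eventuallyEq hvu).eq_of_nhds]
    exact hu.2 y (hφΩ (subset_tsupport φ (by simp [hy.eq_of_nhds])))
  have hΓv : (fun y => Γ y * bilap v y) = fun y => fundSol d c (y - x) * bilap v y := by
    funext y
    by_cases hy : Γ y = fundSol d c (y - x)
    · rw [hy]
    · rw [hv0 y (hΓφ y hy), mul_zero, mul_zero]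
  calc ∫ y, commInt (fun z => Γ z - W z) u φ y
      = ∫ y, (Γ y - W y) * bilap v y :=
        (integral_mul_bilap_mul_of_contDiffOn hΩ (hΓ.contDiffOn.sub hW.1) hu.1 hφ hcφ hφΩ
          hu.2).symm
    _ = (∫ y, Γ y * bilap v y) - ∫ y, W y * bilap v y := by
        simp only [sub_mul]
        exact integral_sub
          (integrable_of_smooth (hΓ.mul (contDiff_lap (contDiff_lap hv))) hcbv.mul_left)
          (integrable_of_smooth (contDiff_mul_of_tsupport_subset hΩ hW.1
            (contDiff_lap (contDiff_lap hv)) hcbv ((tsupport_bilap_subset v).trans hvΩ))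
            hcbv.mul_left)
    _ = c₀ * u x := by
        rw [integral_mul_bilap_eq_zero hΩ hW.1 hv hcv hvΩ hW.2, sub_zero, hΓv,
          hrep x v hv hcv (hx.eventuallyEq_nhds.mono hv0)]
        simp [v, hx.eq_of_nhds]

/-! ### Decay at the boundary and uniqueness -/

/-- The products of derivatives of `G` and `u` which occur in `commInt G u φ`; the `i`-th one is
multiplied by derivatives of `φ` of order `commOrder i`. -/
def commProd (G u : Euc d → ℝ) : Fin 4 → Euc d → ℝ :=
  ![gnorm2 G * gnorm1 u, gnorm2 G * u, gnorm1 G * gnorm1 u, G * gnorm1 u]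

/-- The order of the derivatives of `φ` which multiply `commProd G u i` in `commInt G u φ`. -/
def commOrder : Fin 4 → ℕ := ![1, 2, 2, 3]

section Cutoff

variable {Ω : Set (Euc d)} {ε C : ℝ} {G u φ : Euc d → ℝ}

theorem continuousOn_commProd (hΩ : IsOpen Ω) (hG : ContDiffOn ℝ (⊤ : ℕ∞) G Ω)
    (hu : ContDiffOn ℝ (⊤ : ℕ∞) u Ω) (i : Fin 4) : ContinuousOn (commProd G u i) Ω := by
  have hG₁ := continuousOn_gnorm1 hΩ hG
  have hG₂ := continuousOn_gnorm2 hΩ hG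
  have hu₁ := continuousOn_gnorm1 hΩ hu
  fin_cases i
  exacts [hG₂.mul hu₁, hG₂.mul hu.continuousOn, hG₁.mul hu₁, hG.continuousOn.mul hu₁]

theorem BoundaryCutoff.abs_commInt_le (hφ : BoundaryCutoff Ω ε C φ) (hε : 0 < ε) (hC : 0 ≤ C)
    {x : Euc d} (hG : ContDiffAt ℝ (⊤ : ℕ∞) G x) (u : Euc d → ℝ) :
    |commInt G u φ x| ≤ 4 * d ^ 2 * C * ∑ i, ε⁻¹ ^ commOrder i * |commProd G u i x| := by
  have hG₁ := gnorm1_nonneg G x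
  have hG₂ := gnorm2_nonneg G x
  have hu₁ := gnorm1_nonneg u x
  have h₁ : 0 ≤ C * ε⁻¹ ^ 2 * (gnorm2 G x * |u x|) := by positivity
  have h₂ : 0 ≤ C * ε⁻¹ ^ 2 * (gnorm1 G x * gnorm1 u x) := by positivity
  have h₃ : 0 ≤ C * ε⁻¹ ^ 3 * (|G x| * gnorm1 u x) := by positivity
  calc |commInt G u φ x|
      ≤ d ^ 2 * (4 * (C * ε⁻¹ ^ 1 * (gnorm2 G x * gnorm1 u x)) +
          C * ε⁻¹ ^ 2 * (gnorm2 G x * |u x|) + 3 * (C * ε⁻¹ ^ 2 * (gnorm1 G x * gnorm1 u x)) +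
          C * ε⁻¹ ^ 3 * (|G x| * gnorm1 u x)) :=
        _root_.abs_commInt_le hG hφ.contDiff.contDiffAt
          (fun i => hφ.abs_pders_le [i] (by simp) x)
          (fun i j => hφ.abs_pders_le [i, j] (by simp) x)
          fun i j k => hφ.abs_pders_le [i, j, k] (by simp) x
    _ ≤ d ^ 2 * (4 * (C * ε⁻¹ ^ 1 * (gnorm2 G x * gnorm1 u x)) +
          4 * (C * ε⁻¹ ^ 2 * (gnorm2 G x * |u x|)) +
          4 * (C * ε⁻¹ ^ 2 * (gnorm1 G x * gnorm1 u x)) +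
          4 * (C * ε⁻¹ ^ 3 * (|G x| * gnorm1 u x))) := by
        refine mul_le_mul_of_nonneg_left ?_ (by positivity)
        linarith
    _ = _ := by
        simp only [Fin.sum_univ_four, commProd, commOrder, Matrix.cons_val, Pi.mul_apply, abs_mul,
          abs_of_nonneg hG₁, abs_of_nonneg hG₂, abs_of_nonneg hu₁]
        ring

theorem BoundaryCutoff.enorm_commInt_le (hφ : BoundaryCutoff Ω ε C φ) (hε : 0 < ε) (hC : 0 ≤ C)
    {x : Euc d} (hG : ContDiffAt ℝ (⊤ : ℕ∞) G x) (u : Euc d → ℝ) :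
    ‖commInt G u φ x‖ₑ ≤ ENNReal.ofReal (4 * d ^ 2 * C) *
      ∑ i, ENNReal.ofReal (ε⁻¹ ^ commOrder i) * ‖commProd G u i x‖ₑ := by
  have hweight : ∀ i, 0 ≤ ε⁻¹ ^ commOrder i := fun i => by positivity
  simp only [Real.enorm_eq_ofReal_abs, ← ENNReal.ofReal_mul (hweight _)]
  rw [← ENNReal.ofReal_sum_of_nonneg fun i _ => by positivity, ← ENNReal.ofReal_mul (by positivity)]
  exact ENNReal.ofReal_le_ofReal (hφ.abs_commInt_le hε hC hG u)

theorem BoundaryCutoff.support_commInt_subset (hφ : BoundaryCutoff Ω ε C φ) (G u : Euc d → ℝ) :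
    Function.support (commInt G u φ) ⊆ boundaryLayer Ω (2 * ε) := fun y hy => by
  have hyφ : y ∈ tsupport φ := by
    by_contra h
    exact hy (commInt_eq_zero_of_eventuallyEq_const G u (notMem_tsupport_iff_eventuallyEq.1 h))
  refine ⟨hφ.tsupport_subset hyφ, not_le.1 fun h => hy ?_⟩
  exact commInt_eq_zero_of_eventuallyEq_const G u
    (hφ.eventuallyEq_one y (hφ.tsupport_subset hyφ) h)

theorem BoundaryCutoff.enorm_integral_commInt_le (hφ : BoundaryCutoff Ω ε C φ) (hΩ : IsOpen Ω)
    (hε : 0 < ε) (hC : 0 ≤ C) (hG : ContDiffOn ℝ (⊤ : ℕ∞) G Ω) (hu : ContDiffOn ℝ (⊤ : ℕ∞) u Ω) :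
    ‖∫ y, commInt G u φ y‖ₑ ≤ ENNReal.ofReal (4 * d ^ 2 * C) *
      ∑ i, ENNReal.ofReal (ε⁻¹ ^ commOrder i) *
        ∫⁻ y in boundaryLayer Ω (2 * ε), ‖commProd G u i y‖ₑ := by
  have hm := (isOpen_boundaryLayer hΩ (2 * ε)).measurableSet
  have hmeas : ∀ i, AEMeasurable (fun y => ‖commProd G u i y‖ₑ)
      (volume.restrict (boundaryLayer Ω (2 * ε))) := fun i =>
    ((continuousOn_commProd hΩ hG hu i).mono (boundaryLayer_subset Ω _)).enorm.aemeasurable hm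
  calc ‖∫ y, commInt G u φ y‖ₑ ≤ ∫⁻ y, ‖commInt G u φ y‖ₑ := enorm_integral_le_lintegral_enorm _
    _ = ∫⁻ y in boundaryLayer Ω (2 * ε), ‖commInt G u φ y‖ₑ :=
        (setLIntegral_eq_of_support_subset fun y hy =>
          hφ.support_commInt_subset G u fun h => hy (by simp [h])).symm
    _ ≤ ∫⁻ y in boundaryLayer Ω (2 * ε), ENNReal.ofReal (4 * d ^ 2 * C) *
          ∑ i, ENNReal.ofReal (ε⁻¹ ^ commOrder i) * ‖commProd G u i y‖ₑ :=
        setLIntegral_mono' hm fun y hy =>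
          hφ.enorm_commInt_le hε hC (hG.contDiffAt (hΩ.mem_nhds hy.1)) u
    _ = _ := by
        rw [lintegral_const_mul' _ _ ENNReal.ofReal_ne_top,
          lintegral_finsetSum' _ fun i _ => (hmeas i).const_mul _]
        simp only [lintegral_const_mul' _ _ ENNReal.ofReal_ne_top]

theorem LayerLittleO.tendsto_inv_pow_mul_setLIntegral {k : ℕ} {f : Euc d → ℝ}
    (hf : LayerLittleO Ω 1 k f) :
    Tendsto (fun ε => ENNReal.ofReal (ε⁻¹ ^ k) * ∫⁻ y in boundaryLayer Ω (2 * ε), ‖f y‖ₑ)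
      (𝓝[>] 0) (𝓝 0) := by
  refine ENNReal.tendsto_nhds_zero.2 fun a ha => ?_
  obtain ⟨b, hb, hba⟩ := ENNReal.lt_iff_exists_nnreal_btwn.1 ha
  filter_upwards [(tendsto_const_mul_nhdsGT_zero two_pos).eventually
    (hf (b / 2 ^ k) (div_pos (ENNReal.coe_pos.1 hb) (by positivity))), self_mem_nhdsWithin]
    with ε hε (hε0 : 0 < ε)
  simp only [ENNReal.rpow_one, ENNReal.rpow_natCast] at hε
  refine le_trans (mul_le_mul_right hε _) (le_trans (le_of_eq ?_) hba.le)
  have hb : (b : ℝ) = ε⁻¹ ^ k * (b / 2 ^ k * (2 * ε) ^ k) := by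
    rw [mul_pow, inv_pow]
    field_simp
  rw [← ENNReal.ofReal_coe_nnreal, ← ENNReal.ofReal_pow (by positivity),
    ← ENNReal.ofReal_mul (by positivity), ← ENNReal.ofReal_mul (by positivity),
    ← ENNReal.ofReal_coe_nnreal (p := b), hb]
  simp

end Cutoff

namespace BoundaryAtlas

variable {n : ℕ} {Ω : Set (Euc (n + 1))} {p q : ℝ} {u v : Euc (n + 1) → ℝ}

theorem layerBigO_gnorm1 (𝒜 : BoundaryAtlas Ω) (hΩ : IsOpen Ω) (hp : 1 < p)
    (hv : ContDiffOn ℝ (⊤ : ℕ∞) v Ω) (hbv : HasBVals1 Ω v fun _ => 0)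
    (h : LayerBigO Ω p 1 (gnorm2 v)) : LayerBigO Ω p (1 + p) (gnorm1 v) := by
  have hpder : ∀ j, LayerBigO Ω p (1 + p) (pder j v) := fun j =>
    𝒜.layerBigO_of_gnorm1 hΩ hp ((contDiffOn_pder hΩ hv j).of_le (by simp))
      (hbv.mono fun Q hQ => by simpa only [pder_const] using hQ.2 j)
      (h.of_le hΩ (zero_le_one.trans hp.le) fun y _ => by
        rw [enorm_le_iff_norm_le, Real.norm_of_nonneg (gnorm1_nonneg _ y),
          Real.norm_of_nonneg (gnorm2_nonneg v y)]
        exact gnorm1_pder_le_gnorm2 v y j)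
  refine LayerBigO.of_le_sum (t := Finset.univ) hΩ hp.le
    (fun j => (contDiffOn_pder hΩ hv j).continuousOn) hpder fun y _ => ?_
  simp only [Real.enorm_eq_ofReal_abs, ← ENNReal.ofReal_sum_of_nonneg fun _ _ => abs_nonneg _]
  rw [abs_of_nonneg (gnorm1_nonneg v y)]
  exact ENNReal.ofReal_le_ofReal (gnorm1_le_sum_abs v y)

theorem layerBigO_gnorm2_sub (𝒜 : BoundaryAtlas Ω) (hΩ : IsOpen Ω) (hbd : Bornology.IsBounded Ω)
    (hp : 1 ≤ p) {Γ W : Euc (n + 1) → ℝ} (hΓ : ContDiff ℝ (⊤ : ℕ∞) Γ)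
    (hW : ContDiffOn ℝ (⊤ : ℕ∞) W Ω) (hmax : ntMaxLp Ω (gnorm2 W) p < ⊤) :
    LayerBigO Ω p 1 (gnorm2 fun y => Γ y - W y) := by
  obtain ⟨B, hB⟩ := hbd.isCompact_closure.exists_bound_of_continuousOn
    ((continuousOn_gnorm2 isOpen_univ hΓ.contDiffOn).mono (subset_univ _))
  refine 𝒜.layerBigO_of_ntMaxLp hp (B := B.toNNReal)
    (continuousOn_gnorm2 hΩ (hΓ.contDiffOn.sub hW)) (fun y hy => ?_) hmax
  have hle := gnorm2_sub_le (hΓ.contDiffAt (x := y)) (hW.contDiffAt (hΩ.mem_nhds hy))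
  have hBy := (le_abs_self _).trans (hB y (subset_closure hy))
  rw [Real.enorm_of_nonneg (gnorm2_nonneg _ y), Real.enorm_of_nonneg (gnorm2_nonneg W y)]
  refine (ENNReal.ofReal_le_ofReal (hle.trans ?_)).trans ENNReal.ofReal_add_le
  linarith

theorem layerLittleO_gnorm1 (𝒜 : BoundaryAtlas Ω) (hΩ : IsOpen Ω) (hq : 0 < q)
    (hu : ContDiffOn ℝ (⊤ : ℕ∞) u Ω) (hmax : ntMaxLp Ω (gnorm1 u) q < ⊤)
    (hbu : HasBVals1 Ω u fun _ => 0) : LayerLittleO Ω q 1 (gnorm1 u) := by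
  refine 𝒜.layerLittleO_of_ntLim_zero hq (continuousOn_gnorm1 hΩ hu) (fun _ _ => le_rfl) hmax ?_
  filter_upwards [hbu] with Q hQ
  have hsum := tendsto_finsetSum Finset.univ fun i _ => (hQ.2 i).pow 2
  change Tendsto (fun y => √(∑ i, pder i u y ^ 2)) _ _
  simpa [pder_const] using hsum.sqrt

theorem layerLittleO_commProd (𝒜 : BoundaryAtlas Ω) (hΩ : IsOpen Ω) (hpq : p.HolderConjugate q)
    (hv : ContDiffOn ℝ (⊤ : ℕ∞) v Ω) (hbv : HasBVals1 Ω v fun _ => 0)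
    (hv₂ : LayerBigO Ω p 1 (gnorm2 v)) (hu : ContDiffOn ℝ (⊤ : ℕ∞) u Ω)
    (hbu : HasBVals1 Ω u fun _ => 0) (hu₁ : LayerLittleO Ω q 1 (gnorm1 u)) (i : Fin 4) :
    LayerLittleO Ω 1 (commOrder i) (commProd v u i) := by
  have hv₁ := 𝒜.layerBigO_gnorm1 hΩ hpq.lt hv hbv hv₂
  have hv₀ := 𝒜.layerBigO_of_gnorm1 hΩ hpq.lt (hv.of_le (by simp))
    (hbv.mono fun _ hQ => hQ.1) hv₁
  have hu₀ := 𝒜.layerLittleO_of_gnorm1 hΩ hpq.symm.lt (hu.of_le (by simp))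
    (hbu.mono fun _ hQ => hQ.1) hu₁
  have cv₁ := continuousOn_gnorm1 hΩ hv
  have cv₂ := continuousOn_gnorm2 hΩ hv
  have cu₁ := continuousOn_gnorm1 hΩ hu
  have hp : p / p = 1 := div_self hpq.ne_zero
  have hq : q / q = 1 := div_self hpq.symm.ne_zero
  have hsum := hpq.one_div_add_one_div
  have order₀ : 1 / p + 1 / q = (1 : ℕ) := by push_cast; linarith
  have order₁ : 1 / p + (1 + q) / q = (2 : ℕ) := by rw [add_div]; push_cast; linarith
  have order₂ : (1 + p) / p + 1 / q = (2 : ℕ) := by rw [add_div]; push_cast; linarith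
  have order₃ : (1 + p + p) / p + 1 / q = (3 : ℕ) := by
    rw [add_div, add_div]; push_cast; linarith
  fin_cases i
  exacts [order₀ ▸ hv₂.mul_littleO hΩ hpq cv₂ cu₁ hu₁,
    order₁ ▸ hv₂.mul_littleO hΩ hpq cv₂ hu.continuousOn hu₀,
    order₂ ▸ hv₁.mul_littleO hΩ hpq cv₁ cu₁ hu₁,
    order₃ ▸ hv₀.mul_littleO hΩ hpq hv.continuousOn cu₁ hu₁]

end BoundaryAtlas

section Uniqueness

variable {Ω : Set (Euc d)} {c : ℝ} {x : Euc d} {u Γ W : Euc d → ℝ}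

theorem HasBVals1.congr_of_eventuallyEq {f g : Euc d → ℝ} (h : HasBVals1 Ω W f)
    (hfg : ∀ Q ∈ frontier Ω, f =ᶠ[𝓝 Q] g) : HasBVals1 Ω W g := by
  filter_upwards [h, ae_restrict_mem isClosed_frontier.measurableSet] with Q hQ hQΩ
  refine ⟨(hfg Q hQΩ).eq_of_nhds ▸ hQ.1, fun i => ?_⟩
  rw [← (pder_eventuallyEq (hfg Q hQΩ) i).eq_of_nhds]
  exact hQ.2 i

theorem HasBVals1.data_sub (hΩ : IsOpen Ω) (hΓ : ContDiff ℝ (⊤ : ℕ∞) Γ)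
    (hW : ContDiffOn ℝ (⊤ : ℕ∞) W Ω) (h : HasBVals1 Ω W Γ) :
    HasBVals1 Ω (fun y => Γ y - W y) fun _ => 0 := by
  have hlim : ∀ {f : Euc d → ℝ}, Continuous f → ∀ Q, NTLim Ω f Q (f Q) := fun hf Q =>
    (hf.tendsto Q).mono_left nhdsWithin_le_nhds
  filter_upwards [h] with Q hQ
  refine ⟨by simpa [NTLim] using (hlim hΓ.continuous Q).sub hQ.1, fun i => ?_⟩
  have hsub := (hlim (contDiff_pder hΓ i).continuous Q).sub (hQ.2 i)
  rw [sub_self] at hsub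
  rw [pder_const]
  refine hsub.congr' ?_
  filter_upwards [self_mem_nhdsWithin] with y hy
  exact (pder_sub (differentiableAt_of_smoothAt hΓ.contDiffAt)
    (differentiableAt_of_smoothAt (hW.contDiffAt (hΩ.mem_nhds hy.1))) i).symm

theorem HasBVals1.data_sub_of_eq_fundSol (hΩ : IsOpen Ω) {ρ : ℝ} (hρ : ρ < infDist x (frontier Ω))
    (hΓ : ContDiff ℝ (⊤ : ℕ∞) Γ) (hΓx : ∀ y, ρ ≤ dist y x → Γ y = fundSol d c (y - x))
    (hW : ContDiffOn ℝ (⊤ : ℕ∞) W Ω) (h : HasBVals1 Ω W fun y => fundSol d c (y - x)) :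
    HasBVals1 Ω (fun y => Γ y - W y) fun _ => 0 := by
  refine (h.congr_of_eventuallyEq fun Q hQ => ?_).data_sub hΩ hΓ hW
  have hQx : ρ < dist Q x := hρ.trans_le (dist_comm Q x ▸ infDist_le_dist_of_mem hQ)
  filter_upwards [(continuous_id.dist continuous_const).continuousAt.eventually
    (lt_mem_nhds hQx)] with y hy
  exact (hΓx y hy.le).symm

theorem BoundaryCutoff.eventuallyEq_one_of_dist_lt {ε C δ : ℝ} {φ : Euc d → ℝ}
    (hφ : BoundaryCutoff Ω ε C φ) (hΩ : IsOpen Ω) (hx : x ∈ Ω) (hε : 0 ≤ ε)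
    (hδ : 2 * ε + δ ≤ infDist x (frontier Ω)) {y : Euc d} (hy : dist y x < δ) :
    φ =ᶠ[𝓝 y] fun _ => 1 := by
  have := infDist_le_infDist_add_of_dist_le (frontier Ω) (dist_comm y x ▸ hy.le)
  exact hφ.eventuallyEq_one y (mem_of_dist_lt_infDist_frontier hΩ hx (by linarith)) (by linarith)

theorem eq_zero_of_layerLittleO_commProd (hd : 2 ≤ d) (hc : c ≠ 0) (hΩ : IsOpen Ω)
    (hbd : Bornology.IsBounded Ω) (hx : x ∈ Ω) (hδ : 0 < infDist x (frontier Ω))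
    (hΓ : ContDiff ℝ (⊤ : ℕ∞) Γ)
    (hΓx : ∀ y, infDist x (frontier Ω) / 2 ≤ dist y x → Γ y = fundSol d c (y - x))
    (hW : Biharmonic Ω W) (hu : Biharmonic Ω u)
    (ho : ∀ i, LayerLittleO Ω 1 (commOrder i) (commProd (fun y => Γ y - W y) u i)) :
    u x = 0 := by
  set δ := infDist x (frontier Ω)
  obtain ⟨c₀, hc₀, hrep⟩ := exists_integral_commInt_eq hd hc
  obtain ⟨C, hC, hcut⟩ := exists_boundaryCutoff d
  have hlim := ENNReal.Tendsto.const_mul (a := ENNReal.ofReal (4 * d ^ 2 * C))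
    (tendsto_finsetSum Finset.univ fun i _ => (ho i).tendsto_inv_pow_mul_setLIntegral)
    (Or.inr ENNReal.ofReal_ne_top)
  simp only [Finset.sum_const_zero, mul_zero] at hlim
  have hle : ‖c₀ * u x‖ₑ ≤ 0 := by
    refine ge_of_tendsto hlim ?_
    filter_upwards [Ioo_mem_nhdsGT (by positivity : 0 < δ / 4)] with ε hε
    obtain ⟨φ, hφ⟩ := hcut Ω hΩ hbd ε hε.1
    have hnear : ∀ y, dist y x < δ / 2 → φ =ᶠ[𝓝 y] fun _ => 1 := fun y =>
      hφ.eventuallyEq_one_of_dist_lt hΩ hx hε.1.le (by linarith [hε.2])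
    rw [← hrep hΩ hΓ hW hu hφ.contDiff hφ.hasCompactSupport hφ.tsupport_subset
      (hnear x (by simpa using hδ)) fun y hy => hnear y (not_le.1 fun h => hy (hΓx y h))]
    exact hφ.enorm_integral_commInt_le hΩ hε.1 hC (hΓ.contDiffOn.sub hW.1) hu.1
  simpa [hc₀] using hle

end Uniqueness

theorem dirichlet_uniqueness_general {d : ℕ} (hd : 2 ≤ d) {Ω : Set (Euc d)} (hΩ : IsOpen Ω)
    (hbd : Bornology.IsBounded Ω) (hlip : HasLipschitzBoundary Ω) {p q : ℝ}
    (hpq : p.HolderConjugate q) {c : ℝ} (hc : c ≠ 0) {x : Euc d} (hx : x ∈ Ω) {W : Euc d → ℝ}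
    (hW : Biharmonic Ω W) (hWmax : ntMaxLp Ω (gnorm2 W) p < ⊤)
    (hbW : HasBVals1 Ω W fun y => fundSol d c (y - x)) {u : Euc d → ℝ} (hu : Biharmonic Ω u)
    (humax : ntMaxLp Ω (gnorm1 u) q < ⊤) (hbu : HasBVals1 Ω u fun _ => 0) : u x = 0 := by
  obtain ⟨n, rfl⟩ : ∃ n, d = n + 1 := ⟨d - 1, by omega⟩
  obtain ⟨𝒜⟩ := hlip.nonempty_boundaryAtlas hbd ⟨x, hx⟩
  have hδ := infDist_frontier_pos hΩ hbd hx
  obtain ⟨Γ, hΓ, hΓx⟩ := exists_smooth_eq_fundSol hd hc x (half_pos hδ)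
  refine eq_zero_of_layerLittleO_commProd hd hc hΩ hbd hx hδ hΓ hΓx hW hu ?_
  exact 𝒜.layerLittleO_commProd hΩ hpq (hΓ.contDiffOn.sub hW.1)
    (hbW.data_sub_of_eq_fundSol hΩ (half_lt_self hδ) hΓ hΓx hW.1)
    (𝒜.layerBigO_gnorm2_sub hΩ hbd hpq.lt.le hΓ hW.1 hWmax) hu.1 hbu
    (𝒜.layerLittleO_gnorm1 hΩ hpq.symm.pos hu.1 humax hbu)

/-- Theorem 3.2: if for each pole `x ∈ Ω` the `L^p` regularity problem
with boundary data `D^α Γ^x`, `|α| ≤ 1`, has a solution, then solutions of the `L^q`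
Dirichlet problem are unique. -/
theorem dirichlet_uniqueness
    (d : ℕ) (hd : 2 ≤ d) (Ω : Set (Euc d)) (hΩ : IsLipschitzDomain Ω)
    (p q : ℝ) (hp : 1 < p) (hpq : 1 / p + 1 / q = 1) (c : ℝ) (hc : c ≠ 0)
    (hW : ∀ x ∈ Ω, ∃ W : Euc d → ℝ, Biharmonic Ω W ∧ ntMaxLp Ω (gnorm2 W) p < ⊤ ∧
      HasBVals1 Ω W (fun y => fundSol d c (y - x))) :
    ∀ u : Euc d → ℝ, Biharmonic Ω u → ntMaxLp Ω (gnorm1 u) q < ⊤ →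
      HasBVals1 Ω u (fun _ => 0) → ∀ y ∈ Ω, u y = 0 := by
  intro u hu humax hbu y hy
  obtain ⟨W, hWb, hWmax, hbW⟩ := hW y hy
  exact dirichlet_uniqueness_general hd hΩ.1 hΩ.2.1 hΩ.hasLipschitzBoundary
    (Real.holderConjugate_iff.2 ⟨hp, by simpa using hpq⟩) hc hy hWb hWmax hbW hu humax hbu

end
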